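/- arXiv:1207.0639 — 2 statements merged into one kernel-verified Lean document; each statement's English description precedes it below -/
import Mathlib

section
/- Proposition A.1, achievability part (optimal source-channel code for the cooperative relay broadcast channel): A source S1 can be reliably transmitted over the discrete memoryless cooperative relay broadcast channel with relay side information W3 and receiver side information W if there exists a joint input pmf p(x1, x3), taken independent of the source (i.e., the single-letter joint law is p(s1, w3, w) · p(x1, x3) · p(y3, y | x1, x3)), such that H(S1 | W3) < I(X1; Y3 | X3) and H(S1 | W) < I(X1, X3; Y). -/
open scoped BigOperators

/-- A probability mass function on a finite type. -/
def IsPmf {α : Type*} [Fintype α] (p : α → ℝ) : Prop :=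
  (∀ a, 0 ≤ p a) ∧ ∑ a, p a = 1

/-- Shannon entropy (natural logarithm) of the push-forward of `μ` under `X`. -/
noncomputable def entropyOf {Ω α : Type*} [Fintype Ω] [Fintype α] [DecidableEq α]
    (μ : Ω → ℝ) (X : Ω → α) : ℝ :=
  ∑ a : α, Real.negMulLog (∑ ω : Ω, if X ω = a then μ ω else 0)

/-- Conditional Shannon entropy `H(X | Y)` under `μ`. -/
noncomputable def condEntropyOf {Ω α β : Type*} [Fintype Ω] [Fintype α] [Fintype β]
    [DecidableEq α] [DecidableEq β] (μ : Ω → ℝ) (X : Ω → α) (Y : Ω → β) : ℝ :=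
  entropyOf μ (fun ω => (X ω, Y ω)) - entropyOf μ Y

/-- Mutual information `I(X ; Y)` under `μ`. -/
noncomputable def mutualInfoOf {Ω α β : Type*} [Fintype Ω] [Fintype α] [Fintype β]
    [DecidableEq α] [DecidableEq β] (μ : Ω → ℝ) (X : Ω → α) (Y : Ω → β) : ℝ :=
  entropyOf μ X + entropyOf μ Y - entropyOf μ (fun ω => (X ω, Y ω))

/-- Conditional mutual information `I(X ; Y | Z)` under `μ`. -/
noncomputable def condMutualInfoOf {Ω α β γ : Type*} [Fintype Ω] [Fintype α] [Fintype β]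
    [Fintype γ] [DecidableEq α] [DecidableEq β] [DecidableEq γ]
    (μ : Ω → ℝ) (X : Ω → α) (Y : Ω → β) (Z : Ω → γ) : ℝ :=
  entropyOf μ (fun ω => (X ω, Z ω)) + entropyOf μ (fun ω => (Y ω, Z ω))
    - entropyOf μ (fun ω => (X ω, Y ω, Z ω)) - entropyOf μ Z

/-- Causality of the relay encoding functions: the channel input of the relay at time `k`
depends on the relay channel outputs only through those at times `j < k`. -/
def CausalRelay {n : ℕ} {Y3 W3 X3 : Type*}
    (f3 : Fin n → (Fin n → Y3) → (Fin n → W3) → X3) : Prop :=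
  ∀ (k : Fin n) (y y' : Fin n → Y3) (w : Fin n → W3),
    (∀ j : Fin n, j < k → y j = y' j) → f3 k y w = f3 k y' w

/-- Error probability of a blocklength-`n` source-channel code over the discrete memoryless
cooperative relay broadcast channel (CRBC): both the relay decoder `g3` and the
destination decoder `g` must recover the source block. -/
noncomputable def crbcErrProb {S1 W W3 X1 X3 Y Y3 : Type*}
    [Fintype S1] [Fintype W] [Fintype W3] [Fintype Y] [Fintype Y3] [DecidableEq S1]
    (pSrc : S1 × W × W3 → ℝ) (Q : X1 × X3 → Y × Y3 → ℝ) (n : ℕ)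
    (f1 : (Fin n → S1) → Fin n → X1)
    (f3 : Fin n → (Fin n → Y3) → (Fin n → W3) → X3)
    (g3 : (Fin n → Y3) → (Fin n → W3) → Fin n → S1)
    (g : (Fin n → Y) → (Fin n → W) → Fin n → S1) : ℝ :=
  ∑ s1 : Fin n → S1, ∑ w : Fin n → W, ∑ w3 : Fin n → W3,
    ∑ y : Fin n → Y, ∑ y3 : Fin n → Y3,
      if g y w ≠ s1 ∨ g3 y3 w3 ≠ s1 then
        (∏ k : Fin n, pSrc (s1 k, w k, w3 k)) *
          ∏ k : Fin n, Q (f1 s1 k, f3 k y3 w3) (y k, y3 k)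
      else 0

/-- The source `S1` can be reliably transmitted over the DM CRBC: codes with arbitrarily
small error probability exist. -/
def CrbcReliablyTransmitted {S1 W W3 X1 X3 Y Y3 : Type*}
    [Fintype S1] [Fintype W] [Fintype W3] [Fintype Y] [Fintype Y3] [DecidableEq S1]
    (pSrc : S1 × W × W3 → ℝ) (Q : X1 × X3 → Y × Y3 → ℝ) : Prop :=
  ∀ ε : ℝ, 0 < ε → ∃ n : ℕ, 0 < n ∧
    ∃ (f1 : (Fin n → S1) → Fin n → X1)
      (f3 : Fin n → (Fin n → Y3) → (Fin n → W3) → X3)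
      (g3 : (Fin n → Y3) → (Fin n → W3) → Fin n → S1)
      (g : (Fin n → Y) → (Fin n → W) → Fin n → S1),
      CausalRelay f3 ∧ crbcErrProb pSrc Q n f1 f3 g3 g ≤ ε

/-- The single-letter joint distribution `p(s1,w3,w) p(x1,x3) p(y3,y|x1,x3)`, with channel
inputs independent of the source. -/
noncomputable def crbcSepJoint {S1 W W3 X1 X3 Y Y3 : Type*}
    (pSrc : S1 × W × W3 → ℝ) (Q : X1 × X3 → Y × Y3 → ℝ) (pX : X1 × X3 → ℝ) :
    S1 × W3 × W × X1 × X3 × Y3 × Y → ℝ :=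
  fun (s1, w3, w, x1, x3, y3, y) => pSrc (s1, w, w3) * pX (x1, x3) * Q (x1, x3) (y, y3)

/-! Split the source word into `B` blocks and the channel word into `B + 1` blocks. In each channel
block the relay sends the codeword of the previous source block (the cloud centre), and the
transmitter superimposes on it a satellite codeword for the fresh source block. The relay decodes
the fresh block forwards, from the centre it sent itself; the destination decodes the old block
backwards, knowing the fresh one. Since the event that all decoders succeed is the same for
decoders told the true neighbouring block by a genie, it suffices to bound the genie-aided error
probabilities, which a union bound reduces to one-shot random coding.

A threshold decoder for joint likelihoods fails with average probability at most
`τ ^ t * a t * c t + 1 / τ`, where `a` and `c` are moments of order `t` of the source and of the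
channel. These moments are multiplicative over independent letters, equal `1` at `t = 0`, and have
there the derivatives `H` (a conditional entropy) and `-I` (a mutual information). Hence, if
`(B + 1) * H < B * I`, a small `t > 0` and a suitable exponential threshold `τ` make the bound decay
exponentially in the block length. For `B` large both rate conditions have this form. -/

section FiniteProbability

variable {Ω α β : Type*} [Fintype Ω] {μ ν F G : Ω → ℝ}

/-- Expectation of `F` under the weights `μ`. -/
def expect (μ F : Ω → ℝ) : ℝ := ∑ ω, μ ω * F ω

/-- Probability of the event `E` under the weights `μ`. -/
noncomputable def prob (μ : Ω → ℝ) (E : Set Ω) : ℝ := expect μ (E.indicator 1)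

/-- Law of the random variable `X` under `μ`; `entropyOf μ X` is by definition the sum of
`Real.negMulLog` over its values. -/
def law [DecidableEq α] (μ : Ω → ℝ) (X : Ω → α) (a : α) : ℝ := ∑ ω, if X ω = a then μ ω else 0

/-- Joint law of independent coordinates with laws `p i`. With `p i = V (x i)` it is the output
law of the memoryless channel `V` on the input word `x`. -/
def prodLaw {ι : Type*} [Fintype ι] (p : ι → α → ℝ) (z : ι → α) : ℝ := ∏ i, p i (z i)

/-- Joint law of the input and the output of the channel `V` under the input law `q`. -/
def compProd (q : α → ℝ) (V : α → β → ℝ) (x : α × β) : ℝ := q x.1 * V x.1 x.2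

/-- Output law of the channel `V` under the input law `q`. -/
def outputLaw (q : Ω → ℝ) (V : Ω → β → ℝ) (b : β) : ℝ := expect q fun a => V a b

theorem expect_const (hμ : IsPmf μ) (c : ℝ) : expect μ (fun _ => c) = c := by
  rw [expect, ← Finset.sum_mul, hμ.2, one_mul]

theorem expect_add : expect μ (fun ω => F ω + G ω) = expect μ F + expect μ G := by
  simp only [expect, mul_add, Finset.sum_add_distrib]

theorem expect_const_mul (c : ℝ) : expect μ (fun ω => c * F ω) = c * expect μ F := by
  simp only [expect, Finset.mul_sum, mul_left_comm]

theorem expect_mul_const (c : ℝ) : expect μ (fun ω => F ω * c) = expect μ F * c := by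
  simp only [expect, Finset.sum_mul, mul_assoc]

theorem expect_sum {κ : Type*} (s : Finset κ) (F : κ → Ω → ℝ) :
    expect μ (fun ω => ∑ k ∈ s, F k ω) = ∑ k ∈ s, expect μ (F k) := by
  simp only [expect, Finset.mul_sum]
  exact Finset.sum_comm

theorem expect_comm [Fintype α] (μ : Ω → ℝ) (ν : α → ℝ) (F : Ω → α → ℝ) :
    expect μ (fun ω => expect ν (F ω)) = expect ν fun a => expect μ fun ω => F ω a := by
  simp only [expect, Finset.mul_sum, mul_left_comm]
  exact Finset.sum_comm

theorem expect_mono (hμ : 0 ≤ μ) (h : ∀ ω, μ ω ≠ 0 → F ω ≤ G ω) : expect μ F ≤ expect μ G := by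
  refine Finset.sum_le_sum fun ω _ => ?_
  rcases eq_or_ne (μ ω) 0 with h0 | h0
  · simp [h0]
  · exact mul_le_mul_of_nonneg_left (h ω h0) (hμ ω)

theorem expect_congr (h : ∀ ω, μ ω ≠ 0 → F ω = G ω) : expect μ F = expect μ G := by
  refine Finset.sum_congr rfl fun ω _ => ?_
  rcases eq_or_ne (μ ω) 0 with h0 | h0
  · simp [h0]
  · rw [h ω h0]

theorem expect_nonneg (hμ : 0 ≤ μ) (hF : 0 ≤ F) : 0 ≤ expect μ F :=
  Finset.sum_nonneg fun ω _ => mul_nonneg (hμ ω) (hF ω)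

theorem IsPmf.nonneg (hμ : IsPmf μ) : 0 ≤ μ := hμ.1

theorem IsPmf.nonempty (hμ : IsPmf μ) : Nonempty Ω := by
  by_contra h
  rw [not_nonempty_iff] at h
  simpa using hμ.2

theorem IsPmf.exists_le_of_expect_le (hμ : IsPmf μ) {ε : ℝ} (h : expect μ F ≤ ε) :
    ∃ ω, F ω ≤ ε := by
  by_contra! hlt
  have hterm : ∀ ω ∈ Finset.univ, 0 ≤ μ ω * (F ω - ε) := fun ω _ =>
    mul_nonneg (hμ.1 ω) (sub_pos.2 (hlt ω)).le
  have hsum : ∑ ω, μ ω * (F ω - ε) ≤ 0 := by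
    simpa only [expect, mul_sub, Finset.sum_sub_distrib, ← Finset.sum_mul, hμ.2, one_mul,
      sub_nonpos] using h
  have hzero := (Finset.sum_eq_zero_iff_of_nonneg hterm).1 (hsum.antisymm (Finset.sum_nonneg hterm))
  have hμ0 : ∀ ω, μ ω = 0 := fun ω =>
    (mul_eq_zero.1 (hzero ω (Finset.mem_univ ω))).resolve_right (sub_pos.2 (hlt ω)).ne'
  simpa [hμ0] using hμ.2

theorem prob_mono (hμ : 0 ≤ μ) {E E' : Set Ω} (h : E ⊆ E') : prob μ E ≤ prob μ E' :=
  expect_mono hμ fun _ _ => Set.indicator_le_indicator_of_subset h (fun _ => zero_le_one) _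

theorem prob_nonneg (hμ : 0 ≤ μ) (E : Set Ω) : 0 ≤ prob μ E :=
  expect_nonneg hμ (Set.indicator_nonneg fun _ _ => zero_le_one)

theorem prob_union_le (hμ : 0 ≤ μ) (E E' : Set Ω) : prob μ (E ∪ E') ≤ prob μ E + prob μ E' := by
  rw [prob, prob, prob, ← expect_add]
  refine expect_mono hμ fun ω _ => ?_
  by_cases h : ω ∈ E <;> by_cases h' : ω ∈ E' <;> simp [h, h']

theorem prob_biUnion_le (hμ : 0 ≤ μ) {κ : Type*} (s : Finset κ) (E : κ → Set Ω) :
    prob μ (⋃ k ∈ s, E k) ≤ ∑ k ∈ s, prob μ (E k) := by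
  classical
  induction s using Finset.induction_on with
  | empty => simp [prob, expect]
  | insert k s hk ih =>
    rw [Finset.set_biUnion_insert, Finset.sum_insert hk]
    exact (prob_union_le hμ _ _).trans (add_le_add le_rfl ih)

theorem prob_compl (hμ : IsPmf μ) (E : Set Ω) : prob μ Eᶜ = 1 - prob μ E := by
  rw [eq_sub_iff_add_eq, prob, prob, ← expect_add, ← expect_const hμ 1]
  refine congrArg _ (funext fun ω => ?_)
  by_cases h : ω ∈ E <;> simp [h]

theorem prob_compl_eq_of_eqOn (hμ : IsPmf μ) (hν : IsPmf ν) {E : Set Ω} (h : Set.EqOn μ ν E) :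
    prob μ Eᶜ = prob ν Eᶜ := by
  rw [prob_compl hμ, prob_compl hν, prob, prob, expect, expect]
  congr 1
  refine Finset.sum_congr rfl fun ω _ => ?_
  by_cases hω : ω ∈ E
  · rw [h hω]
  · simp [hω]

theorem expect_compProd [Fintype β] (q : Ω → ℝ) (V : Ω → β → ℝ) (F : Ω × β → ℝ) :
    expect (compProd q V) F = expect q fun ω => expect (V ω) fun b => F (ω, b) := by
  simp only [expect, compProd, Fintype.sum_prod_type, Finset.mul_sum, mul_assoc]

theorem prob_compProd [Fintype β] (q : Ω → ℝ) (V : Ω → β → ℝ) (E : Set (Ω × β)) :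
    prob (compProd q V) E = expect q fun ω => prob (V ω) (Prod.mk ω ⁻¹' E) :=
  expect_compProd q V _

theorem IsPmf.compProd [Fintype β] {q : Ω → ℝ} {V : Ω → β → ℝ} (hq : IsPmf q)
    (hV : ∀ ω, IsPmf (V ω)) : IsPmf (compProd q V) := by
  refine ⟨fun x => mul_nonneg (hq.1 _) ((hV _).1 _), ?_⟩
  simpa [expect, (hV _).2, hq.2] using expect_compProd q V fun _ => 1

theorem expect_outputLaw [Fintype β] (q : Ω → ℝ) (V : Ω → β → ℝ) (F : β → ℝ) :
    expect (outputLaw q V) F = expect q fun ω => expect (V ω) F := by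
  simp only [outputLaw, expect, Finset.mul_sum, Finset.sum_mul, mul_assoc]
  exact Finset.sum_comm

theorem outputLaw_nonneg {q : Ω → ℝ} {V : Ω → β → ℝ} (hq : 0 ≤ q) (hV : ∀ a, 0 ≤ V a) :
    0 ≤ outputLaw q V := fun b => expect_nonneg hq fun a => hV a b

theorem outputLaw_pos {q : Ω → ℝ} {V : Ω → β → ℝ} (hq : 0 ≤ q) (hV : ∀ a, 0 ≤ V a) {x : Ω × β}
    (hx : compProd q V x ≠ 0) : 0 < outputLaw q V x.2 :=
  Finset.sum_pos' (fun a _ => mul_nonneg (hq a) (hV a x.2))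
    ⟨x.1, Finset.mem_univ _, (mul_nonneg (hq x.1) (hV x.1 x.2)).lt_of_ne' hx⟩

section Law

variable [DecidableEq α]

theorem law_pos (hμ : 0 ≤ μ) (X : Ω → α) {ω : Ω} (hω : μ ω ≠ 0) : 0 < law μ X (X ω) := by
  refine Finset.sum_pos' (fun ω' _ => ?_)
    ⟨ω, Finset.mem_univ ω, by simpa using (hμ ω).lt_of_ne' hω⟩
  split_ifs
  exacts [hμ ω', le_rfl]

theorem law_comp_injective [DecidableEq β] (μ : Ω → ℝ) (X : Ω → α) {e : α → β}
    (he : e.Injective) (a : α) : law μ (fun ω => e (X ω)) (e a) = law μ X a := by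
  simp only [law, he.eq_iff]

theorem law_equiv_apply (μ : Ω → ℝ) (e : Ω ≃ α) (ω : Ω) : law μ e (e ω) = μ ω :=
  (Finset.sum_eq_single ω (fun _ _ h => if_neg (e.injective.ne h)) (by simp)).trans (if_pos rfl)

variable [Fintype α]

theorem expect_law (μ : Ω → ℝ) (X : Ω → α) (F : α → ℝ) :
    expect (law μ X) F = expect μ fun ω => F (X ω) := by
  simp only [expect, law, Finset.sum_mul]
  rw [Finset.sum_comm]
  simp

theorem prob_law (μ : Ω → ℝ) (X : Ω → α) (E : Set α) : prob (law μ X) E = prob μ (X ⁻¹' E) :=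
  expect_law μ X _

theorem law_eq_of_expect {X : Ω → α} {ν : α → ℝ}
    (h : ∀ F : α → ℝ, (expect μ fun ω => F (X ω)) = expect ν F) : law μ X = ν := by
  funext a
  simpa [expect, law] using h fun a' => if a' = a then 1 else 0

theorem IsPmf.law (hμ : IsPmf μ) (X : Ω → α) : IsPmf (law μ X) := by
  refine ⟨fun a => Finset.sum_nonneg fun ω _ => ?_, ?_⟩
  · split_ifs
    exacts [hμ.1 ω, le_rfl]
  · simpa [expect, hμ.2] using expect_law μ X fun _ => 1

theorem law_law [DecidableEq β] (μ : Ω → ℝ) (X : Ω → α) (Y : α → β) :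
    law (law μ X) Y = law μ fun ω => Y (X ω) := by
  funext b
  simpa [expect, law] using expect_law μ X fun a => if Y a = b then 1 else 0

theorem outputLaw_law (μ : Ω → ℝ) (X : Ω → α) (V : α → β → ℝ) :
    outputLaw (law μ X) V = outputLaw μ fun ω => V (X ω) :=
  funext fun _ => expect_law μ X _

end Law

section CompProd

variable [Fintype β] {q : Ω → ℝ} {V : Ω → β → ℝ}

theorem law_fst_compProd [DecidableEq Ω] (hV : ∀ ω, IsPmf (V ω)) :
    law (compProd q V) Prod.fst = q :=
  law_eq_of_expect fun F => by simp only [expect_compProd, expect_const (hV _)]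

theorem law_snd_compProd [DecidableEq β] : law (compProd q V) Prod.snd = outputLaw q V :=
  law_eq_of_expect fun F => by rw [expect_compProd, expect_outputLaw]

theorem law_compProd_snd_fst [DecidableEq Ω] [DecidableEq α] (q : Ω → ℝ) (V : Ω → β → ℝ)
    (X : β → α) :
    law (compProd q V) (fun x => (X x.2, x.1)) = fun y => q y.2 * law (V y.2) X y.1 := by
  funext y
  simp only [law, compProd, Fintype.sum_prod_type_right, Prod.ext_iff, ite_and, Finset.mul_sum,
    mul_ite, mul_zero]
  refine Finset.sum_congr rfl fun b _ => ?_
  by_cases hb : X b = y.1 <;> simp [hb]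

end CompProd

section Product

variable {ι : Type*} [Fintype ι] [DecidableEq ι] {p : ι → Ω → ℝ}

theorem expect_prodLaw_prod (p F : ι → Ω → ℝ) :
    expect (prodLaw p) (fun z => ∏ i, F i (z i)) = ∏ i, expect (p i) (F i) := by
  simp only [expect, prodLaw, ← Finset.prod_mul_distrib]
  exact (Fintype.prod_sum fun i a => p i a * F i a).symm

theorem IsPmf.prodLaw (hp : ∀ i, IsPmf (p i)) : IsPmf (prodLaw p) := by
  refine ⟨fun z => Finset.prod_nonneg fun i _ => (hp i).1 _, ?_⟩
  simpa [expect, (hp _).2] using expect_prodLaw_prod p fun _ _ => 1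

theorem prodLaw_update_mul {A : Type*} (p : ι → A → ℝ) (z : ι → A) (i : ι) (a : A) :
    prodLaw p (Function.update z i a) * p i (z i) = prodLaw p z * p i a := by
  have hcompl : ∏ j ∈ {i}ᶜ, p j (Function.update z i a j) = ∏ j ∈ {i}ᶜ, p j (z j) :=
    Finset.prod_congr rfl fun j hj => by rw [Function.update_of_ne (by simpa using hj)]
  simp only [prodLaw, Fintype.prod_eq_mul_prod_compl i, hcompl, Function.update_self]
  ring

-- Exchanging `z i` with the fresh sample `a` is a measure-preserving involution.
theorem expect_prodLaw_update (p : ι → Ω → ℝ) {i : ι} (hp : IsPmf (p i)) (F : (ι → Ω) → ℝ) :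
    expect (prodLaw p) F =
      expect (prodLaw p) fun z => expect (p i) fun a => F (Function.update z i a) := by
  have hswap : Function.Involutive
      fun x : (ι → Ω) × Ω => (Function.update x.1 i x.2, x.1 i) := by
    rintro ⟨z, a⟩
    simp
  calc expect (prodLaw p) F = expect (prodLaw p) fun z => expect (p i) fun _ => F z := by
        simp only [expect_const hp]
    _ = ∑ x : (ι → Ω) × Ω, prodLaw p x.1 * p i x.2 * F x.1 := by
        simp only [expect, Finset.mul_sum, mul_assoc, Fintype.sum_prod_type]
    _ = ∑ x : (ι → Ω) × Ω, prodLaw p x.1 * p i x.2 * F (Function.update x.1 i x.2) := by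
        rw [← Equiv.sum_comp hswap.toPerm]
        exact Finset.sum_congr rfl fun x _ => congrArg (· * _) (prodLaw_update_mul p x.1 i x.2)
    _ = expect (prodLaw p) fun z => expect (p i) fun a => F (Function.update z i a) := by
        simp only [expect, Finset.mul_sum, mul_assoc, Fintype.sum_prod_type]

theorem expect_prodLaw_apply (hp : ∀ i, IsPmf (p i)) (i : ι) (F : Ω → ℝ) :
    expect (prodLaw p) (fun z => F (z i)) = expect (p i) F := by
  rw [expect_prodLaw_update p (hp i)]
  simp only [Function.update_self, expect_const (IsPmf.prodLaw hp)]

theorem prob_prodLaw_apply (hp : ∀ i, IsPmf (p i)) (i : ι) (E : Set Ω) :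
    prob (prodLaw p) {z | z i ∈ E} = prob (p i) E :=
  expect_prodLaw_apply hp i (E.indicator 1)

theorem expect_prodLaw_apply₂ (hp : ∀ i, IsPmf (p i)) {i j : ι} (hij : i ≠ j) (F : Ω → Ω → ℝ) :
    expect (prodLaw p) (fun z => F (z i) (z j)) =
      expect (p i) fun a => expect (p j) fun b => F a b := by
  rw [expect_prodLaw_update p (hp j)]
  simp only [Function.update_self, Function.update_of_ne hij]
  exact expect_prodLaw_apply hp i fun a => expect (p j) (F a)

theorem law_prodLaw [DecidableEq α] (p : ι → Ω → ℝ) (X : ι → Ω → α) :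
    law (prodLaw p) (fun z i => X i (z i)) = prodLaw fun i => law (p i) (X i) := by
  funext y
  have hind : ∀ z : ι → Ω, (if (fun i => X i (z i)) = y then prodLaw p z else 0) =
      ∏ i, if X i (z i) = y i then p i (z i) else 0 := fun z => by
    simp only [Finset.prod_ite_zero, Finset.mem_univ, true_implies, funext_iff, prodLaw]
  simp only [law, hind]
  exact (Fintype.prod_sum fun i a => if X i a = y i then p i a else 0).symm

theorem law_prodLaw_pair [DecidableEq α] [DecidableEq β] (p : ι → Ω → ℝ) (X : ι → Ω → α)
    (Y : ι → Ω → β) (w : (ι → α) × (ι → β)) :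
    law (prodLaw p) (fun z => (fun i => X i (z i), fun i => Y i (z i))) w =
      ∏ i, law (p i) (fun ω => (X i ω, Y i ω)) (w.1 i, w.2 i) := by
  have hpair := congrFun (law_prodLaw p fun i ω => (X i ω, Y i ω)) fun i => (w.1 i, w.2 i)
  rw [← law_comp_injective _ _ (Equiv.arrowProdEquivProdArrow ι (fun _ => α) fun _ => β).injective]
    at hpair
  exact hpair

end Product

end FiniteProbability

section RandomCoding

variable {A M U Z : Type*} [Fintype A] [Fintype M] [Fintype U] [Fintype Z] [DecidableEq U]

/-- Threshold decoder for a message with joint law `P` with the side information, sent through `W`: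
given the output `z` and the side information `u`, some message `s` whose joint likelihood
`P (s, u) * W s z` exceeds `τ` times the product of the reference output weight `T z` and the
marginal weight of `u`. The output is arbitrary if there is no such message. -/
noncomputable def thresholdDecoder [Nonempty M] (P : M × U → ℝ) (W : M → Z → ℝ) (T : Z → ℝ)
    (τ : ℝ) (z : Z) (u : U) : M :=
  Classical.epsilon fun s => τ * (T z * law P Prod.snd u) < P (s, u) * W s z

/-- Error probability of the decoder `d` for a message with joint law `P` with the side
information, sent through `W`. -/
noncomputable def errorProb (P : M × U → ℝ) (W : M → Z → ℝ) (d : Z → U → M) : ℝ :=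
  expect P fun x => prob (W x.1) {z | d z x.2 ≠ x.1}

/-- Moment of order `t` of the inverse conditional probability of the message given the side
information; its derivative at `t = 0` is the conditional entropy. -/
noncomputable def sourceMoment (P : M × U → ℝ) (t : ℝ) : ℝ :=
  expect P fun x => (law P Prod.snd x.2 / P x) ^ t

/-- Moment of order `t` of the inverse likelihood ratio of the channel `V` with input law `q`; its
derivative at `t = 0` is minus the mutual information. -/
noncomputable def channelMoment (q : A → ℝ) (V : A → Z → ℝ) (t : ℝ) : ℝ :=
  expect (compProd q V) fun x => (outputLaw q V x.2 / V x.1 x.2) ^ t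

/-- Bound on the average error probability of a random code with threshold `τ`, in terms of the
source moment `a` and the channel moment `c` of order `t`. -/
noncomputable def randomCodingBound (τ t a c : ℝ) : ℝ := τ ^ t * a * c + 1 / τ

theorem prob_thresholdDecoder_ne_le [Nonempty M] [DecidableEq M] (P : M × U → ℝ) {W : M → Z → ℝ}
    (T : Z → ℝ) (τ : ℝ) {s : M} (hW : 0 ≤ W s) (u : U) :
    prob (W s) {z | thresholdDecoder P W T τ z u ≠ s} ≤
      prob (W s) {z | P (s, u) * W s z ≤ τ * (T z * law P Prod.snd u)} +
        ∑ s' ∈ Finset.univ.erase s,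
          prob (W s) {z | τ * (T z * law P Prod.snd u) < P (s', u) * W s' z} := by
  refine le_trans (prob_mono hW fun z hz => ?_)
    ((prob_union_le hW _ _).trans (add_le_add le_rfl (prob_biUnion_le hW _ _)))
  rcases le_or_gt (P (s, u) * W s z) (τ * (T z * law P Prod.snd u)) with hmiss | hhit
  · exact Or.inl hmiss
  · have hspec : τ * (T z * law P Prod.snd u) < P (thresholdDecoder P W T τ z u, u) *
        W (thresholdDecoder P W T τ z u) z :=
      Classical.epsilon_spec (p := fun s => τ * (T z * law P Prod.snd u) < P (s, u) * W s z)
        ⟨s, hhit⟩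
    exact Or.inr (Set.mem_biUnion (Finset.mem_coe.2 (Finset.mem_erase.2 ⟨hz, Finset.mem_univ _⟩))
      hspec)

theorem prob_le_threshold_le {v T : Z → ℝ} {a r τ t : ℝ} (hv : 0 ≤ v) (hT : 0 ≤ T) (ha : 0 < a)
    (hr : 0 ≤ r) (hτ : 0 < τ) (ht : 0 ≤ t) :
    prob v {z | a * v z ≤ τ * (T z * r)} ≤
      τ ^ t * (r / a) ^ t * expect v fun z => (T z / v z) ^ t := by
  rw [← expect_const_mul]
  refine expect_mono hv fun z hz => ?_
  have hratio : 0 ≤ τ * (r / a) := mul_nonneg hτ.le (div_nonneg hr ha.le)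
  rw [← Real.mul_rpow hτ.le (div_nonneg hr ha.le),
    ← Real.mul_rpow hratio (div_nonneg (hT z) (hv z))]
  have hvz : 0 < v z := (hv z).lt_of_ne' hz
  refine Set.indicator_apply_le' (fun hmem => Real.one_le_rpow ?_ ht)
    fun _ => Real.rpow_nonneg (mul_nonneg hratio (div_nonneg (hT z) (hv z))) t
  rw [mul_assoc, div_mul_div_comm, ← mul_div_assoc, one_le_div (mul_pos ha hvz), mul_comm r]
  exact hmem

theorem mul_prob_threshold_lt_le {v T : Z → ℝ} {a r τ : ℝ} (hv : IsPmf v) (ha : 0 ≤ a)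
    (hτ : 0 < τ) : r * prob T {z | τ * (T z * r) < a * v z} ≤ a / τ := by
  rw [le_div_iff₀' hτ]
  calc τ * (r * prob T {z | τ * (T z * r) < a * v z})
      = ∑ z, τ * (T z * r) * {z | τ * (T z * r) < a * v z}.indicator 1 z := by
        simp only [prob, expect, Finset.mul_sum]
        exact Finset.sum_congr rfl fun z _ => by ring
    _ ≤ ∑ z, a * v z := Finset.sum_le_sum fun z _ => ?_
    _ = a := by rw [← Finset.mul_sum, hv.2, mul_one]
  by_cases hz : τ * (T z * r) < a * v z
  · simpa [hz] using hz.le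
  · simpa [hz] using mul_nonneg ha (hv.1 z)

variable {P : M × U → ℝ} {q : A → ℝ} {V : A → Z → ℝ} {τ t : ℝ}

theorem expect_prob_le_threshold_le (hP : IsPmf P) (hq : IsPmf q) (hV : ∀ a, IsPmf (V a))
    (hτ : 0 < τ) (ht : 0 ≤ t) :
    (expect P fun x => expect q fun a =>
        prob (V a) {z | P x * V a z ≤ τ * (outputLaw q V z * law P Prod.snd x.2)}) ≤
      τ ^ t * sourceMoment P t * channelMoment q V t := by
  rw [sourceMoment, ← expect_const_mul, ← expect_mul_const]
  refine expect_mono hP.nonneg fun x hx => ?_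
  rw [channelMoment, expect_compProd, ← expect_const_mul]
  exact expect_mono hq.nonneg fun a _ => prob_le_threshold_le (hV a).nonneg
    (outputLaw_nonneg hq.nonneg fun b => (hV b).nonneg) ((hP.1 x).lt_of_ne' hx)
    (law_pos hP.nonneg Prod.snd hx).le hτ ht

-- The rival codeword is independent of the output, whose law is `outputLaw q V`.
theorem expect_prob_threshold_lt_le [DecidableEq M] (hP : IsPmf P) (hq : IsPmf q)
    (hV : ∀ a, IsPmf (V a)) (hτ : 0 < τ) :
    (expect P fun x => ∑ s ∈ Finset.univ.erase x.1, expect q fun a => expect q fun b =>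
        prob (V a) {z | τ * (outputLaw q V z * law P Prod.snd x.2) < P (s, x.2) * V b z}) ≤
      1 / τ := by
  set R : U → ℝ := law P Prod.snd
  set F : M → U → ℝ := fun s u => expect q fun b =>
    prob (outputLaw q V) {z | τ * (outputLaw q V z * R u) < P (s, u) * V b z}
  have hF : ∀ s u, (expect q fun a => expect q fun b =>
      prob (V a) {z | τ * (outputLaw q V z * R u) < P (s, u) * V b z}) = F s u := fun s u => by
    rw [expect_comm]
    exact congrArg _ (funext fun b => (expect_outputLaw q V _).symm)
  have hF0 : ∀ s u, 0 ≤ F s u := fun s u => expect_nonneg hq.nonneg fun b => prob_nonneg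
    (outputLaw_nonneg hq.nonneg fun a => (hV a).nonneg) _
  have hRF : ∀ s u, R u * F s u ≤ P (s, u) / τ := fun s u => by
    rw [← expect_const_mul, ← expect_const hq (P (s, u) / τ)]
    exact expect_mono hq.nonneg fun b _ => mul_prob_threshold_lt_le (hV b) (hP.1 _) hτ
  calc _ ≤ expect P fun x => ∑ s, F s x.2 := by
        simp only [hF]
        exact expect_mono hP.nonneg fun x _ => Finset.sum_le_sum_of_subset_of_nonneg
          (Finset.erase_subset _ _) fun s _ _ => hF0 s x.2
    _ = ∑ u, ∑ s, R u * F s u := by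
        rw [← expect_law P Prod.snd fun u => ∑ s, F s u]
        simp only [expect, Finset.mul_sum, R]
    _ ≤ ∑ u, ∑ s, P (s, u) / τ := Finset.sum_le_sum fun u _ => Finset.sum_le_sum fun s _ => hRF s u
    _ = 1 / τ := by
        rw [Finset.sum_comm, ← hP.2, Fintype.sum_prod_type]
        simp only [Finset.sum_div]

theorem expect_errorProb_le [Nonempty M] [DecidableEq M] (hP : IsPmf P) (hq : IsPmf q)
    (hV : ∀ a, IsPmf (V a)) (hτ : 0 < τ) (ht : 0 ≤ t) :
    (expect (prodLaw fun _ : M => q) fun c => errorProb P (fun s => V (c s))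
        (thresholdDecoder P (fun s => V (c s)) (outputLaw q V) τ)) ≤
      randomCodingBound τ t (sourceMoment P t) (channelMoment q V t) := by
  have hprod : ∀ _ : M, IsPmf q := fun _ => hq
  calc _ ≤ expect (prodLaw fun _ : M => q) fun c => expect P fun x =>
          prob (V (c x.1)) {z | P x * V (c x.1) z ≤ τ * (outputLaw q V z * law P Prod.snd x.2)} +
            ∑ s ∈ Finset.univ.erase x.1, prob (V (c x.1))
              {z | τ * (outputLaw q V z * law P Prod.snd x.2) < P (s, x.2) * V (c s) z} :=
        expect_mono (IsPmf.prodLaw hprod).nonneg fun c _ => expect_mono hP.nonneg fun x _ =>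
          prob_thresholdDecoder_ne_le P _ τ (W := fun s => V (c s)) (hV _).nonneg x.2
    _ = (expect P fun x => expect q fun a =>
          prob (V a) {z | P x * V a z ≤ τ * (outputLaw q V z * law P Prod.snd x.2)}) +
        expect P fun x => ∑ s ∈ Finset.univ.erase x.1, expect q fun a => expect q fun b =>
          prob (V a) {z | τ * (outputLaw q V z * law P Prod.snd x.2) < P (s, x.2) * V b z} := by
        rw [expect_comm, ← expect_add]
        refine congrArg _ (funext fun x => ?_)
        rw [expect_add, expect_sum]
        refine congrArg₂ _ (expect_prodLaw_apply hprod x.1 fun a =>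
          prob (V a) {z | P x * V a z ≤ τ * (outputLaw q V z * law P Prod.snd x.2)})
          (Finset.sum_congr rfl fun s hs => ?_)
        exact expect_prodLaw_apply₂ hprod (Finset.ne_of_mem_erase hs).symm fun a b =>
          prob (V a) {z | τ * (outputLaw q V z * law P Prod.snd x.2) < P (s, x.2) * V b z}
    _ ≤ _ := add_le_add (expect_prob_le_threshold_le hP hq hV hτ ht)
        (expect_prob_threshold_lt_le hP hq hV hτ)

end RandomCoding

section Superposition

variable {A3 A1 M U Z : Type*} [Fintype A3] [Fintype A1] [Fintype M] [Fintype U] [Fintype Z]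

/-- Law of a cloud centre, drawn from `p`, together with one satellite codeword for each message
in `M`; given the centre `x` the satellites are independent draws from `K x`. -/
def superpositionLaw (M : Type*) [Fintype M] (p : A3 → ℝ) (K : A3 → A1 → ℝ) :
    A3 × (M → A1) → ℝ :=
  compProd p fun x => prodLaw fun _ : M => K x

/-- Codeword for the fresh message `s` in the cloud of the old message `r`. -/
def superpositionCodeword {A3 A1 : Type*} (C : M → A3 × (M → A1)) (s r : M) : A3 × A1 :=
  ((C r).1, (C r).2 s)

variable {p : A3 → ℝ} {K : A3 → A1 → ℝ} {V : A3 × A1 → Z → ℝ} {P : M × U → ℝ} {τ t : ℝ}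

variable [DecidableEq M]

theorem isPmf_superpositionLaw (hp : IsPmf p) (hK : ∀ x, IsPmf (K x)) :
    IsPmf (superpositionLaw M p K) :=
  hp.compProd fun x => IsPmf.prodLaw fun _ => hK x

theorem law_superpositionLaw_satellite [DecidableEq A3] [DecidableEq A1]
    (hK : ∀ x, IsPmf (K x)) (s : M) :
    law (superpositionLaw M p K) (fun a => (a.1, a.2 s)) = compProd p K :=
  law_eq_of_expect fun F => by
    rw [superpositionLaw, expect_compProd, expect_compProd]
    exact congrArg _ (funext fun x => expect_prodLaw_apply (fun _ => hK x) s fun x1 => F (x, x1))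

variable [Nonempty M] [DecidableEq U]

theorem expect_satellite_errorProb_le (hp : IsPmf p) (hK : ∀ x, IsPmf (K x))
    (hV : ∀ x, IsPmf (V x)) (hP : IsPmf P) (hτ : 0 < τ) (ht : 0 ≤ t) (r : M) :
    (expect (prodLaw fun _ : M => superpositionLaw M p K) fun C =>
        errorProb P (fun s => V (superpositionCodeword C s r))
          (thresholdDecoder P (fun s => V (superpositionCodeword C s r))
            (outputLaw (K (C r).1) fun x1 => V ((C r).1, x1)) τ)) ≤
      randomCodingBound τ t (sourceMoment P t)
        (expect p fun x => channelMoment (K x) (fun x1 => V (x, x1)) t) := by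
  calc _ = expect p fun x => expect (prodLaw fun _ : M => K x) fun c =>
          errorProb P (fun s => V (x, c s)) (thresholdDecoder P (fun s => V (x, c s))
            (outputLaw (K x) fun x1 => V (x, x1)) τ) := by
        rw [← expect_compProd p (fun x => prodLaw fun _ : M => K x) fun a =>
          errorProb P (fun s => V (a.1, a.2 s)) (thresholdDecoder P (fun s => V (a.1, a.2 s))
            (outputLaw (K a.1) fun x1 => V (a.1, x1)) τ)]
        exact expect_prodLaw_apply (fun _ => isPmf_superpositionLaw hp hK) r fun a =>
          errorProb P (fun s => V (a.1, a.2 s)) (thresholdDecoder P (fun s => V (a.1, a.2 s))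
            (outputLaw (K a.1) fun x1 => V (a.1, x1)) τ)
    _ ≤ expect p fun x => randomCodingBound τ t (sourceMoment P t)
          (channelMoment (K x) (fun x1 => V (x, x1)) t) :=
        expect_mono hp.nonneg fun x _ => expect_errorProb_le
          (V := fun x1 => V (x, x1)) hP (hK x) (fun _ => hV _) hτ ht
    _ = _ := by
        simp only [randomCodingBound, expect_add, expect_const_mul, expect_const hp]

theorem expect_cloud_errorProb_le (hp : IsPmf p) (hK : ∀ x, IsPmf (K x))
    (hV : ∀ x, IsPmf (V x)) (hP : IsPmf P) (hτ : 0 < τ) (ht : 0 ≤ t) (s : M) :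
    (expect (prodLaw fun _ : M => superpositionLaw M p K) fun C =>
        errorProb P (fun r => V (superpositionCodeword C s r))
          (thresholdDecoder P (fun r => V (superpositionCodeword C s r))
            (outputLaw (compProd p K) V) τ)) ≤
      randomCodingBound τ t (sourceMoment P t) (channelMoment (compProd p K) V t) := by
  classical
  have hlaw : law (prodLaw fun _ : M => superpositionLaw M p K)
      (fun C r => superpositionCodeword C s r) = prodLaw fun _ => compProd p K := by
    simp only [← law_superpositionLaw_satellite (p := p) hK s]
    exact law_prodLaw _ fun (_ : M) (a : A3 × (M → A1)) => (a.1, a.2 s)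
  rw [← expect_law _ (fun C r => superpositionCodeword C s r) fun c =>
    errorProb P (fun r => V (c r)) (thresholdDecoder P (fun r => V (c r))
      (outputLaw (compProd p K) V) τ), hlaw]
  exact expect_errorProb_le hP (hp.compProd hK) hV hτ ht

end Superposition

section BlockMarkov

variable {M : Type*} {B : ℕ}

/-- The message of the previous block, for each of the `B + 1` channel blocks; the first block,
which has none before it, uses the dummy message `s0` known to everybody. -/
def oldMsg (s0 : M) (σ : Fin B → M) : Fin (B + 1) → M :=
  Fin.cons (α := fun _ => M) s0 σ

/-- The fresh message of each of the `B + 1` channel blocks, which is the dummy `s0` in the last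
one. -/
def newMsg (s0 : M) (σ : Fin B → M) : Fin (B + 1) → M :=
  Fin.snoc (α := fun _ => M) σ s0

@[simp]
theorem oldMsg_succ (s0 : M) (σ : Fin B → M) (b : Fin B) : oldMsg s0 σ b.succ = σ b := rfl

@[simp]
theorem newMsg_castSucc (s0 : M) (σ : Fin B → M) (b : Fin B) :
    newMsg s0 σ b.castSucc = σ b := by
  simp [newMsg]

theorem oldMsg_update_castSucc (s0 : M) (σ : Fin B → M) (b : Fin B) (s : M) :
    oldMsg s0 (Function.update σ b s) b.castSucc = oldMsg s0 σ b.castSucc := by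
  rw [oldMsg, Fin.cons_update, Function.update_of_ne Fin.castSucc_lt_succ.ne]
  rfl

theorem newMsg_update_succ (s0 : M) (σ : Fin B → M) (b : Fin B) (s : M) :
    newMsg s0 (Function.update σ b s) b.succ = newMsg s0 σ b.succ := by
  rw [newMsg, Fin.snoc_update, Function.update_of_ne Fin.castSucc_lt_succ.ne']
  rfl

variable {Ω O : Type*} [Fintype Ω] [Fintype O]

/-- Joint law of the `B` source blocks, drawn independently from `p`, and of the `B + 1` channel
output blocks of block-Markov transmission, where `Q s r` is the output law for the fresh message
`s` and the old message `r`, and `m` reads the message of a source block. -/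
def blockMarkovLaw (s0 : M) (p : Ω → ℝ) (m : Ω → M) (Q : M → M → O → ℝ) :
    (Fin B → Ω) × (Fin (B + 1) → O) → ℝ :=
  compProd (prodLaw fun _ => p) fun z =>
    prodLaw fun b => Q (newMsg s0 (m ∘ z) b) (oldMsg s0 (m ∘ z) b)

/-- The event that in every block the decoder `d3`, told the old message, recovers the fresh one,
and the decoder `d`, told the fresh message, recovers the old one. Decoders see the output block
and the source block, from which they may read the side information. -/
def genieSuccess (s0 : M) (m : Ω → M) (d3 d : M → O → Ω → M) :
    Set ((Fin B → Ω) × (Fin (B + 1) → O)) :=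
  {x | ∀ b : Fin B,
    d3 (oldMsg s0 (m ∘ x.1) b.castSucc) (x.2 b.castSucc) (x.1 b) = m (x.1 b) ∧
    d (newMsg s0 (m ∘ x.1) b.succ) (x.2 b.succ) (x.1 b) = m (x.1 b)}

variable {p : Ω → ℝ} {m : Ω → M} {Q : M → M → O → ℝ}

theorem isPmf_blockMarkovLaw (hp : IsPmf p) (hQ : ∀ s r, IsPmf (Q s r)) (s0 : M) :
    IsPmf (blockMarkovLaw (B := B) s0 p m Q) :=
  (IsPmf.prodLaw fun _ => hp).compProd fun _ => IsPmf.prodLaw fun _ => hQ _ _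

theorem prob_blockMarkovLaw_fresh (hp : IsPmf p) (hQ : ∀ s r, IsPmf (Q s r)) (s0 : M)
    (d : M → O → Ω → M) (b : Fin B) :
    prob (blockMarkovLaw s0 p m Q)
        {x | d (oldMsg s0 (m ∘ x.1) b.castSucc) (x.2 b.castSucc) (x.1 b) ≠ m (x.1 b)} =
      expect (prodLaw fun _ => p) fun z => expect p fun a =>
        prob (Q (m a) (oldMsg s0 (m ∘ z) b.castSucc))
          {o | d (oldMsg s0 (m ∘ z) b.castSucc) o a ≠ m a} := by
  calc _ = expect (prodLaw fun _ => p) fun z =>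
          prob (Q (m (z b)) (oldMsg s0 (m ∘ z) b.castSucc))
            {o | d (oldMsg s0 (m ∘ z) b.castSucc) o (z b) ≠ m (z b)} := by
        rw [blockMarkovLaw, prob_compProd]
        refine congrArg _ (funext fun z => (prob_prodLaw_apply (fun _ => hQ _ _) b.castSucc
          {o | d (oldMsg s0 (m ∘ z) b.castSucc) o (z b) ≠ m (z b)}).trans ?_)
        rw [newMsg_castSucc, Function.comp_apply]
    _ = _ := by
        rw [expect_prodLaw_update _ (i := b) hp]
        simp only [Function.comp_update, oldMsg_update_castSucc, Function.update_self]

theorem prob_blockMarkovLaw_old (hp : IsPmf p) (hQ : ∀ s r, IsPmf (Q s r)) (s0 : M)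
    (d : M → O → Ω → M) (b : Fin B) :
    prob (blockMarkovLaw s0 p m Q)
        {x | d (newMsg s0 (m ∘ x.1) b.succ) (x.2 b.succ) (x.1 b) ≠ m (x.1 b)} =
      expect (prodLaw fun _ => p) fun z => expect p fun a =>
        prob (Q (newMsg s0 (m ∘ z) b.succ) (m a))
          {o | d (newMsg s0 (m ∘ z) b.succ) o a ≠ m a} := by
  calc _ = expect (prodLaw fun _ => p) fun z =>
          prob (Q (newMsg s0 (m ∘ z) b.succ) (m (z b)))
            {o | d (newMsg s0 (m ∘ z) b.succ) o (z b) ≠ m (z b)} := by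
        rw [blockMarkovLaw, prob_compProd]
        exact congrArg _ (funext fun z => prob_prodLaw_apply (fun _ => hQ _ _) b.succ
          {o | d (newMsg s0 (m ∘ z) b.succ) o (z b) ≠ m (z b)})
    _ = _ := by
        rw [expect_prodLaw_update _ (i := b) hp]
        simp only [Function.comp_update, newMsg_update_succ, Function.update_self]

theorem prob_genieSuccess_compl_le (hp : IsPmf p) (hQ : ∀ s r, IsPmf (Q s r)) (s0 : M)
    (d3 d : M → O → Ω → M) :
    prob (blockMarkovLaw (B := B) s0 p m Q) (genieSuccess s0 m d3 d)ᶜ ≤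
      ∑ b : Fin B, expect (prodLaw fun _ => p) fun z =>
        (expect p fun a => prob (Q (m a) (oldMsg s0 (m ∘ z) b.castSucc))
          {o | d3 (oldMsg s0 (m ∘ z) b.castSucc) o a ≠ m a}) +
        expect p fun a => prob (Q (newMsg s0 (m ∘ z) b.succ) (m a))
          {o | d (newMsg s0 (m ∘ z) b.succ) o a ≠ m a} := by
  have hlaw := (isPmf_blockMarkovLaw (B := B) (m := m) hp hQ s0).nonneg
  simp only [expect_add, ← prob_blockMarkovLaw_fresh hp hQ, ← prob_blockMarkovLaw_old hp hQ]
  refine le_trans (prob_mono hlaw fun x hx => ?_) ((prob_biUnion_le hlaw _ _).trans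
    (Finset.sum_le_sum fun b _ => prob_union_le hlaw _ _))
  obtain ⟨b, hb⟩ := not_forall.1 hx
  exact Set.mem_biUnion (Finset.mem_coe.2 (Finset.mem_univ b)) (not_and_or.1 hb)

theorem exists_prob_genieSuccess_compl_le {κ : Type*} [Fintype κ] {ν : κ → ℝ} (hν : IsPmf ν)
    (hp : IsPmf p) {Q : κ → M → M → O → ℝ} (hQ : ∀ C s r, IsPmf (Q C s r)) (s0 : M)
    (d3 d : κ → M → O → Ω → M) {ε3 ε : ℝ}
    (h3 : ∀ r, (expect ν fun C => expect p fun a =>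
      prob (Q C (m a) r) {o | d3 C r o a ≠ m a}) ≤ ε3)
    (h : ∀ s, (expect ν fun C => expect p fun a =>
      prob (Q C s (m a)) {o | d C s o a ≠ m a}) ≤ ε) :
    ∃ C, prob (blockMarkovLaw (B := B) s0 p m (Q C)) (genieSuccess s0 m (d3 C) (d C))ᶜ ≤
      B * (ε3 + ε) := by
  refine hν.exists_le_of_expect_le ((expect_mono hν.nonneg fun C _ =>
    prob_genieSuccess_compl_le hp (hQ C) s0 (d3 C) (d C)).trans ?_)
  have hblocks : IsPmf (prodLaw fun _ : Fin B => p) := IsPmf.prodLaw fun _ => hp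
  rw [expect_sum]
  refine (Finset.sum_le_card_nsmul _ _ (ε3 + ε) fun b _ => ?_).trans_eq (by simp [mul_add])
  rw [expect_comm, ← expect_const hblocks (ε3 + ε)]
  refine expect_mono hblocks.nonneg fun z _ => ?_
  rw [expect_add]
  exact add_le_add (h3 _) (h _)

end BlockMarkov

section BlockCode

variable {M U Z : Type*} {B : ℕ}

/-- Block by block estimates of the old messages at the relay, starting from the known initial
message. -/
def forwardEst (s0 : M) (d : M → Z → U → M) (y : Fin (B + 1) → Z) (w : Fin B → U) :
    Fin (B + 1) → M :=
  Fin.induction s0 fun b r => d r (y b.castSucc) (w b)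

/-- Estimates of the fresh messages at the destination, starting from the known final message and
going back block by block. -/
def backwardEst (s0 : M) (d : M → Z → U → M) (y : Fin (B + 1) → Z) (w : Fin B → U) :
    Fin (B + 1) → M :=
  Fin.reverseInduction s0 fun b s => d s (y b.succ) (w b)

theorem forwardEst_eq_oldMsg {s0 : M} {d : M → Z → U → M} {y : Fin (B + 1) → Z} {w : Fin B → U}
    {σ : Fin B → M} (h : ∀ b : Fin B, d (oldMsg s0 σ b.castSucc) (y b.castSucc) (w b) = σ b) :
    forwardEst s0 d y w = oldMsg s0 σ := by
  funext b
  induction b using Fin.induction with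
  | zero => rfl
  | succ b ih =>
    rw [oldMsg_succ, ← h b, ← ih]
    rfl

theorem backwardEst_eq_newMsg {s0 : M} {d : M → Z → U → M} {y : Fin (B + 1) → Z} {w : Fin B → U}
    {σ : Fin B → M} (h : ∀ b : Fin B, d (newMsg s0 σ b.succ) (y b.succ) (w b) = σ b) :
    backwardEst s0 d y w = newMsg s0 σ := by
  funext b
  induction b using Fin.reverseInduction with
  | last => simp [backwardEst, newMsg]
  | cast b ih =>
    rw [newMsg_castSucc, ← h b, ← ih]
    simp [backwardEst]

theorem forwardEst_congr (s0 : M) (d : M → Z → U → M) {y y' : Fin (B + 1) → Z} (w : Fin B → U)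
    (b : Fin (B + 1)) (h : ∀ b' < b, y b' = y' b') :
    forwardEst s0 d y w b = forwardEst s0 d y' w b := by
  induction b using Fin.induction with
  | zero => rfl
  | succ b ih =>
    have hprev := ih fun b' hb' => h b' (hb'.trans Fin.castSucc_lt_succ)
    simp only [forwardEst, Fin.induction_succ] at hprev ⊢
    rw [hprev, h _ Fin.castSucc_lt_succ]

variable {S1 W W3 X1 X3 Y Y3 T : Type*} {n Ns Nc : ℕ}

/-- Cutting of a word of length `n` into `B` blocks of length `N`. -/
def blocks {N : ℕ} (e : Fin B × Fin N ≃ Fin n) : (Fin n → T) ≃ (Fin B → Fin N → T) :=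
  (Equiv.arrowCongr e.symm (Equiv.refl T)).trans (Equiv.curry _ _ _)

variable (eS : Fin B × Fin Ns ≃ Fin n) (eC : Fin (B + 1) × Fin Nc ≃ Fin n) (s0 : Fin Ns → S1)

/-- Block-Markov encoder: each block carries the fresh and the previous source block. -/
def blockEncoder (x1 : (Fin Ns → S1) → (Fin Ns → S1) → Fin Nc → X1) (s : Fin n → S1)
    (k : Fin n) : X1 :=
  x1 (newMsg s0 (blocks eS s) (eC.symm k).1) (oldMsg s0 (blocks eS s) (eC.symm k).1) (eC.symm k).2

/-- Relay encoder: each block carries the relay's estimate of the previous source block. -/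
def relayEncoder (x3 : (Fin Ns → S1) → Fin Nc → X3)
    (d3 : (Fin Ns → S1) → (Fin Nc → Y3) → (Fin Ns → W3) → Fin Ns → S1) (k : Fin n)
    (y3 : Fin n → Y3) (w3 : Fin n → W3) : X3 :=
  x3 (forwardEst s0 d3 (blocks eC y3) (blocks eS w3) (eC.symm k).1) (eC.symm k).2

/-- Forward decoder of the relay. -/
def relayDecoder (d3 : (Fin Ns → S1) → (Fin Nc → Y3) → (Fin Ns → W3) → Fin Ns → S1)
    (y3 : Fin n → Y3) (w3 : Fin n → W3) : Fin n → S1 :=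
  (blocks eS).symm fun b => forwardEst s0 d3 (blocks eC y3) (blocks eS w3) b.succ

/-- Backward decoder of the destination. -/
def destinationDecoder (d : (Fin Ns → S1) → (Fin Nc → Y) → (Fin Ns → W) → Fin Ns → S1)
    (y : Fin n → Y) (w : Fin n → W) : Fin n → S1 :=
  (blocks eS).symm fun b => backwardEst s0 d (blocks eC y) (blocks eS w) b.castSucc

variable {eS eC s0}

theorem causalRelay_relayEncoder (heC : ∀ b j b' j', b < b' → eC (b, j) < eC (b', j'))
    (x3 : (Fin Ns → S1) → Fin Nc → X3)
    (d3 : (Fin Ns → S1) → (Fin Nc → Y3) → (Fin Ns → W3) → Fin Ns → S1) :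
    CausalRelay (relayEncoder eS eC s0 x3 d3) := by
  intro k y y' w hy
  rw [relayEncoder, relayEncoder, forwardEst_congr s0 d3 _ _ fun b hb => ?_]
  funext j
  exact hy _ (by simpa using heC b j _ (eC.symm k).2 hb)

theorem relayDecoder_eq {d3 : (Fin Ns → S1) → (Fin Nc → Y3) → (Fin Ns → W3) → Fin Ns → S1}
    {s : Fin n → S1} {y3 : Fin n → Y3} {w3 : Fin n → W3}
    (h : forwardEst s0 d3 (blocks eC y3) (blocks eS w3) = oldMsg s0 (blocks eS s)) :
    relayDecoder eS eC s0 d3 y3 w3 = s := by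
  simp only [relayDecoder, h, oldMsg_succ]
  exact (blocks eS).symm_apply_apply s

theorem destinationDecoder_eq {d : (Fin Ns → S1) → (Fin Nc → Y) → (Fin Ns → W) → Fin Ns → S1}
    {s : Fin n → S1} {y : Fin n → Y} {w : Fin n → W}
    (h : backwardEst s0 d (blocks eC y) (blocks eS w) = newMsg s0 (blocks eS s)) :
    destinationDecoder eS eC s0 d y w = s := by
  simp only [destinationDecoder, h, newMsg_castSucc]
  exact (blocks eS).symm_apply_apply s

end BlockCode

section GenieBound

theorem sum_arrow_prod {ι A B : Type*} [Fintype ι] [DecidableEq ι] [Fintype A] [Fintype B]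
    (F : (ι → A × B) → ℝ) : ∑ v, F v = ∑ a : ι → A, ∑ b : ι → B, F fun i => (a i, b i) := by
  rw [← Fintype.sum_prod_type']
  exact ((Equiv.arrowProdEquivProdArrow ι (fun _ => A) fun _ => B).symm.sum_comp F).symm

theorem prod_blocks {B n N : ℕ} (e : Fin B × Fin N ≃ Fin n) (F : Fin n → ℝ) :
    ∏ k, F k = ∏ b, ∏ j, F (e (b, j)) := by
  rw [← e.prod_comp, Fintype.prod_prod_type]

theorem isPmf_feedback {Z : Type*} [Fintype Z] [Nonempty Z] {n : ℕ}
    {κ : Fin n → (Fin n → Z) → Z → ℝ} (hκ : ∀ k z, IsPmf (κ k z))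
    (hcausal : ∀ k z z', (∀ j < k, z j = z' j) → κ k z = κ k z') :
    IsPmf fun z : Fin n → Z => ∏ k, κ k z (z k) := by
  refine ⟨fun z => Finset.prod_nonneg fun k _ => (hκ k z).1 _, ?_⟩
  induction n with
  | zero => simp
  | succ n ih =>
    let z0 : Fin (n + 1) → Z := fun _ => Classical.arbitrary Z
    have hzero : ∀ z, κ 0 z = κ 0 z0 := fun z =>
      hcausal 0 z z0 fun j hj => absurd hj (Fin.not_lt_zero j)
    have htail : ∀ a, ∑ z : Fin n → Z, ∏ k : Fin n, κ k.succ (Fin.cons a z) (z k) = 1 := fun a =>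
      ih (fun k z => hκ _ _) fun k z z' hz => hcausal _ _ _ fun j hj => by
        induction j using Fin.cases with
        | zero => rfl
        | succ j => simpa using hz j (Fin.succ_lt_succ_iff.1 hj)
    rw [← (Fin.consEquiv fun _ => Z).sum_comp, Fintype.sum_prod_type, ← (hκ 0 z0).2]
    refine Finset.sum_congr rfl fun a _ => ?_
    rw [← mul_one (κ 0 z0 a), ← htail a, Finset.mul_sum]
    exact Finset.sum_congr rfl fun z _ => by simp [Fin.consEquiv, Fin.prod_univ_succ, hzero]

variable {S1 W W3 X1 X3 Y Y3 : Type*} {n : ℕ}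

/-- Joint law of the source words and the channel output words of a code. -/
def crbcLaw (pSrc : S1 × W × W3 → ℝ) (Q : X1 × X3 → Y × Y3 → ℝ) (f1 : (Fin n → S1) → Fin n → X1)
    (f3 : Fin n → (Fin n → Y3) → (Fin n → W3) → X3) :
    (Fin n → S1 × W × W3) × (Fin n → Y × Y3) → ℝ :=
  compProd (prodLaw fun _ => pSrc) fun z v => ∏ k, Q (f1 (fun i => (z i).1) k,
    f3 k (fun i => (v i).2) fun i => (z i).2.2) (v k)

variable [Fintype S1] [Fintype W] [Fintype W3] [Fintype Y] [Fintype Y3]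
  {pSrc : S1 × W × W3 → ℝ} {Q : X1 × X3 → Y × Y3 → ℝ}

theorem isPmf_crbcLaw [Nonempty (Y × Y3)] (hSrc : IsPmf pSrc) (hQ : ∀ x, IsPmf (Q x))
    (f1 : (Fin n → S1) → Fin n → X1) {f3 : Fin n → (Fin n → Y3) → (Fin n → W3) → X3}
    (hf3 : CausalRelay f3) : IsPmf (crbcLaw pSrc Q f1 f3) :=
  (IsPmf.prodLaw fun _ => hSrc).compProd fun z => isPmf_feedback
    (κ := fun k v => Q (f1 (fun i => (z i).1) k, f3 k (fun i => (v i).2) fun i => (z i).2.2))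
    (fun _ _ => hQ _) fun k _ v' hv => by
      rw [hf3 k _ (fun i => (v' i).2) _ fun j hj => congrArg Prod.snd (hv j hj)]

theorem crbcErrProb_eq_prob [DecidableEq S1] (f1 : (Fin n → S1) → Fin n → X1)
    (f3 : Fin n → (Fin n → Y3) → (Fin n → W3) → X3)
    (g3 : (Fin n → Y3) → (Fin n → W3) → Fin n → S1)
    (g : (Fin n → Y) → (Fin n → W) → Fin n → S1) :
    crbcErrProb pSrc Q n f1 f3 g3 g = prob (crbcLaw pSrc Q f1 f3)
      {x | g (fun k => (x.2 k).1) (fun k => (x.1 k).2.1) ≠ (fun k => (x.1 k).1) ∨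
        g3 (fun k => (x.2 k).2) (fun k => (x.1 k).2.2) ≠ fun k => (x.1 k).1} := by
  simp only [crbcErrProb, prob, expect, Fintype.sum_prod_type, sum_arrow_prod, crbcLaw, compProd,
    prodLaw, Set.indicator_apply, Set.mem_ofPred_eq, Pi.one_apply, mul_ite, mul_one, mul_zero]

-- As long as the genie-aided decoders succeed, the relay sends what a genie-aided relay would, so
-- on that event the law of the code agrees with the law of genie-aided transmission.
theorem crbcErrProb_le_prob_genieSuccess_compl [DecidableEq S1] [Nonempty (Y × Y3)]
    (hSrc : IsPmf pSrc) (hQ : ∀ x, IsPmf (Q x)) {B Ns Nc : ℕ} (eS : Fin B × Fin Ns ≃ Fin n)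
    (eC : Fin (B + 1) × Fin Nc ≃ Fin n) (heC : ∀ b j b' j', b < b' → eC (b, j) < eC (b', j'))
    (s0 : Fin Ns → S1) (x1 : (Fin Ns → S1) → (Fin Ns → S1) → Fin Nc → X1)
    (x3 : (Fin Ns → S1) → Fin Nc → X3)
    (d3 : (Fin Ns → S1) → (Fin Nc → Y3) → (Fin Ns → W3) → Fin Ns → S1)
    (d : (Fin Ns → S1) → (Fin Nc → Y) → (Fin Ns → W) → Fin Ns → S1) :
    crbcErrProb pSrc Q n (blockEncoder eS eC s0 x1) (relayEncoder eS eC s0 x3 d3)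
        (relayDecoder eS eC s0 d3) (destinationDecoder eS eC s0 d) ≤
      prob (blockMarkovLaw (B := B) s0 (prodLaw fun _ => pSrc)
          (fun (z : Fin Ns → S1 × W × W3) j => (z j).1)
          fun s r => prodLaw fun j => Q (x1 s r j, x3 r j))
        (genieSuccess s0 (fun z j => (z j).1)
          (fun r v z => d3 r (fun j => (v j).2) fun j => (z j).2.2)
          fun s v z => d s (fun j => (v j).1) fun j => (z j).2.1)ᶜ := by
  classical
  set G := genieSuccess (B := B) s0 (fun (z : Fin Ns → S1 × W × W3) j => (z j).1)
    (fun r (v : Fin Nc → Y × Y3) z => d3 r (fun j => (v j).2) fun j => (z j).2.2)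
    fun s v z => d s (fun j => (v j).1) fun j => (z j).2.1
  set μ := crbcLaw pSrc Q (blockEncoder eS eC s0 x1) (relayEncoder eS eC s0 x3 d3)
  let Φ : (Fin n → S1 × W × W3) × (Fin n → Y × Y3) ≃ _ := (blocks eS).prodCongr (blocks eC)
  have hμ : IsPmf μ := isPmf_crbcLaw hSrc hQ _ (causalRelay_relayEncoder heC x3 d3)
  have hforward : ∀ x, Φ x ∈ G → forwardEst s0 d3 (blocks eC fun k => (x.2 k).2)
      (blocks eS fun k => (x.1 k).2.2) = oldMsg s0 (blocks eS fun k => (x.1 k).1) :=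
    fun x hx => forwardEst_eq_oldMsg fun b => (hx b).1
  have hbackward : ∀ x, Φ x ∈ G → backwardEst s0 d (blocks eC fun k => (x.2 k).1)
      (blocks eS fun k => (x.1 k).2.1) = newMsg s0 (blocks eS fun k => (x.1 k).1) :=
    fun x hx => backwardEst_eq_newMsg fun b => (hx b).2
  rw [crbcErrProb_eq_prob]
  calc _ ≤ prob μ (Φ ⁻¹' Gᶜ) := prob_mono hμ.nonneg fun x hx hG => hx.elim
        (fun h => h (destinationDecoder_eq (hbackward x hG)))
        fun h => h (relayDecoder_eq (hforward x hG))
    _ = prob (law μ Φ) Gᶜ := (prob_law μ Φ _).symm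
    _ = _ := prob_compl_eq_of_eqOn (hμ.law Φ) (isPmf_blockMarkovLaw
        (IsPmf.prodLaw fun _ => hSrc) (fun _ _ => IsPmf.prodLaw fun _ => hQ _) s0) ?_
  refine Φ.surjective.forall.2 fun x hx => ?_
  rw [law_equiv_apply]
  simp only [μ, crbcLaw, compProd, prodLaw]
  rw [prod_blocks eS, prod_blocks eC]
  simp only [blockEncoder, relayEncoder, hforward x hx, Equiv.symm_apply_apply]
  rfl

end GenieBound

section Tensorization

variable {Ω α β ι : Type*} [Fintype Ω] [Fintype α] [Fintype ι] [DecidableEq ι]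

section Source

variable [Fintype β] [DecidableEq α] [DecidableEq β]

theorem sourceMoment_law (μ : Ω → ℝ) (X : Ω → α) (Y : Ω → β) (t : ℝ) :
    sourceMoment (law μ fun ω => (X ω, Y ω)) t =
      expect μ fun ω => (law μ Y (Y ω) / law μ (fun ω => (X ω, Y ω)) (X ω, Y ω)) ^ t := by
  simp only [sourceMoment, law_law, expect_law]

theorem sourceMoment_law_prodLaw {μ : Ω → ℝ} (hμ : IsPmf μ) (X : Ω → α) (Y : Ω → β) (t : ℝ) :
    sourceMoment (law (prodLaw fun _ : ι => μ) fun z => (fun i => X (z i), fun i => Y (z i))) t =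
      sourceMoment (law μ fun ω => (X ω, Y ω)) t ^ Fintype.card ι := by
  have hratio : ∀ ω, 0 ≤ law μ Y (Y ω) / law μ (fun ω => (X ω, Y ω)) (X ω, Y ω) := fun ω =>
    div_nonneg ((hμ.law Y).1 _) ((hμ.law _).1 _)
  simp only [sourceMoment_law, law_prodLaw_pair, law_prodLaw _ fun _ : ι => Y]
  simp only [prodLaw, ← Finset.prod_div_distrib, ← Real.finsetProd_rpow _ _ fun _ _ => hratio _]
  exact (expect_prodLaw_prod _ fun _ ω =>
    (law μ Y (Y ω) / law μ (fun ω => (X ω, Y ω)) (X ω, Y ω)) ^ t).trans (Finset.prod_const _)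

end Source

theorem outputLaw_prodLaw (q : ι → Ω → ℝ) (V : ι → Ω → β → ℝ) :
    outputLaw (prodLaw q) (fun x => prodLaw fun i => V i (x i)) =
      prodLaw fun i => outputLaw (q i) (V i) :=
  funext fun z => expect_prodLaw_prod q fun i a => V i a (z i)

variable [Fintype β]

theorem channelMoment_prodLaw {q : ι → Ω → ℝ} {V : ι → Ω → β → ℝ} (hq : ∀ i, IsPmf (q i))
    (hV : ∀ i a, IsPmf (V i a)) (t : ℝ) :
    channelMoment (prodLaw q) (fun x => prodLaw fun i => V i (x i)) t =
      ∏ i, channelMoment (q i) (V i) t := by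
  have hratio : ∀ i a z, 0 ≤ outputLaw (q i) (V i) z / V i a z := fun i a z =>
    div_nonneg (outputLaw_nonneg (hq i).nonneg (fun a => (hV i a).nonneg) z) ((hV i a).1 z)
  have hprod : ∀ (x : ι → Ω) z, (prodLaw (fun i => outputLaw (q i) (V i)) z /
      prodLaw (fun i => V i (x i)) z) ^ t =
        ∏ i, (outputLaw (q i) (V i) (z i) / V i (x i) (z i)) ^ t := fun x z => by
    rw [prodLaw, prodLaw, ← Finset.prod_div_distrib,
      Real.finsetProd_rpow _ _ fun i _ => hratio i (x i) (z i)]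
  simp only [channelMoment, expect_compProd, outputLaw_prodLaw, hprod]
  rw [← expect_prodLaw_prod]
  exact congrArg _ (funext fun x => expect_prodLaw_prod (fun i => V i (x i)) fun i b =>
    (outputLaw (q i) (V i) b / V i (x i) b) ^ t)

theorem channelMoment_law [DecidableEq α] (μ : Ω → ℝ) (X : Ω → α) (V : α → β → ℝ) (t : ℝ) :
    channelMoment (law μ X) V t = channelMoment μ (fun ω => V (X ω)) t := by
  simp only [channelMoment, expect_compProd, expect_law, outputLaw_law]

variable {A3 A1 Z : Type*} [Fintype A3] [Fintype A1] [Fintype Z] {p : A3 → ℝ} {K : A3 → A1 → ℝ}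

theorem expect_channelMoment_prodLaw {V : A3 → A1 → Z → ℝ}
    (hK : ∀ x, IsPmf (K x)) (hV : ∀ x x1, IsPmf (V x x1)) (t : ℝ) :
    (expect (prodLaw fun _ : ι => p) fun x => channelMoment (prodLaw fun i => K (x i))
        (fun x1 => prodLaw fun i => V (x i) (x1 i)) t) =
      (expect p fun x => channelMoment (K x) (V x) t) ^ Fintype.card ι := by
  simp only [channelMoment_prodLaw (fun _ => hK _) fun _ => hV _]
  exact (expect_prodLaw_prod _ fun _ x => channelMoment (K x) (V x) t).trans
    (Finset.prod_const _)

theorem law_prodLaw_compProd [DecidableEq A3] [DecidableEq A1] (p : A3 → ℝ) (K : A3 → A1 → ℝ) :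
    law (prodLaw fun _ : ι => compProd p K) (fun z => (fun i => (z i).1, fun i => (z i).2)) =
      compProd (prodLaw fun _ => p) fun x => prodLaw fun i => K (x i) := by
  funext w
  rw [law_prodLaw_pair]
  simp only [compProd, prodLaw, ← Finset.prod_mul_distrib]
  exact Finset.prod_congr rfl fun i _ => law_equiv_apply (compProd p K) (Equiv.refl _) _

theorem channelMoment_compProd_prodLaw {V : A3 × A1 → Z → ℝ}
    (hp : IsPmf p) (hK : ∀ x, IsPmf (K x)) (hV : ∀ x, IsPmf (V x)) (t : ℝ) :
    channelMoment (compProd (prodLaw fun _ : ι => p) fun x => prodLaw fun i => K (x i))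
        (fun x => prodLaw fun i => V (x.1 i, x.2 i)) t =
      channelMoment (compProd p K) V t ^ Fintype.card ι := by
  classical
  rw [← law_prodLaw_compProd, channelMoment_law]
  exact (channelMoment_prodLaw (fun _ => hp.compProd hK) (fun _ => hV) t).trans
    (Finset.prod_const _)

end Tensorization

section SuperpositionCode

theorem errorProb_law {Ω O M U Z : Type*} [Fintype Ω] [Fintype O] [Fintype M] [Fintype U]
    [Fintype Z] [DecidableEq M] [DecidableEq U] [DecidableEq Z] (p : Ω → ℝ) (m : Ω → M)
    (u : Ω → U) (W : M → O → ℝ) (h : O → Z) (d : Z → U → M) :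
    errorProb (law p fun a => (m a, u a)) (fun s => law (W s) h) d =
      expect p fun a => prob (W (m a)) {o | d (h o) (u a) ≠ m a} := by
  simp only [errorProb, expect_law, prob_law]
  rfl

theorem exists_superposition_codebook {Ω M U3 U O Z3 Z A3 A1 : Type*} [Fintype Ω] [Fintype M]
    [Fintype U3] [Fintype U] [Fintype O] [Fintype Z3] [Fintype Z] [Fintype A3] [Fintype A1]
    [DecidableEq M] [DecidableEq U3] [DecidableEq U] [DecidableEq Z3] [DecidableEq Z]
    {p : Ω → ℝ} (hp : IsPmf p) (m : Ω → M) (u3 : Ω → U3)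
    (u : Ω → U) {q : A3 → ℝ} (hq : IsPmf q) {K : A3 → A1 → ℝ} (hK : ∀ x, IsPmf (K x))
    {W : A3 × A1 → O → ℝ} (hW : ∀ x, IsPmf (W x)) (h3 : O → Z3) (h : O → Z) (B : ℕ) (s0 : M)
    {τ3 τ t3 t : ℝ} (hτ3 : 0 < τ3) (hτ : 0 < τ) (ht3 : 0 ≤ t3) (ht : 0 ≤ t) :
    ∃ (C : M → A3 × (M → A1)) (d3 : M → Z3 → U3 → M) (d : M → Z → U → M),
      prob (blockMarkovLaw (B := B) s0 p m fun s r => W (superpositionCodeword C s r))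
          (genieSuccess s0 m (fun r o a => d3 r (h3 o) (u3 a)) fun s o a => d s (h o) (u a))ᶜ ≤
        B * (randomCodingBound τ3 t3 (sourceMoment (law p fun a => (m a, u3 a)) t3)
            (expect q fun x => channelMoment (K x) (fun x1 => law (W (x, x1)) h3) t3) +
          randomCodingBound τ t (sourceMoment (law p fun a => (m a, u a)) t)
            (channelMoment (compProd q K) (fun x => law (W x) h) t)) := by
  have : Nonempty M := ⟨s0⟩
  let T3 (C : M → A3 × (M → A1)) (r : M) : Z3 → U3 → M :=
    thresholdDecoder (law p fun a => (m a, u3 a))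
      (fun s => law (W (superpositionCodeword C s r)) h3)
      (outputLaw (K (C r).1) fun x1 => law (W ((C r).1, x1)) h3) τ3
  let T (C : M → A3 × (M → A1)) (s : M) : Z → U → M :=
    thresholdDecoder (law p fun a => (m a, u a))
      (fun r => law (W (superpositionCodeword C s r)) h)
      (outputLaw (compProd q K) fun x => law (W x) h) τ
  have hsatellite := fun r => expect_satellite_errorProb_le hq hK (fun x => (hW x).law h3)
    (hp.law fun a => (m a, u3 a)) hτ3 ht3 r
  have hcloud := fun s => expect_cloud_errorProb_le hq hK (fun x => (hW x).law h)
    (hp.law fun a => (m a, u a)) hτ ht s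
  simp only [errorProb_law] at hsatellite hcloud
  obtain ⟨C, hC⟩ := exists_prob_genieSuccess_compl_le (B := B)
    (IsPmf.prodLaw fun _ : M => isPmf_superpositionLaw (M := M) hq hK) hp
    (Q := fun C s r => W (superpositionCodeword C s r)) (fun _ _ _ => hW _) s0
    (fun C r o a => T3 C r (h3 o) (u3 a)) (fun C s o a => T C s (h o) (u a)) hsatellite hcloud
  exact ⟨C, T3 C, T C, hC⟩

theorem exists_superposition_code {S1 W W3 X1 X3 Y Y3 : Type*} [Fintype S1] [Fintype W]
    [Fintype W3] [Fintype X1] [Fintype X3] [Fintype Y] [Fintype Y3] [DecidableEq S1]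
    [DecidableEq W] [DecidableEq W3] [DecidableEq Y] [DecidableEq Y3] {pSrc : S1 × W × W3 → ℝ}
    (hSrc : IsPmf pSrc) {Q : X1 × X3 → Y × Y3 → ℝ} (hQ : ∀ x, IsPmf (Q x)) {p : X3 → ℝ}
    (hp : IsPmf p) {K : X3 → X1 → ℝ} (hK : ∀ x, IsPmf (K x)) {B Ns Nc n : ℕ}
    (eS : Fin B × Fin Ns ≃ Fin n) (eC : Fin (B + 1) × Fin Nc ≃ Fin n)
    (heC : ∀ b j b' j', b < b' → eC (b, j) < eC (b', j')) {τ3 τ t3 t : ℝ} (hτ3 : 0 < τ3)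
    (hτ : 0 < τ) (ht3 : 0 ≤ t3) (ht : 0 ≤ t) :
    ∃ (f1 : (Fin n → S1) → Fin n → X1) (f3 : Fin n → (Fin n → Y3) → (Fin n → W3) → X3)
      (g3 : (Fin n → Y3) → (Fin n → W3) → Fin n → S1)
      (g : (Fin n → Y) → (Fin n → W) → Fin n → S1),
      CausalRelay f3 ∧ crbcErrProb pSrc Q n f1 f3 g3 g ≤
        B * (randomCodingBound τ3 t3 (sourceMoment (law pSrc fun z => (z.1, z.2.2)) t3 ^ Ns)
            ((expect p fun x => channelMoment (K x) (fun x1 => law (Q (x1, x)) Prod.snd) t3) ^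
              Nc) +
          randomCodingBound τ t (sourceMoment (law pSrc fun z => (z.1, z.2.1)) t ^ Ns)
            (channelMoment (compProd p K) (fun x => law (Q x.swap) Prod.fst) t ^ Nc)) := by
  obtain ⟨x3⟩ := hp.nonempty
  obtain ⟨x1⟩ := (hK x3).nonempty
  have : Nonempty (Y × Y3) := (hQ (x1, x3)).nonempty
  obtain ⟨z0⟩ := hSrc.nonempty
  let s0 : Fin Ns → S1 := fun _ => z0.1
  obtain ⟨C, d3, d, hC⟩ := exists_superposition_codebook (IsPmf.prodLaw fun _ : Fin Ns => hSrc)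
    (fun z j => (z j).1) (fun z j => (z j).2.2) (fun z j => (z j).2.1)
    (IsPmf.prodLaw fun _ : Fin Nc => hp) (K := fun x => prodLaw fun j => K (x j))
    (fun x => IsPmf.prodLaw fun _ => hK _) (W := fun x => prodLaw fun j => Q (x.2 j, x.1 j))
    (fun x => IsPmf.prodLaw fun _ => hQ _) (fun v j => (v j).2) (fun v j => (v j).1) B s0
    hτ3 hτ ht3 ht
  refine ⟨_, _, _, _, causalRelay_relayEncoder heC _ _,
    (crbcErrProb_le_prob_genieSuccess_compl hSrc hQ eS eC heC s0
      (fun s r => (superpositionCodeword C s r).2) (fun r => (C r).1) d3 d).trans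
    (hC.trans_eq ?_)⟩
  have hsatellite := expect_channelMoment_prodLaw (ι := Fin Nc) (p := p)
    (V := fun x x1 => law (Q (x1, x)) Prod.snd) hK (fun x x1 => (hQ _).law _) t3
  have hcloud := channelMoment_compProd_prodLaw (ι := Fin Nc)
    (V := fun x => law (Q x.swap) Prod.fst) hp hK (fun x => (hQ _).law _) t
  rw [Fintype.card_fin] at hsatellite hcloud
  rw [← hsatellite, ← hcloud, sourceMoment_law_prodLaw hSrc Prod.fst fun z => z.2.2,
    sourceMoment_law_prodLaw hSrc Prod.fst fun z => z.2.1, Fintype.card_fin]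
  simp only [law_prodLaw _ fun _ : Fin Nc => (Prod.snd : Y × Y3 → Y3),
    law_prodLaw _ fun _ : Fin Nc => (Prod.fst : Y × Y3 → Y), Prod.swap]

end SuperpositionCode

section Entropy

variable {Ω α β γ : Type*} [Fintype Ω] [Fintype α] [DecidableEq α]

theorem entropyOf_eq_neg_expect (μ : Ω → ℝ) (X : Ω → α) :
    entropyOf μ X = -expect μ fun ω => Real.log (law μ X (X ω)) := by
  rw [← expect_law μ X fun a => Real.log (law μ X a), expect, ← Finset.sum_neg_distrib]
  exact Finset.sum_congr rfl fun a _ => neg_mul _ _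

theorem entropyOf_comp_injective [Fintype β] [DecidableEq β] (μ : Ω → ℝ) (X : Ω → α) {e : α → β}
    (he : e.Injective) : entropyOf μ (fun ω => e (X ω)) = entropyOf μ X := by
  simp only [entropyOf_eq_neg_expect, law_comp_injective μ X he]

variable [Fintype β] [DecidableEq β]

theorem entropyOf_law (μ : Ω → ℝ) (X : Ω → α) (Y : α → β) :
    entropyOf (law μ X) Y = entropyOf μ fun ω => Y (X ω) :=
  Finset.sum_congr rfl fun b _ => congrArg Real.negMulLog (congrFun (law_law μ X Y) b)

theorem condEntropyOf_eq_condEntropyOf_law (μ : Ω → ℝ) (X : Ω → α) (Y : Ω → β) :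
    condEntropyOf μ X Y = condEntropyOf (law μ fun ω => (X ω, Y ω)) Prod.fst Prod.snd := by
  simp only [condEntropyOf, entropyOf_law]

theorem mutualInfoOf_eq_mutualInfoOf_law (μ : Ω → ℝ) (X : Ω → α) (Y : Ω → β) :
    mutualInfoOf μ X Y = mutualInfoOf (law μ fun ω => (X ω, Y ω)) Prod.fst Prod.snd := by
  simp only [mutualInfoOf, entropyOf_law]

theorem mutualInfoOf_comp_injective_left [Fintype γ] [DecidableEq γ] (μ : Ω → ℝ) (X : Ω → α)
    (Y : Ω → β) {e : α → γ} (he : e.Injective) :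
    mutualInfoOf μ (fun ω => e (X ω)) Y = mutualInfoOf μ X Y := by
  have hpair := entropyOf_comp_injective μ (fun ω => (X ω, Y ω))
    (he.prodMap (Function.injective_id (α := β)))
  simp only [Prod.map_apply, id_eq] at hpair
  rw [mutualInfoOf, mutualInfoOf, entropyOf_comp_injective μ X he, hpair]

theorem entropyOf_fst_snd (P : α × β → ℝ) :
    entropyOf P (fun x => (x.1, x.2)) = -expect P fun x => Real.log (P x) := by
  rw [entropyOf_eq_neg_expect]
  exact congrArg (fun F => -expect P F)
    (funext fun x => congrArg Real.log (law_equiv_apply P (Equiv.refl _) x))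

section ChainRule

variable {p : Ω → ℝ} {κ : Ω → γ → ℝ} [DecidableEq Ω] [Fintype γ]

theorem entropyOf_compProd_snd_fst (hκ : ∀ ω, IsPmf (κ ω)) (X : γ → α) :
    entropyOf (compProd p κ) (fun x => (X x.2, x.1)) =
      entropyOf (compProd p κ) Prod.fst + expect p fun ω => entropyOf (κ ω) X := by
  have hlog : ∀ x, compProd p κ x ≠ 0 → Real.log (p x.1 * law (κ x.1) X (X x.2)) =
      Real.log (p x.1) + Real.log (law (κ x.1) X (X x.2)) := fun x hx =>
    Real.log_mul (left_ne_zero_of_mul hx)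
      (law_pos (hκ x.1).nonneg X (right_ne_zero_of_mul hx)).ne'
  simp only [entropyOf_eq_neg_expect, law_compProd_snd_fst, law_fst_compProd hκ]
  rw [expect_congr hlog, expect_add, neg_add, expect_compProd, expect_compProd]
  simp only [expect, mul_neg, Finset.sum_neg_distrib]

theorem condMutualInfoOf_compProd (hκ : ∀ ω, IsPmf (κ ω)) (X : γ → α) (Y : γ → β) :
    condMutualInfoOf (compProd p κ) (fun x => X x.2) (fun x => Y x.2) Prod.fst =
      expect p fun ω => mutualInfoOf (κ ω) X Y := by
  have hassoc := entropyOf_comp_injective (compProd p κ) (fun x => ((X x.2, Y x.2), x.1))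
    (Equiv.prodAssoc α β Ω).injective
  have hjoint := hassoc.trans (entropyOf_compProd_snd_fst hκ fun c => (X c, Y c))
  simp only [Equiv.prodAssoc_apply] at hjoint
  simp only [condMutualInfoOf, mutualInfoOf, entropyOf_compProd_snd_fst hκ, hjoint, expect,
    mul_sub, mul_add, Finset.sum_add_distrib, Finset.sum_sub_distrib]
  ring

end ChainRule

end Entropy

section MomentDerivatives

variable {Ω α β : Type*} [Fintype Ω] [Fintype α] [Fintype β]

theorem hasDerivAt_expect_rpow {μ r : Ω → ℝ} (hr : ∀ ω, μ ω ≠ 0 → 0 < r ω) :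
    HasDerivAt (fun t : ℝ => expect μ fun ω => r ω ^ t) (expect μ fun ω => Real.log (r ω)) 0 := by
  refine HasDerivAt.fun_sum fun ω _ => ?_
  rcases eq_or_ne (μ ω) 0 with h0 | h0
  · simpa [h0] using hasDerivAt_const (0 : ℝ) (0 : ℝ)
  · simpa using (Real.hasStrictDerivAt_const_rpow (hr ω h0) 0).hasDerivAt.const_mul (μ ω)

theorem hasDerivAt_sourceMoment [DecidableEq α] [DecidableEq β] {P : α × β → ℝ} (hP : IsPmf P) :
    HasDerivAt (sourceMoment P) (condEntropyOf P Prod.fst Prod.snd) 0 := by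
  have hpos : ∀ x, P x ≠ 0 → 0 < law P Prod.snd x.2 ∧ 0 < P x := fun x hx =>
    ⟨law_pos hP.nonneg Prod.snd hx, (hP.1 x).lt_of_ne' hx⟩
  refine (hasDerivAt_expect_rpow fun x hx => div_pos (hpos x hx).1 (hpos x hx).2).congr_deriv ?_
  have hlog : ∀ x, P x ≠ 0 → Real.log (law P Prod.snd x.2 / P x) =
      Real.log (law P Prod.snd x.2) + -1 * Real.log (P x) := fun x hx => by
    rw [Real.log_div (hpos x hx).1.ne' hx, neg_one_mul, sub_eq_add_neg]
  rw [condEntropyOf, entropyOf_fst_snd, entropyOf_eq_neg_expect, expect_congr hlog, expect_add,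
    expect_const_mul]
  ring

theorem hasDerivAt_channelMoment [DecidableEq α] [DecidableEq β] {q : α → ℝ} {V : α → β → ℝ}
    (hq : IsPmf q) (hV : ∀ a, IsPmf (V a)) :
    HasDerivAt (channelMoment q V) (-mutualInfoOf (compProd q V) Prod.fst Prod.snd) 0 := by
  have hq0 : ∀ x, compProd q V x ≠ 0 → q x.1 ≠ 0 := fun x hx => left_ne_zero_of_mul hx
  have hV0 : ∀ x, compProd q V x ≠ 0 → V x.1 x.2 ≠ 0 := fun x hx => right_ne_zero_of_mul hx
  have hT : ∀ x, compProd q V x ≠ 0 → 0 < outputLaw q V x.2 := fun x hx =>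
    outputLaw_pos hq.nonneg (fun a => (hV a).nonneg) hx
  refine (hasDerivAt_expect_rpow fun x hx =>
    div_pos (hT x hx) (((hV x.1).1 x.2).lt_of_ne' (hV0 x hx))).congr_deriv ?_
  have hlog : ∀ x, compProd q V x ≠ 0 → Real.log (outputLaw q V x.2 / V x.1 x.2) =
      Real.log (outputLaw q V x.2) + (Real.log (q x.1) + -1 * Real.log (compProd q V x)) :=
    fun x hx => by
      rw [Real.log_div (hT x hx).ne' (hV0 x hx), compProd, Real.log_mul (hq0 x hx) (hV0 x hx)]
      ring
  rw [mutualInfoOf, entropyOf_fst_snd, entropyOf_eq_neg_expect, entropyOf_eq_neg_expect,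
    law_fst_compProd hV, law_snd_compProd, expect_congr hlog, expect_add, expect_add,
    expect_const_mul]
  ring

theorem hasDerivAt_expect_channelMoment {Ω : Type*} [Fintype Ω] [DecidableEq Ω] [DecidableEq α]
    [DecidableEq β] {p : Ω → ℝ} {K : Ω → α → ℝ} {V : Ω → α → β → ℝ}
    (hK : ∀ ω, IsPmf (K ω)) (hV : ∀ ω a, IsPmf (V ω a)) :
    HasDerivAt (fun t => expect p fun ω => channelMoment (K ω) (V ω) t)
      (-condMutualInfoOf (compProd p fun ω => compProd (K ω) (V ω)) (fun x => x.2.1)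
        (fun x => x.2.2) Prod.fst) 0 := by
  have hderiv := HasDerivAt.fun_sum (u := Finset.univ) fun ω _ =>
    (hasDerivAt_channelMoment (hK ω) (hV ω)).const_mul (p ω)
  refine hderiv.congr_deriv ?_
  rw [condMutualInfoOf_compProd (fun ω => (hK ω).compProd (hV ω)) Prod.fst Prod.snd]
  simp only [expect, mul_neg, Finset.sum_neg_distrib]

end MomentDerivatives

section Exponent

open Filter Topology

section MomentValues

variable {α β : Type*} [Fintype α] [Fintype β]

theorem sourceMoment_zero [DecidableEq β] {P : α × β → ℝ} (hP : IsPmf P) :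
    sourceMoment P 0 = 1 := by
  simp only [sourceMoment, Real.rpow_zero, expect_const hP]

theorem sourceMoment_nonneg [DecidableEq β] {P : α × β → ℝ} (hP : IsPmf P) (t : ℝ) :
    0 ≤ sourceMoment P t :=
  expect_nonneg hP.nonneg fun _ => Real.rpow_nonneg (div_nonneg ((hP.law _).1 _) (hP.1 _)) t

variable {q : α → ℝ} {V : α → β → ℝ}

theorem channelMoment_zero (hq : IsPmf q) (hV : ∀ a, IsPmf (V a)) : channelMoment q V 0 = 1 := by
  simp only [channelMoment, Real.rpow_zero, expect_const (hq.compProd hV)]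

theorem channelMoment_nonneg (hq : IsPmf q) (hV : ∀ a, IsPmf (V a)) (t : ℝ) :
    0 ≤ channelMoment q V t :=
  expect_nonneg (hq.compProd hV).nonneg fun x => Real.rpow_nonneg
    (div_nonneg (outputLaw_nonneg hq.nonneg (fun a => (hV a).nonneg) x.2) ((hV x.1).1 x.2)) t

end MomentValues

theorem exists_gt_lt_of_hasDerivAt_neg {f : ℝ → ℝ} {f' x : ℝ} (hf : HasDerivAt f f' x)
    (hf' : f' < 0) : ∃ y, x < y ∧ f y < f x := by
  have hslope := (hasDerivWithinAt_iff_tendsto_slope' (Set.self_notMem_Ioi)).1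
    (hf.hasDerivWithinAt (s := Set.Ioi x))
  obtain ⟨y, hy, hxy⟩ := ((hslope.eventually_lt_const hf').and self_mem_nhdsWithin).exists
  exact ⟨y, hxy, (slope_neg_iff_of_le (le_of_lt hxy)).1 hy⟩

variable {k l : ℕ}

theorem tendsto_randomCodingBound {γ t a c : ℝ} (hγ : 0 < γ) (ha : 0 ≤ a) (hc : 0 ≤ c)
    (hlt : Real.exp (γ * t) * a ^ k * c ^ l < 1) :
    Tendsto (fun m : ℕ => randomCodingBound (Real.exp (γ * m)) t (a ^ (k * m)) (c ^ (l * m)))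
      atTop (𝓝 0) := by
  have hgeom : ∀ m : ℕ, randomCodingBound (Real.exp (γ * m)) t (a ^ (k * m)) (c ^ (l * m)) =
      (Real.exp (γ * t) * a ^ k * c ^ l) ^ m + Real.exp (-γ) ^ m := fun m => by
    rw [randomCodingBound, one_div, ← Real.exp_neg, ← Real.exp_mul, mul_pow, mul_pow, ← pow_mul,
      ← pow_mul, ← Real.exp_nat_mul, ← Real.exp_nat_mul]
    ring_nf
  simp only [hgeom]
  rw [← add_zero (0 : ℝ)]
  exact (tendsto_pow_atTop_nhds_zero_of_lt_one (by positivity) hlt).add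
    (tendsto_pow_atTop_nhds_zero_of_lt_one (Real.exp_pos _).le
      (Real.exp_lt_one_iff.2 (neg_neg_of_pos hγ)))

theorem exists_tendsto_randomCodingBound {a c : ℝ → ℝ} {H I : ℝ} (ha0 : a 0 = 1) (hc0 : c 0 = 1)
    (ha_nonneg : ∀ t, 0 ≤ a t) (hc_nonneg : ∀ t, 0 ≤ c t) (ha : HasDerivAt a H 0)
    (hc : HasDerivAt c (-I) 0) (hrate : k * H < l * I) :
    ∃ γ t : ℝ, 0 < t ∧ Tendsto (fun m : ℕ =>
      randomCodingBound (Real.exp (γ * m)) t (a t ^ (k * m)) (c t ^ (l * m))) atTop (𝓝 0) := by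
  obtain ⟨γ, hγ, hγlt⟩ : ∃ γ : ℝ, 0 < γ ∧ γ < l * I - k * H := exists_between (sub_pos.2 hrate)
  have hexp : HasDerivAt (fun t => Real.exp (γ * t)) γ 0 := by
    simpa using ((hasDerivAt_id (0 : ℝ)).const_mul γ).exp
  have hderiv : HasDerivAt (fun t => Real.exp (γ * t) * a t ^ k * c t ^ l)
      (γ + k * H - l * I) 0 := by
    refine ((hexp.mul (ha.pow k)).mul (hc.pow l)).congr_deriv ?_
    simp only [Pi.mul_apply, Pi.pow_apply, ha0, hc0, mul_zero, Real.exp_zero, one_pow, mul_one,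
      one_mul, mul_neg]
    ring
  obtain ⟨t, ht, hlt⟩ := exists_gt_lt_of_hasDerivAt_neg hderiv (by linarith)
  refine ⟨γ, t, ht, tendsto_randomCodingBound hγ (ha_nonneg t) (hc_nonneg t) ?_⟩
  simpa [ha0, hc0] using hlt

theorem exists_tendsto_randomCodingBound_channelMoment {M U A Z : Type*} [Fintype M] [Fintype U]
    [Fintype A] [Fintype Z] [DecidableEq M] [DecidableEq U] [DecidableEq A] [DecidableEq Z]
    {P : M × U → ℝ} (hP : IsPmf P) {q : A → ℝ} (hq : IsPmf q) {V : A → Z → ℝ}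
    (hV : ∀ a, IsPmf (V a))
    (hrate : k * condEntropyOf P Prod.fst Prod.snd <
      l * mutualInfoOf (compProd q V) Prod.fst Prod.snd) :
    ∃ γ t : ℝ, 0 < t ∧ Tendsto (fun m : ℕ => randomCodingBound (Real.exp (γ * m)) t
      (sourceMoment P t ^ (k * m)) (channelMoment q V t ^ (l * m))) atTop (𝓝 0) :=
  exists_tendsto_randomCodingBound (sourceMoment_zero hP) (channelMoment_zero hq hV)
    (sourceMoment_nonneg hP) (channelMoment_nonneg hq hV) (hasDerivAt_sourceMoment hP)
    (hasDerivAt_channelMoment hq hV) hrate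

theorem exists_tendsto_randomCodingBound_expect_channelMoment {Ω M U A Z : Type*} [Fintype Ω]
    [Fintype M] [Fintype U] [Fintype A] [Fintype Z] [DecidableEq Ω] [DecidableEq M]
    [DecidableEq U] [DecidableEq A] [DecidableEq Z] {P : M × U → ℝ} (hP : IsPmf P) {p : Ω → ℝ}
    (hp : IsPmf p) {K : Ω → A → ℝ} (hK : ∀ ω, IsPmf (K ω)) {V : Ω → A → Z → ℝ}
    (hV : ∀ ω a, IsPmf (V ω a))
    (hrate : k * condEntropyOf P Prod.fst Prod.snd <
      l * condMutualInfoOf (compProd p fun ω => compProd (K ω) (V ω)) (fun x => x.2.1)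
        (fun x => x.2.2) Prod.fst) :
    ∃ γ t : ℝ, 0 < t ∧ Tendsto (fun m : ℕ => randomCodingBound (Real.exp (γ * m)) t
      (sourceMoment P t ^ (k * m))
      ((expect p fun ω => channelMoment (K ω) (V ω) t) ^ (l * m))) atTop (𝓝 0) :=
  exists_tendsto_randomCodingBound (sourceMoment_zero hP)
    (by simp only [channelMoment_zero (hK _) (hV _), expect_const hp]) (sourceMoment_nonneg hP)
    (fun t => expect_nonneg hp.nonneg fun ω => channelMoment_nonneg (hK ω) (hV ω) t)
    (hasDerivAt_sourceMoment hP) (hasDerivAt_expect_channelMoment hK hV) hrate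

theorem eventually_succ_mul_lt_mul {H I : ℝ} (h : H < I) :
    ∀ᶠ B : ℕ in atTop, ((B + 1 : ℕ) : ℝ) * H < B * I := by
  filter_upwards [tendsto_natCast_atTop_atTop.eventually_gt_atTop (H / (I - H))] with B hB
  rw [div_lt_iff₀ (sub_pos.2 h)] at hB
  push_cast
  linarith

end Exponent

section SingleLetter

section Disintegration

variable {α β : Type*} [Fintype α] [Fintype β] {r : α × β → ℝ}

theorem exists_eq_compProd (hr : IsPmf r) :
    ∃ (q : α → ℝ) (K : α → β → ℝ), IsPmf q ∧ (∀ a, IsPmf (K a)) ∧ r = compProd q K := by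
  classical
  have hfst : ∀ a, law r Prod.fst a = ∑ b, r (a, b) := fun a => by
    simp [law, Fintype.sum_prod_type_right]
  refine ⟨law r Prod.fst, fun a b => if law r Prod.fst a = 0 then law r Prod.snd b else
    r (a, b) / law r Prod.fst a, hr.law _, fun a => ?_, funext fun x => ?_⟩
  · by_cases ha : law r Prod.fst a = 0
    · simpa only [ha, if_true] using hr.law Prod.snd
    · simp only [ha, if_false]
      exact ⟨fun b => div_nonneg (hr.1 _) ((hr.law _).1 a),
        by rw [← Finset.sum_div, ← hfst, div_self ha]⟩
  · rcases eq_or_ne (r x) 0 with hx | hx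
    · by_cases ha : law r Prod.fst x.1 = 0 <;> simp [compProd, ha, hx]
    · have ha := (law_pos hr.nonneg Prod.fst hx).ne'
      simp only [compProd, ha, if_false, mul_div_cancel₀ _ ha]

theorem exists_eq_law_swap_compProd [DecidableEq α] [DecidableEq β] (hr : IsPmf r) :
    ∃ (q : β → ℝ) (K : β → α → ℝ), IsPmf q ∧ (∀ b, IsPmf (K b)) ∧
      r = law (compProd q K) Prod.swap := by
  obtain ⟨q, K, hq, hK, hqK⟩ := exists_eq_compProd (hr.law Prod.swap)
  refine ⟨q, K, hq, hK, ?_⟩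
  rw [← hqK, law_law]
  exact funext fun x => (law_equiv_apply r (Equiv.refl _) x).symm

end Disintegration

variable {S1 W W3 X1 X3 Y Y3 : Type*} [Fintype S1] [Fintype W] [Fintype W3] [Fintype X1]
  [Fintype X3] [Fintype Y] [Fintype Y3] {pSrc : S1 × W × W3 → ℝ} {Q : X1 × X3 → Y × Y3 → ℝ}

theorem expect_crbcSepJoint (pSrc : S1 × W × W3 → ℝ) (Q : X1 × X3 → Y × Y3 → ℝ)
    (pX : X1 × X3 → ℝ) (F : S1 × W3 × W × X1 × X3 × Y3 × Y → ℝ) :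
    expect (crbcSepJoint pSrc Q pX) F = expect pSrc fun z => expect pX fun x =>
      expect (Q x) fun y => F (z.1, z.2.2, z.2.1, x.1, x.2, y.2, y.1) := by
  simp only [expect, crbcSepJoint, Fintype.sum_prod_type, Finset.mul_sum, mul_assoc]
  refine Finset.sum_congr rfl fun s _ => ?_
  rw [Finset.sum_comm]
  refine Finset.sum_congr rfl fun w _ => Finset.sum_congr rfl fun w3 _ =>
    Finset.sum_congr rfl fun x1 _ => Finset.sum_congr rfl fun x3 _ => Finset.sum_comm

theorem condEntropyOf_crbcSepJoint_relay [DecidableEq S1] [DecidableEq W3]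
    (hQ : ∀ x, IsPmf (Q x)) {pX : X1 × X3 → ℝ} (hX : IsPmf pX) :
    condEntropyOf (crbcSepJoint pSrc Q pX) (fun ω => ω.1) (fun ω => ω.2.1) =
      condEntropyOf (law pSrc fun z => (z.1, z.2.2)) Prod.fst Prod.snd := by
  rw [condEntropyOf_eq_condEntropyOf_law]
  refine congrArg (condEntropyOf · Prod.fst Prod.snd) (law_eq_of_expect fun F => ?_)
  simp only [expect_crbcSepJoint, expect_law, expect_const (hQ _), expect_const hX]

theorem condEntropyOf_crbcSepJoint_destination [DecidableEq S1] [DecidableEq W]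
    (hQ : ∀ x, IsPmf (Q x)) {pX : X1 × X3 → ℝ} (hX : IsPmf pX) :
    condEntropyOf (crbcSepJoint pSrc Q pX) (fun ω => ω.1) (fun ω => ω.2.2.1) =
      condEntropyOf (law pSrc fun z => (z.1, z.2.1)) Prod.fst Prod.snd := by
  rw [condEntropyOf_eq_condEntropyOf_law]
  refine congrArg (condEntropyOf · Prod.fst Prod.snd) (law_eq_of_expect fun F => ?_)
  simp only [expect_crbcSepJoint, expect_law, expect_const (hQ _), expect_const hX]

variable [DecidableEq X1] [DecidableEq X3]

theorem condMutualInfoOf_crbcSepJoint [DecidableEq Y3] (hSrc : IsPmf pSrc)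
    (p : X3 → ℝ) (K : X3 → X1 → ℝ) :
    condMutualInfoOf (crbcSepJoint pSrc Q (law (compProd p K) Prod.swap)) (fun ω => ω.2.2.2.1)
        (fun ω => ω.2.2.2.2.2.1) (fun ω => ω.2.2.2.2.1) =
      condMutualInfoOf (compProd p fun x => compProd (K x) fun x1 => law (Q (x1, x)) Prod.snd)
        (fun x => x.2.1) (fun x => x.2.2) Prod.fst := by
  have hlaw : law (crbcSepJoint pSrc Q (law (compProd p K) Prod.swap))
      (fun ω => (ω.2.2.2.2.1, ω.2.2.2.1, ω.2.2.2.2.2.1)) =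
        compProd p fun x => compProd (K x) fun x1 => law (Q (x1, x)) Prod.snd :=
    law_eq_of_expect fun F => by
      simp only [expect_crbcSepJoint, expect_law, expect_compProd, expect_const hSrc, Prod.swap]
  simp only [← hlaw, condMutualInfoOf, entropyOf_law]

theorem mutualInfoOf_crbcSepJoint [DecidableEq Y] (hSrc : IsPmf pSrc)
    (p : X3 → ℝ) (K : X3 → X1 → ℝ) :
    mutualInfoOf (crbcSepJoint pSrc Q (law (compProd p K) Prod.swap))
        (fun ω => (ω.2.2.2.1, ω.2.2.2.2.1)) (fun ω => ω.2.2.2.2.2.2) =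
      mutualInfoOf (compProd (compProd p K) fun x => law (Q x.swap) Prod.fst)
        Prod.fst Prod.snd := by
  have hlaw : law (crbcSepJoint pSrc Q (law (compProd p K) Prod.swap))
      (fun ω => ((ω.2.2.2.2.1, ω.2.2.2.1), ω.2.2.2.2.2.2)) =
        compProd (compProd p K) fun x => law (Q x.swap) Prod.fst :=
    law_eq_of_expect fun F => by
      simp only [expect_crbcSepJoint, expect_law, expect_compProd, expect_const hSrc, Prod.swap]
  rw [← hlaw, ← mutualInfoOf_eq_mutualInfoOf_law]
  have hswap := mutualInfoOf_comp_injective_left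
    (crbcSepJoint pSrc Q (law (compProd p K) Prod.swap))
    (fun ω => (ω.2.2.2.2.1, ω.2.2.2.1)) (fun ω => ω.2.2.2.2.2.2) Prod.swap_injective
  simpa only [Prod.swap_prod_mk] using hswap

end SingleLetter

theorem finProdFinEquiv_lt_of_fst_lt {m n : ℕ} {a b : Fin m × Fin n} (h : a.1 < b.1) :
    finProdFinEquiv a < finProdFinEquiv b := by
  rw [Fin.lt_def, finProdFinEquiv_apply_val, finProdFinEquiv_apply_val]
  have hmul : n * a.1 + n ≤ n * b.1 := Nat.mul_le_mul_left n (Fin.lt_def.1 h)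
  have hlt := a.2.isLt
  omega

/-- **Proposition A.1, achievability part** (optimal source-channel code for the CRBC):
if there is an input pmf `p(x1,x3)`, independent of the source, with
`H(S1|W3) < I(X1;Y3|X3)` and `H(S1|W) < I(X1,X3;Y)`, then the source can be reliably
transmitted over the DM CRBC. -/
theorem crbc_optimal_achievability
    {S1 W W3 X1 X3 Y Y3 : Type*}
    [Fintype S1] [Fintype W] [Fintype W3] [Fintype X1] [Fintype X3] [Fintype Y] [Fintype Y3]
    [DecidableEq S1] [DecidableEq W] [DecidableEq W3]
    [DecidableEq X1] [DecidableEq X3] [DecidableEq Y] [DecidableEq Y3]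
    (pSrc : S1 × W × W3 → ℝ) (hSrc : IsPmf pSrc)
    (Q : X1 × X3 → Y × Y3 → ℝ) (hQ : ∀ x, IsPmf (Q x))
    (h : ∃ pX : X1 × X3 → ℝ, IsPmf pX ∧
        (let μ := crbcSepJoint pSrc Q pX
        -- H(S1|W3) < I(X1;Y3|X3)
        (condEntropyOf μ (fun (s1,_,_,_,_,_,_) => s1) (fun (_,w3,_,_,_,_,_) => w3) <
          condMutualInfoOf μ (fun (_,_,_,x1,_,_,_) => x1)
            (fun (_,_,_,_,_,y3,_) => y3) (fun (_,_,_,_,x3,_,_) => x3)) ∧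
        -- H(S1|W) < I(X1,X3;Y)
        (condEntropyOf μ (fun (s1,_,_,_,_,_,_) => s1) (fun (_,_,w,_,_,_,_) => w) <
          mutualInfoOf μ (fun (_,_,_,x1,x3,_,_) => (x1, x3))
            (fun (_,_,_,_,_,_,y) => y)))) :
    CrbcReliablyTransmitted pSrc Q := by
  obtain ⟨pX, hX, hrelay, hdest⟩ := h
  obtain ⟨p, K, hp, hK, rfl⟩ := exists_eq_law_swap_compProd hX
  replace hrelay := (condEntropyOf_crbcSepJoint_relay hQ hX).symm.trans_lt
    (hrelay.trans_eq (condMutualInfoOf_crbcSepJoint hSrc p K))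
  replace hdest := (condEntropyOf_crbcSepJoint_destination hQ hX).symm.trans_lt
    (hdest.trans_eq (mutualInfoOf_crbcSepJoint hSrc p K))
  obtain ⟨B, ⟨hBrelay, hBdest⟩, hB⟩ := ((eventually_succ_mul_lt_mul hrelay).and
    (eventually_succ_mul_lt_mul hdest)).and (Filter.eventually_gt_atTop 0) |>.exists
  obtain ⟨γ3, t3, ht3, hlim3⟩ := exists_tendsto_randomCodingBound_expect_channelMoment
    (hSrc.law _) hp hK (fun x x1 => (hQ (x1, x)).law Prod.snd) hBrelay
  obtain ⟨γ, t, ht, hlim⟩ := exists_tendsto_randomCodingBound_channelMoment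
    (hSrc.law _) (hp.compProd hK) (fun x => (hQ x.swap).law Prod.fst) hBdest
  intro ε hε
  have hsum := (hlim3.add hlim).const_mul (B : ℝ)
  rw [add_zero, mul_zero] at hsum
  obtain ⟨m, hle, hm⟩ := ((hsum.eventually_le_const hε).and (Filter.eventually_gt_atTop 0)).exists
  obtain ⟨f1, f3, g3, g, hcausal, herr⟩ := exists_superposition_code hSrc hQ hp hK
    (B := B) (Ns := (B + 1) * m) (Nc := B * m) (finProdFinEquiv.trans (finCongr (by ring)))
    finProdFinEquiv (fun _ _ _ _ h => finProdFinEquiv_lt_of_fst_lt h)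
    (Real.exp_pos (γ3 * m)) (Real.exp_pos (γ * m)) ht3.le ht.le
  exact ⟨(B + 1) * (B * m), by positivity, f1, f3, g3, g, hcausal, herr.trans hle⟩
end

section
/- Specialization of Theorem 2 to the single-source case (Remark on the CRBC): A source S1 can be reliably transmitted over the discrete memoryless cooperative relay broadcast channel with relay side information W3 and receiver side information W if there exists a joint pmf factoring as p(s1, w3, w) · p(x1 | s1) · p(x3 | s1) · p(y3, y | x1, x3) such that H(S1 | W3) < I(X1; Y3 | X3, S1) and H(S1 | W) < I(X1, X3; Y | W). -/
open scoped BigOperators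

/-- The single-letter joint distribution `p(s1,w3,w) p(x1|s1) p(x3|s1) p(y3,y|x1,x3)` of
the single-source specialization of Theorem 2. -/
noncomputable def crbcCpmJoint {S1 W W3 X1 X3 Y Y3 : Type*}
    (pSrc : S1 × W × W3 → ℝ) (Q : X1 × X3 → Y × Y3 → ℝ)
    (pX1 : S1 → X1 → ℝ) (pX3 : S1 → X3 → ℝ) :
    S1 × W3 × W × X1 × X3 × Y3 × Y → ℝ :=
  fun (s1, w3, w, x1, x3, y3, y) =>
    pSrc (s1, w, w3) * pX1 s1 x1 * pX3 s1 x3 * Q (x1, x3) (y, y3)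

/-!
The code is a block-Markov random code. Each source block is the state of one channel block: in a
block the relay sends a codeword determined by the current state, and the transmitter sends a
codeword determined by the current and the next state. The relay decodes forward: it knows the
current state and learns the next one from `Y3` and `W3`. The destination decodes backward: it knows
the next state and learns the current one from `Y` and `W`.

With maximum a posteriori decoding, Gallager's bound controls the averaged error probability of each
decoder by a function of a parameter `0 ≤ ρ ≤ 1`. On memoryless blocks this function is a product of
single-letter functions which equal `1` at `ρ = 0` and whose slopes there add up to
`H(S1 | W3) - I(X1; Y3 | X3, S1)` at the relay and to `H(S1 | W) - I(X1, X3; Y | W)` at the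
destination. If both are negative, a small `ρ > 0` makes the error decay exponentially in the block
length. Codewords are drawn conditionally on the source block itself, so there is no separate source
code, and the cost of the one extra channel block is absorbed by taking many blocks.
-/

/-! ### Finite probability mass functions -/

section Pmf

variable {ι α β : Type*} [Fintype α]

lemma IsPmf.nonempty_s5 {p : α → ℝ} (hp : IsPmf p) : Nonempty α := by
  by_contra h
  rw [not_nonempty_iff] at h
  simpa using hp.2

lemma IsPmf.exists_le_of_sum_mul_le {p f : α → ℝ} {c : ℝ} (hp : IsPmf p)
    (h : ∑ a, p a * f a ≤ c) : ∃ a, f a ≤ c := by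
  by_contra! hf
  obtain ⟨a, -, ha⟩ : ∃ a ∈ Finset.univ, 0 < p a := by
    by_contra! h0
    have := Finset.sum_nonpos h0
    linarith [hp.2]
  have hlt : ∑ a, p a * c < ∑ a, p a * f a :=
    Finset.sum_lt_sum (fun a _ => mul_le_mul_of_nonneg_left (hf a).le (hp.1 a))
      ⟨a, Finset.mem_univ a, mul_lt_mul_of_pos_left (hf a) ha⟩
  rw [← Finset.sum_mul, hp.2, one_mul] at hlt
  exact hlt.not_ge h

lemma IsPmf.mul_kernel [Fintype β] {p : α → ℝ} (hp : IsPmf p) {k : α → β → ℝ}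
    (hk : ∀ a, IsPmf (k a)) : IsPmf fun x : α × β => p x.1 * k x.1 x.2 := by
  refine ⟨fun x => mul_nonneg (hp.1 _) ((hk _).1 _), ?_⟩
  simp only [Fintype.sum_prod_type, ← Finset.mul_sum, (hk _).2, mul_one, hp.2]

/-- `m` is the law of `X` under `μ`, as a change of variables formula. -/
def IsLaw (μ : α → ℝ) (X : α → β) [Fintype β] (m : β → ℝ) : Prop :=
  ∀ f : β → ℝ, ∑ a, μ a * f (X a) = ∑ b, m b * f b

variable [Fintype ι] [DecidableEq ι]

lemma sum_pi_prod (f : ι → α → ℝ) : ∑ x : ι → α, ∏ i, f i (x i) = ∏ i, ∑ a, f i a := by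
  rw [Finset.prod_univ_sum, Fintype.piFinset_univ]

lemma isPmf_pi {p : ι → α → ℝ} (hp : ∀ i, IsPmf (p i)) :
    IsPmf fun x : ι → α => ∏ i, p i (x i) := by
  refine ⟨fun x => Finset.prod_nonneg fun i _ => (hp i).1 _, ?_⟩
  rw [sum_pi_prod]
  exact Finset.prod_eq_one fun i _ => (hp i).2

lemma sum_pi_prod_update {p : ι → α → ℝ} {i : ι} (hp : ∑ a, p i a = 1) (f : (ι → α) → ℝ) :
    ∑ x : ι → α, (∏ k, p k (x k)) * ∑ a, p i a * f (Function.update x i a) =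
      ∑ x : ι → α, (∏ k, p k (x k)) * f x := by
  let e := (Equiv.funSplitAt i α).symm
  have hprod (a : α) (r : {j // j ≠ i} → α) :
      ∏ k, p k (e (a, r) k) = p i a * ∏ j : {j // j ≠ i}, p j (r j) := by
    rw [Fintype.prod_eq_mul_prod_subtype_ne _ i]
    congr 1
    · simp [e]
    · exact Finset.prod_congr rfl fun j _ => by simp [e, j.2]
  have hupdate (a b : α) (r : {j // j ≠ i} → α) :
      Function.update (e (b, r)) i a = e (a, r) := by
    ext j
    by_cases hj : j = i <;> simp [e, hj]
  rw [← e.sum_comp, ← e.sum_comp (fun x => (∏ k, p k (x k)) * f x), Fintype.sum_prod_type,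
    Fintype.sum_prod_type]
  simp only [hprod, hupdate, mul_assoc, ← Finset.mul_sum]
  rw [← Finset.sum_mul, hp, one_mul]
  simp only [Finset.mul_sum]
  rw [Finset.sum_comm]
  exact Finset.sum_congr rfl fun _ _ => Finset.sum_congr rfl fun _ _ => by ring

lemma sum_pi_prod_mul {p : ι → α → ℝ} (hp : ∀ i, IsPmf (p i)) (i : ι) (f : α → ℝ) :
    ∑ x : ι → α, (∏ k, p k (x k)) * f (x i) = ∑ a, p i a * f a := by
  rw [← sum_pi_prod_update (hp i).2]
  simp only [Function.update_self, ← Finset.sum_mul, (isPmf_pi hp).2, one_mul]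

lemma sum_pi_prod_mul₂ {p : ι → α → ℝ} (hp : ∀ i, IsPmf (p i)) {i j : ι} (hij : i ≠ j)
    (f : α → α → ℝ) :
    ∑ x : ι → α, (∏ k, p k (x k)) * f (x i) (x j) = ∑ a, p i a * ∑ b, p j b * f a b := by
  rw [← sum_pi_prod_update (hp i).2]
  simp only [Function.update_self, Function.update_of_ne hij.symm]
  rw [sum_pi_prod_mul hp j fun b => ∑ a, p i a * f a b]
  simp only [Finset.mul_sum]
  rw [Finset.sum_comm]
  exact Finset.sum_congr rfl fun _ _ => Finset.sum_congr rfl fun _ _ => by ring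

end Pmf

/-! ### Maximum a posteriori decoding of a random codebook -/

section MapDecoding

variable {A C O : Type*}

/-- A maximizer of `u`: the maximum a posteriori decision when `u` is the posterior. -/
noncomputable def argMax [Finite A] [Nonempty A] (u : A → ℝ) : A :=
  (Finite.exists_max u).choose

lemma le_argMax [Finite A] [Nonempty A] (u : A → ℝ) (a : A) : u a ≤ u (argMax u) :=
  (Finite.exists_max u).choose_spec a

open Classical in
/-- Indicator of an event, the form in which error events enter expectations. -/
noncomputable def indic (E : Prop) : ℝ := if E then 1 else 0

lemma indic_nonneg (E : Prop) : 0 ≤ indic E := by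
  unfold indic; split_ifs <;> norm_num

lemma indic_le_one (E : Prop) : indic E ≤ 1 := by
  unfold indic; split_ifs <;> norm_num

/-- Error probability of maximum a posteriori decoding of a message in `A` from an observation
in `O`, where `m` is the joint pmf of the message and the observation. -/
noncomputable def mapErr [Fintype A] [Nonempty A] [Fintype O] (m : A → O → ℝ) : ℝ :=
  ∑ a, ∑ o, m a o * indic (argMax (fun a' => m a' o) ≠ a)

/-- Gallager's function: if the `κ`-random codeword `t` yields the observation `o` with weight
`m t o`, every summand multiplies the probability of a pair by `(D / m t o) ^ ρ`, where `D` is the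
total mass of `o`. Its derivative at `ρ = 0` is a difference of entropies. -/
noncomputable def gallager {T : Type*} [Fintype T] [Fintype O] (κ : T → ℝ) (m : T → O → ℝ)
    (ρ : ℝ) : ℝ :=
  ∑ t, ∑ o, κ t * m t o * ((∑ t', κ t' * m t' o) / m t o) ^ ρ

lemma min_le_mul_div_rpow {u D ρ : ℝ} (hu : 0 ≤ u) (hD : 0 ≤ D) (hρ₀ : 0 ≤ ρ) (hρ₁ : ρ ≤ 1) :
    min u D ≤ u * (D / u) ^ ρ := by
  rcases hu.eq_or_lt with rfl | hu
  · simp [hD]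
  rcases le_total u D with h | h
  · calc min u D ≤ u * 1 := by simp
      _ ≤ u * (D / u) ^ ρ := by
        gcongr
        exact Real.one_le_rpow ((one_le_div hu).2 h) hρ₀
  · calc min u D ≤ u * (D / u) := by rw [mul_div_cancel₀ _ hu.ne']; exact min_le_right _ _
      _ ≤ u * (D / u) ^ ρ := by
        gcongr
        exact Real.self_le_rpow_of_le_one (by positivity) ((div_le_one hu).2 h) hρ₁

lemma mul_indic_argMax_ne_le [Fintype A] [DecidableEq A] [Nonempty A] {u : A → ℝ}
    (hu : ∀ a, 0 ≤ u a) (a : A) :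
    u a * indic (argMax u ≠ a) ≤ ∑ a' ∈ Finset.univ.erase a, u a' := by
  have hsum : ∀ a' ∈ Finset.univ.erase a, 0 ≤ u a' := fun a' _ => hu a'
  by_cases h : argMax u ≠ a
  · rw [indic, if_pos h, mul_one]
    exact (le_argMax u a).trans
      (Finset.single_le_sum hsum (Finset.mem_erase.2 ⟨h, Finset.mem_univ _⟩))
  · rw [indic, if_neg h, mul_zero]
    exact Finset.sum_nonneg hsum

variable [Fintype A] [Nonempty A] [Fintype C] {κ : A → C → ℝ}

lemma sum_codebook_mul_indic_le [DecidableEq A] (hκ : ∀ a, IsPmf (κ a)) {u : A → C → ℝ}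
    (hu : ∀ a c, 0 ≤ u a c) (a : A) {ρ : ℝ} (hρ₀ : 0 ≤ ρ) (hρ₁ : ρ ≤ 1) :
    ∑ x : A → C, (∏ a, κ a (x a)) * (u a (x a) * indic (argMax (fun a' => u a' (x a')) ≠ a)) ≤
      ∑ c, κ a c * (u a c * ((∑ a', ∑ c', κ a' c' * u a' c') / u a c) ^ ρ) := by
  have hpmf := isPmf_pi hκ
  have hmass (a' : A) : 0 ≤ ∑ c', κ a' c' * u a' c' :=
    Finset.sum_nonneg fun c' _ => mul_nonneg ((hκ a').1 c') (hu a' c')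
  rw [← sum_pi_prod_update (hκ a).2]
  simp only [Finset.mul_sum (s := (Finset.univ : Finset C)), mul_left_comm _ (κ a _)]
  rw [Finset.sum_comm]
  simp only [← Finset.mul_sum, Function.update_self]
  gcongr with c
  · exact (hκ a).1 c
  refine le_trans (le_min ?_ ?_) (min_le_mul_div_rpow (hu a c)
    (Finset.sum_nonneg fun a' _ => hmass a') hρ₀ hρ₁)
  · calc _ ≤ ∑ x : A → C, (∏ a, κ a (x a)) * u a c := Finset.sum_le_sum fun x _ =>
          mul_le_mul_of_nonneg_left (mul_le_of_le_one_right (hu a c) (indic_le_one _)) (hpmf.1 x)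
      _ = u a c := by rw [← Finset.sum_mul, hpmf.2, one_mul]
  · calc _ ≤ ∑ x : A → C, (∏ a, κ a (x a)) * ∑ a' ∈ Finset.univ.erase a, u a' (x a') := by
          refine Finset.sum_le_sum fun x _ => mul_le_mul_of_nonneg_left ?_ (hpmf.1 x)
          have h := mul_indic_argMax_ne_le (fun a' => hu a' (Function.update x a c a')) a
          rw [Function.update_self] at h
          refine h.trans_eq (Finset.sum_congr rfl fun a' ha' => ?_)
          rw [Function.update_of_ne (Finset.ne_of_mem_erase ha')]
      _ = ∑ a' ∈ Finset.univ.erase a, ∑ c', κ a' c' * u a' c' := by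
          simp only [Finset.mul_sum]
          rw [Finset.sum_comm]
          exact Finset.sum_congr rfl fun a' _ => sum_pi_prod_mul hκ a' (u a')
      _ ≤ ∑ a', ∑ c', κ a' c' * u a' c' :=
          Finset.sum_le_sum_of_subset_of_nonneg (Finset.erase_subset _ _) fun _ _ _ => hmass _

/-- Gallager's random coding bound: given the codeword of the message `a` and the observation, the
union bound and the trivial bound `1` on the error probability are interpolated geometrically. -/
theorem sum_codebook_mul_mapErr_le [DecidableEq A] [Fintype O] (hκ : ∀ a, IsPmf (κ a))
    {m : A → C → O → ℝ} (hm : ∀ a c o, 0 ≤ m a c o) {ρ : ℝ} (hρ₀ : 0 ≤ ρ) (hρ₁ : ρ ≤ 1) :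
    ∑ x : A → C, (∏ a, κ a (x a)) * mapErr (fun a => m a (x a)) ≤
      gallager (fun t : A × C => κ t.1 t.2) (fun t => m t.1 t.2) ρ := by
  calc _ = ∑ a, ∑ o, ∑ x : A → C, (∏ a, κ a (x a)) *
        (m a (x a) o * indic (argMax (fun a' => m a' (x a') o) ≠ a)) := by
        simp only [mapErr, Finset.mul_sum]
        rw [Finset.sum_comm]
        exact Finset.sum_congr rfl fun a _ => Finset.sum_comm
    _ ≤ ∑ a, ∑ o, ∑ c, κ a c *
          (m a c o * ((∑ a', ∑ c', κ a' c' * m a' c' o) / m a c o) ^ ρ) := by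
        gcongr with a _ o
        exact sum_codebook_mul_indic_le hκ (fun a c => hm a c o) a hρ₀ hρ₁
    _ = _ := by
        simp only [gallager, Fintype.sum_prod_type, mul_assoc]
        exact Finset.sum_congr rfl fun a _ => Finset.sum_comm

end MapDecoding

/-! ### Calculus of Gallager's function -/

section Gallager

variable {T T' O O' : Type*} [Fintype T] [Fintype T'] [Fintype O] [Fintype O']
  {κ : T → ℝ} {m : T → O → ℝ}

lemma gallager_nonneg (hκ : ∀ t, 0 ≤ κ t) (hm : ∀ t o, 0 ≤ m t o) (ρ : ℝ) :
    0 ≤ gallager κ m ρ :=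
  Finset.sum_nonneg fun t _ => Finset.sum_nonneg fun o _ =>
    mul_nonneg (mul_nonneg (hκ t) (hm t o)) <| Real.rpow_nonneg (div_nonneg
      (Finset.sum_nonneg fun t' _ => mul_nonneg (hκ t') (hm t' o)) (hm t o)) ρ

lemma gallager_zero (κ : T → ℝ) (m : T → O → ℝ) : gallager κ m 0 = ∑ t, ∑ o, κ t * m t o := by
  simp [gallager]

/-- The slope of Gallager's function at `ρ = 0`, with `0 * log (x / 0) = 0`. -/
noncomputable def gallagerSlope (κ : T → ℝ) (m : T → O → ℝ) : ℝ :=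
  ∑ t, ∑ o, κ t * m t o * Real.log ((∑ t', κ t' * m t' o) / m t o)

lemma hasDerivAt_const_mul_rpow {c r : ℝ} (h : c ≠ 0 → 0 < r) :
    HasDerivAt (fun ρ : ℝ => c * r ^ ρ) (c * Real.log r) 0 := by
  rcases eq_or_ne c 0 with rfl | hc
  · simpa using hasDerivAt_const (0 : ℝ) (0 : ℝ)
  · simpa using ((hasDerivAt_id (0 : ℝ)).const_rpow (h hc)).const_mul c

lemma hasDerivAt_gallager (hκ : ∀ t, 0 ≤ κ t) (hm : ∀ t o, 0 ≤ m t o) :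
    HasDerivAt (gallager κ m) (gallagerSlope κ m) 0 := by
  refine HasDerivAt.fun_sum fun t _ => HasDerivAt.fun_sum fun o _ =>
    hasDerivAt_const_mul_rpow fun hc => ?_
  have hpos : 0 < κ t * m t o := (mul_nonneg (hκ t) (hm t o)).lt_of_ne' hc
  have hle : κ t * m t o ≤ ∑ t', κ t' * m t' o := Finset.single_le_sum
    (f := fun t' => κ t' * m t' o) (fun t' _ => mul_nonneg (hκ t') (hm t' o)) (Finset.mem_univ t)
  exact div_pos (hpos.trans_le hle) (pos_of_mul_pos_right hpos (hκ t))

lemma IsLaw.gallager_comp {X : T → T'} {κ' : T' → ℝ} (h : IsLaw κ X κ') (m : T' → O → ℝ) (ρ : ℝ) :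
    gallager κ (fun t => m (X t)) ρ = gallager κ' m ρ := by
  have hD (o : O) : ∑ t, κ t * m (X t) o = ∑ t, κ' t * m t o := h fun t => m t o
  simp only [gallager, hD, mul_assoc, ← Finset.mul_sum]
  exact h fun t => ∑ o, m t o * ((∑ t', κ' t' * m t' o) / m t o) ^ ρ

lemma gallager_comp_equiv (e : O' ≃ O) (ρ : ℝ) :
    gallager κ (fun t o => m t (e o)) ρ = gallager κ m ρ :=
  Finset.sum_congr rfl fun t _ =>
    e.sum_comp fun o => κ t * m t o * ((∑ t', κ t' * m t' o) / m t o) ^ ρ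

lemma gallager_mul {κ' : T' → ℝ} {m' : T' → O' → ℝ} (hκ : ∀ t, 0 ≤ κ t) (hm : ∀ t o, 0 ≤ m t o)
    (hκ' : ∀ t, 0 ≤ κ' t) (hm' : ∀ t o, 0 ≤ m' t o) (ρ : ℝ) :
    gallager (fun t : T × T' => κ t.1 * κ' t.2)
        (fun t (o : O × O') => m t.1 o.1 * m' t.2 o.2) ρ =
      gallager κ m ρ * gallager κ' m' ρ := by
  have hsplit (t : T × T') (o : O × O') :
      (∑ s : T × T', κ s.1 * κ' s.2 * (m s.1 o.1 * m' s.2 o.2)) / (m t.1 o.1 * m' t.2 o.2) =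
        (∑ s, κ s * m s o.1) / m t.1 o.1 * ((∑ s, κ' s * m' s o.2) / m' t.2 o.2) := by
    rw [Fintype.sum_prod_type, div_mul_div_comm, Finset.sum_mul_sum]
    simp only [mul_mul_mul_comm]
  have hD (t o) : 0 ≤ (∑ s, κ s * m s o) / m t o :=
    div_nonneg (Finset.sum_nonneg fun s _ => mul_nonneg (hκ s) (hm s o)) (hm t o)
  have hD' (t o) : 0 ≤ (∑ s, κ' s * m' s o) / m' t o :=
    div_nonneg (Finset.sum_nonneg fun s _ => mul_nonneg (hκ' s) (hm' s o)) (hm' t o)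
  simp only [gallager, hsplit, Real.mul_rpow (hD _ _) (hD' _ _)]
  simp only [Fintype.sum_prod_type, Finset.sum_mul_sum]
  refine Finset.sum_congr rfl fun t _ => Finset.sum_congr rfl fun t' _ =>
    Finset.sum_congr rfl fun o _ => Finset.sum_congr rfl fun o' _ => ?_
  ring

lemma gallager_pi {ι : Type*} [Fintype ι] [DecidableEq ι] {κ : ι → T → ℝ} {m : ι → T → O → ℝ}
    (hκ : ∀ i t, 0 ≤ κ i t) (hm : ∀ i t o, 0 ≤ m i t o) (ρ : ℝ) :
    gallager (fun t : ι → T => ∏ i, κ i (t i)) (fun t (o : ι → O) => ∏ i, m i (t i) (o i)) ρ =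
      ∏ i, gallager (κ i) (m i) ρ := by
  simp only [gallager, ← Finset.prod_mul_distrib]
  have hterm (t : ι → T) (o : ι → O) : (∏ i, κ i (t i) * m i (t i) (o i)) *
      ((∑ s : ι → T, ∏ i, κ i (s i) * m i (s i) (o i)) / ∏ i, m i (t i) (o i)) ^ ρ =
      ∏ i, κ i (t i) * m i (t i) (o i) *
        ((∑ s, κ i s * m i s (o i)) / m i (t i) (o i)) ^ ρ := by
    rw [sum_pi_prod fun i s => κ i s * m i s (o i), ← Finset.prod_div_distrib,
      ← Real.finsetProd_rpow _ _ fun i _ => div_nonneg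
        (Finset.sum_nonneg fun s _ => mul_nonneg (hκ i s) (hm i s (o i))) (hm i _ _),
      Finset.prod_mul_distrib (f := fun i => κ i (t i) * m i (t i) (o i))]
  simp only [hterm, ← sum_pi_prod]

end Gallager

/-! ### Entropies of finitely supported laws -/

section Entropy

variable {Ω α β γ : Type*} [Fintype Ω] [Fintype α] [Fintype β] [Fintype γ] {μ : Ω → ℝ}

lemma IsLaw.pos {X : Ω → α} {m : α → ℝ} (h : IsLaw μ X m) (hμ : ∀ ω, 0 ≤ μ ω) {ω : Ω}
    (hω : μ ω ≠ 0) : 0 < m (X ω) := by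
  classical
  have hm := h fun a => if a = X ω then 1 else 0
  simp only [mul_ite, mul_one, mul_zero, Finset.sum_ite_eq', Finset.mem_univ, if_true] at hm
  rw [← hm]
  refine Finset.sum_pos' (fun ω' _ => ?_) ⟨ω, Finset.mem_univ ω, ?_⟩
  · split_ifs
    exacts [hμ ω', le_rfl]
  · simpa using (hμ ω).lt_of_ne' hω

lemma IsLaw.snd {X : Ω → α} {Y : Ω → β} {m : α × β → ℝ} (h : IsLaw μ (fun ω => (X ω, Y ω)) m) :
    IsLaw μ Y fun b => ∑ a, m (a, b) := fun f => by
  rw [h fun x => f x.2, Fintype.sum_prod_type_right]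
  simp only [Finset.sum_mul]

variable [DecidableEq α] [DecidableEq β] [DecidableEq γ]

lemma IsLaw.entropyOf_eq {X : Ω → α} {m : α → ℝ} (h : IsLaw μ X m) :
    entropyOf μ X = -∑ ω, μ ω * Real.log (m (X ω)) := by
  have hm (a : α) : (∑ ω, if X ω = a then μ ω else 0) = m a := by
    simpa using h fun b => if b = a then 1 else 0
  rw [h fun a => Real.log (m a)]
  simp only [entropyOf, hm, Real.negMulLog, neg_mul, Finset.sum_neg_distrib]

lemma IsLaw.condEntropyOf_eq {X : Ω → α} {Y : Ω → β} {m : α × β → ℝ}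
    (h : IsLaw μ (fun ω => (X ω, Y ω)) m) (hμ : ∀ ω, 0 ≤ μ ω) :
    condEntropyOf μ X Y =
      ∑ ω, μ ω * Real.log ((∑ a, m (a, Y ω)) / m (X ω, Y ω)) := by
  rw [condEntropyOf, h.entropyOf_eq, h.snd.entropyOf_eq, neg_sub_neg, ← Finset.sum_sub_distrib]
  refine Finset.sum_congr rfl fun ω _ => ?_
  by_cases hω : μ ω = 0
  · simp [hω]
  · rw [Real.log_div (h.snd.pos hμ hω).ne' (h.pos hμ hω).ne', mul_sub]

/-- If `Y` is the output of the channel `L` with input `X` and state `Z`, where `r` is the law of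
`(X, Z)`, then `I(X ; Y | Z)` compares the channel with its mixture over the inputs. -/
lemma IsLaw.condMutualInfoOf_eq {X : Ω → α} {Y : Ω → β} {Z : Ω → γ} {r : α → γ → ℝ}
    {L : α → γ → β → ℝ} (h : IsLaw μ (fun ω => (X ω, Y ω, Z ω)) fun x =>
      r x.1 x.2.2 * L x.1 x.2.2 x.2.1)
    (hμ : ∀ ω, 0 ≤ μ ω) (hL : ∀ a c, ∑ b, L a c b = 1) :
    condMutualInfoOf μ X Y Z = ∑ ω, μ ω * Real.log ((∑ a, r a (Z ω)) * L (X ω) (Z ω) (Y ω) /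
      ∑ a, r a (Z ω) * L a (Z ω) (Y ω)) := by
  have hXZ : IsLaw μ (fun ω => (X ω, Z ω)) fun x => r x.1 x.2 := fun f => by
    rw [h fun x => f (x.1, x.2.2)]
    simp only [Fintype.sum_prod_type]
    refine Finset.sum_congr rfl fun a _ => ?_
    rw [Finset.sum_comm]
    simp only [mul_right_comm _ (L _ _ _), ← Finset.mul_sum, hL, mul_one]
  have hYZ : IsLaw μ (fun ω => (Y ω, Z ω)) fun x => ∑ a, r a x.2 * L a x.2 x.1 :=
    h.snd
  have hZ : IsLaw μ Z fun c => ∑ a, r a c := hXZ.snd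
  rw [condMutualInfoOf, h.entropyOf_eq, hXZ.entropyOf_eq, hYZ.entropyOf_eq, hZ.entropyOf_eq]
  simp only [← Finset.sum_neg_distrib, ← Finset.sum_add_distrib, ← Finset.sum_sub_distrib]
  refine Finset.sum_congr rfl fun ω _ => ?_
  by_cases hω : μ ω = 0
  · simp [hω]
  · have hr := (hXZ.pos hμ hω).ne'
    have hLω := right_ne_zero_of_mul (h.pos hμ hω).ne'
    rw [Real.log_div (mul_ne_zero (hZ.pos hμ hω).ne' hLω) (hYZ.pos hμ hω).ne',
      Real.log_mul (hZ.pos hμ hω).ne' hLω, Real.log_mul hr hLω]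
    ring

end Entropy

/-! ### Random coding for one block -/

section Codebook

variable {S W W3 X1 X3 Y Y3 : Type*} [Fintype W] [Fintype W3] [Fintype Y] [Fintype Y3]

/-- Marginal pmf of `(S, W)`. -/
noncomputable def margSW (P : S × W × W3 → ℝ) (s : S) (w : W) : ℝ := ∑ w3, P (s, w, w3)

/-- Marginal pmf of `(S, W3)`. -/
noncomputable def margSW3 (P : S × W × W3 → ℝ) (s : S) (w3 : W3) : ℝ := ∑ w, P (s, w, w3)

/-- Marginal channel to the destination. -/
noncomputable def chanY (Q : X1 × X3 → Y × Y3 → ℝ) (x : X1 × X3) (y : Y) : ℝ := ∑ y3, Q x (y, y3)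

/-- Marginal channel to the relay. -/
noncomputable def chanY3 (Q : X1 × X3 → Y × Y3 → ℝ) (x : X1 × X3) (y3 : Y3) : ℝ := ∑ y, Q x (y, y3)

variable {P : S × W × W3 → ℝ} {Q : X1 × X3 → Y × Y3 → ℝ}

lemma isLaw_chanY (x : X1 × X3) : IsLaw (Q x) Prod.fst (chanY Q x) := fun f => by
  simp only [Fintype.sum_prod_type, chanY, Finset.sum_mul]

lemma isLaw_chanY3 (x : X1 × X3) : IsLaw (Q x) Prod.snd (chanY3 Q x) := fun f => by
  simp only [Fintype.sum_prod_type_right, chanY3, Finset.sum_mul]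

lemma isPmf_chanY (hQ : ∀ x, IsPmf (Q x)) (x : X1 × X3) : IsPmf (chanY Q x) :=
  ⟨fun y => Finset.sum_nonneg fun _ _ => (hQ x).1 _, by
    simpa [(hQ x).2] using (isLaw_chanY (Q := Q) x fun _ => 1).symm⟩

lemma isPmf_chanY3 (hQ : ∀ x, IsPmf (Q x)) (x : X1 × X3) : IsPmf (chanY3 Q x) :=
  ⟨fun y3 => Finset.sum_nonneg fun _ _ => (hQ x).1 _, by
    simpa [(hQ x).2] using (isLaw_chanY3 (Q := Q) x fun _ => 1).symm⟩

variable [Fintype S]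

lemma isLaw_margSW : IsLaw P (fun θ => (θ.1, θ.2.1)) fun x => margSW P x.1 x.2 := fun f => by
  simp only [Fintype.sum_prod_type, margSW, Finset.sum_mul]

lemma isLaw_margSW3 : IsLaw P (fun θ => (θ.1, θ.2.2)) fun x => margSW3 P x.1 x.2 := fun f => by
  simp only [Fintype.sum_prod_type, margSW3, Finset.sum_mul]
  exact Finset.sum_congr rfl fun s _ => Finset.sum_comm

lemma margSW_nonneg (hP : IsPmf P) (s : S) (w : W) : 0 ≤ margSW P s w :=
  Finset.sum_nonneg fun _ _ => hP.1 _

lemma margSW3_nonneg (hP : IsPmf P) (s : S) (w3 : W3) : 0 ≤ margSW3 P s w3 :=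
  Finset.sum_nonneg fun _ _ => hP.1 _

/-- A codebook for one block: in state `s`, the relay sends `(c s).2`, and the transmitter sends
`(c s).1 s'` to make the relay learn the next state `s'`. -/
abbrev Codebook (S X1 X3 : Type*) : Type _ := S → (S → X1) × X3

/-- The channel input for the current state `s` and the next state `s'`. -/
def Codebook.input (c : Codebook S X1 X3) (s s' : S) : X1 × X3 := ((c s).1 s', (c s).2)

/-- Maximum a posteriori decoding of the next state at the relay, which knows the current one. -/
noncomputable def relayDec [Nonempty S] (P : S × W × W3 → ℝ) (Q : X1 × X3 → Y × Y3 → ℝ)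
    (c : Codebook S X1 X3) (s : S) (y3 : Y3) (w3 : W3) : S :=
  argMax fun a => margSW3 P a w3 * chanY3 Q (c.input s a) y3

/-- Maximum a posteriori decoding of the current state at the destination, which knows the next
one. -/
noncomputable def destDec [Nonempty S] (P : S × W × W3 → ℝ) (Q : X1 × X3 → Y × Y3 → ℝ)
    (c : Codebook S X1 X3) (s' : S) (y : Y) (w : W) : S :=
  argMax fun a => margSW P a w * chanY Q (c.input a s') y

/-- Error probability of `relayDec` for independent current and next source symbols. -/
noncomputable def relayErr [Nonempty S] (P : S × W × W3 → ℝ) (Q : X1 × X3 → Y × Y3 → ℝ)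
    (c : Codebook S X1 X3) : ℝ :=
  ∑ θ, P θ * ∑ θ', P θ' *
    ∑ z, Q (c.input θ.1 θ'.1) z * indic (relayDec P Q c θ.1 z.2 θ'.2.2 ≠ θ'.1)

/-- Error probability of `destDec` for independent current and next source symbols. -/
noncomputable def destErr [Nonempty S] (P : S × W × W3 → ℝ) (Q : X1 × X3 → Y × Y3 → ℝ)
    (c : Codebook S X1 X3) : ℝ :=
  ∑ θ, P θ * ∑ θ', P θ' *
    ∑ z, Q (c.input θ.1 θ'.1) z * indic (destDec P Q c θ'.1 z.1 θ.2.1 ≠ θ.1)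

lemma relayErr_eq_mapErr [Nonempty S] (c : Codebook S X1 X3) :
    relayErr P Q c = ∑ θ, P θ * mapErr fun a (o : W3 × Y3) =>
      margSW3 P a o.1 * chanY3 Q (c.input θ.1 a) o.2 := by
  refine Finset.sum_congr rfl fun θ _ => congrArg (P θ * ·) ?_
  have hz (θ' : S × W × W3) := isLaw_chanY3 (Q := Q) (c.input θ.1 θ'.1) fun y3 =>
    indic (relayDec P Q c θ.1 y3 θ'.2.2 ≠ θ'.1)
  simp only [hz]
  rw [isLaw_margSW3 (P := P) fun x => ∑ y3, chanY3 Q (c.input θ.1 x.1) y3 *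
    indic (relayDec P Q c θ.1 y3 x.2 ≠ x.1)]
  simp only [mapErr, Fintype.sum_prod_type, Finset.mul_sum, mul_assoc, relayDec]

lemma destErr_eq_mapErr [Nonempty S] (c : Codebook S X1 X3) :
    destErr P Q c = ∑ θ', P θ' * mapErr fun a (o : W × Y) =>
      margSW P a o.1 * chanY Q (c.input a θ'.1) o.2 := by
  have hswap : destErr P Q c = ∑ θ', P θ' * ∑ θ, P θ * ∑ z, Q (c.input θ.1 θ'.1) z *
      indic (destDec P Q c θ'.1 z.1 θ.2.1 ≠ θ.1) := by
    simp only [destErr, Finset.mul_sum (s := (Finset.univ : Finset (S × W × W3)))]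
    rw [Finset.sum_comm]
    simp only [mul_left_comm]
  rw [hswap]
  refine Finset.sum_congr rfl fun θ' _ => congrArg (P θ' * ·) ?_
  have hz (θ : S × W × W3) := isLaw_chanY (Q := Q) (c.input θ.1 θ'.1) fun y =>
    indic (destDec P Q c θ'.1 y θ.2.1 ≠ θ.1)
  simp only [hz]
  rw [isLaw_margSW (P := P) fun x => ∑ y, chanY Q (c.input x.1 θ'.1) y *
    indic (destDec P Q c θ'.1 y x.2 ≠ x.1)]
  simp only [mapErr, Fintype.sum_prod_type, Finset.mul_sum, mul_assoc, destDec]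

variable [Fintype X1] [Fintype X3] [DecidableEq S] {k1 : S → X1 → ℝ} {k3 : S → X3 → ℝ} {ρ : ℝ}

/-- The law of the random codebook entry `c s`. -/
def codebookKernel (k1 : S → X1 → ℝ) (k3 : S → X3 → ℝ) (s : S) (x : (S → X1) × X3) : ℝ :=
  (∏ s', k1 s (x.1 s')) * k3 s x.2

lemma isPmf_codebookKernel (hk1 : ∀ s, IsPmf (k1 s)) (hk3 : ∀ s, IsPmf (k3 s)) (s : S) :
    IsPmf (codebookKernel k1 k3 s) :=
  (isPmf_pi fun _ => hk1 s).mul_kernel fun _ => hk3 s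

/-- Gallager's function of a source that is known up to side information with joint pmf `q`. -/
noncomputable def sourceGallager {S V : Type*} [Fintype S] [Fintype V] (q : S → V → ℝ)
    (ρ : ℝ) : ℝ :=
  gallager (fun _ => 1) q ρ

/-- Gallager's function of the channel `L` to the relay, averaged over the source letter and the
relay input that the relay knows. -/
noncomputable def relayGallager {S V X1 X3 Y3 : Type*} [Fintype S] [Fintype V] [Fintype X1]
    [Fintype X3] [Fintype Y3] (P : S × V → ℝ) (k1 : S → X1 → ℝ) (k3 : S → X3 → ℝ)
    (L : X1 × X3 → Y3 → ℝ) (ρ : ℝ) : ℝ :=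
  ∑ θ, P θ * ∑ x3, k3 θ.1 x3 * gallager (k1 θ.1) (fun x1 y3 => L (x1, x3) y3) ρ

/-- Gallager's function of a source with side information and of the channel `L` to the
destination, both of which reveal the source letter. -/
noncomputable def destGallager {S W X1 X3 Y : Type*} [Fintype S] [Fintype W] [Fintype X1]
    [Fintype X3] [Fintype Y] (q : S → W → ℝ) (k1 : S → X1 → ℝ) (k3 : S → X3 → ℝ)
    (L : X1 × X3 → Y → ℝ) (ρ : ℝ) : ℝ :=
  gallager (fun t : S × X1 × X3 => k1 t.1 t.2.1 * k3 t.1 t.2.2)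
    (fun t (o : W × Y) => q t.1 o.1 * L t.2 o.2) ρ

lemma sum_codebook_mul_relayErr_le [Nonempty S] (hP : IsPmf P) (hQ : ∀ x, IsPmf (Q x))
    (hk1 : ∀ s, IsPmf (k1 s)) (hk3 : ∀ s, IsPmf (k3 s)) (hρ₀ : 0 ≤ ρ) (hρ₁ : ρ ≤ 1) :
    ∑ c : Codebook S X1 X3, (∏ s, codebookKernel k1 k3 s (c s)) * relayErr P Q c ≤
      sourceGallager (margSW3 P) ρ * relayGallager P k1 k3 (chanY3 Q) ρ := by
  let M (x3 : X3) (t : S × X1) (o : W3 × Y3) : ℝ :=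
    margSW3 P t.1 o.1 * chanY3 Q (t.2, x3) o.2
  have hM (s : S) (x3 : X3) : ∑ r : S → X1, (∏ a, k1 s (r a)) * mapErr (fun a => M x3 (a, r a))
      ≤ sourceGallager (margSW3 P) ρ * gallager (k1 s) (fun x1 => chanY3 Q (x1, x3)) ρ := by
    refine (sum_codebook_mul_mapErr_le (m := fun a x1 => M x3 (a, x1)) (fun _ => hk1 s)
      (fun a x1 o => mul_nonneg (margSW3_nonneg hP _ _) ((isPmf_chanY3 hQ _).1 _))
      hρ₀ hρ₁).trans_eq ?_
    rw [sourceGallager, ← gallager_mul (fun _ => zero_le_one) (margSW3_nonneg hP) (hk1 s).1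
      fun x1 => (isPmf_chanY3 hQ (x1, x3)).1]
    simp only [one_mul, M]
  have hswap : ∑ c : Codebook S X1 X3, (∏ s, codebookKernel k1 k3 s (c s)) * relayErr P Q c =
      ∑ θ, P θ * ∑ x3, k3 θ.1 x3 *
        ∑ r : S → X1, (∏ a, k1 θ.1 (r a)) * mapErr (fun a => M x3 (a, r a)) := by
    simp only [relayErr_eq_mapErr, Finset.mul_sum (s := (Finset.univ : Finset (S × W × W3)))]
    rw [Finset.sum_comm]
    simp only [mul_left_comm _ (P _), ← Finset.mul_sum]
    refine Finset.sum_congr rfl fun θ _ => congrArg (P θ * ·) ?_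
    refine (sum_pi_prod_mul (isPmf_codebookKernel hk1 hk3) θ.1 fun x =>
      mapErr fun a => M x.2 (a, x.1 a)).trans ?_
    rw [Fintype.sum_prod_type_right]
    simp only [codebookKernel, Finset.mul_sum, mul_assoc, mul_left_comm (k3 _ _)]
  rw [hswap, relayGallager, Finset.mul_sum]
  simp only [mul_left_comm (sourceGallager _ _) (P _),
    Finset.mul_sum (a := sourceGallager (margSW3 P) ρ), mul_left_comm (sourceGallager _ _) (k3 _ _)]
  gcongr with θ _ x3
  exacts [hP.1 θ, (hk3 _).1 x3, hM _ _]

lemma isLaw_codeword (hk1 : ∀ s, IsPmf (k1 s)) (s' : S) :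
    IsLaw (fun t : S × (S → X1) × X3 => codebookKernel k1 k3 t.1 t.2)
      (fun t => (t.1, t.2.1 s', t.2.2)) fun t => k1 t.1 t.2.1 * k3 t.1 t.2.2 := fun f => by
  simp only [Fintype.sum_prod_type, codebookKernel, mul_assoc, ← Finset.mul_sum]
  exact Finset.sum_congr rfl fun s _ => sum_pi_prod_mul (fun _ => hk1 s) s' fun x1 =>
    ∑ x3, k3 s x3 * f (s, x1, x3)

lemma sum_codebook_mul_destErr_le [Nonempty S] (hP : IsPmf P) (hQ : ∀ x, IsPmf (Q x))
    (hk1 : ∀ s, IsPmf (k1 s)) (hk3 : ∀ s, IsPmf (k3 s)) (hρ₀ : 0 ≤ ρ) (hρ₁ : ρ ≤ 1) :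
    ∑ c : Codebook S X1 X3, (∏ s, codebookKernel k1 k3 s (c s)) * destErr P Q c ≤
      destGallager (margSW P) k1 k3 (chanY Q) ρ := by
  let M (t : S × X1 × X3) (o : W × Y) : ℝ := margSW P t.1 o.1 * chanY Q t.2 o.2
  let κ (t : S × X1 × X3) : ℝ := k1 t.1 t.2.1 * k3 t.1 t.2.2
  change _ ≤ gallager κ M ρ
  have hM (s' : S) : ∑ c : Codebook S X1 X3, (∏ s, codebookKernel k1 k3 s (c s)) *
      mapErr (fun a => M (a, c.input a s')) ≤ gallager κ M ρ :=
    (sum_codebook_mul_mapErr_le (m := fun a (x : (S → X1) × X3) => M (a, x.1 s', x.2))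
      (isPmf_codebookKernel hk1 hk3)
      (fun a x o => mul_nonneg (margSW_nonneg hP _ _) ((isPmf_chanY hQ _).1 _))
      hρ₀ hρ₁).trans_eq ((isLaw_codeword hk1 s').gallager_comp M ρ)
  calc _ = ∑ θ', P θ' * ∑ c : Codebook S X1 X3, (∏ s, codebookKernel k1 k3 s (c s)) *
        mapErr (fun a => M (a, c.input a θ'.1)) := by
        simp only [destErr_eq_mapErr, Finset.mul_sum (s := (Finset.univ : Finset (S × W × W3)))]
        rw [Finset.sum_comm]
        simp only [mul_left_comm _ (P _), ← Finset.mul_sum, M]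
    _ ≤ ∑ θ', P θ' * gallager κ M ρ := by
        gcongr with θ'
        exacts [hP.1 θ', hM _]
    _ = gallager κ M ρ := by rw [← Finset.sum_mul, hP.2, one_mul]

end Codebook

/-! ### Codes over general index sets -/

section RelayCode

lemma sum_mul_indic_le_of_eq {Ω : Type*} [Fintype Ω] {p q : Ω → ℝ} (hp : IsPmf p)
    (hq : ∑ ω, q ω = 1) {E F : Ω → Prop} (hEF : ∀ ω, E ω → F ω) (h : ∀ ω, ¬F ω → p ω = q ω) :
    ∑ ω, p ω * indic (E ω) ≤ ∑ ω, q ω * indic (F ω) := by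
  have hterm (ω : Ω) : p ω * indic (E ω) ≤ p ω - q ω + q ω * indic (F ω) := by
    by_cases hF : F ω
    · simp only [indic, hF, if_true, mul_one, sub_add_cancel]
      exact mul_le_of_le_one_right (hp.1 ω) (indic_le_one _)
    · have hE : ¬E ω := fun hE => hF (hEF ω hE)
      simp [indic, hE, hF, h ω hF]
  calc _ ≤ ∑ ω, (p ω - q ω + q ω * indic (F ω)) := Finset.sum_le_sum fun ω _ => hterm ω
    _ = _ := by rw [Finset.sum_add_distrib, Finset.sum_sub_distrib, hp.2, hq, sub_self, zero_add]

lemma indic_exists_or_le_sum {ι : Type*} [Fintype ι] (E F : ι → Prop) :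
    indic (∃ i, E i ∨ F i) ≤ ∑ i, (indic (E i) + indic (F i)) := by
  have hnonneg (i : ι) : 0 ≤ indic (E i) + indic (F i) :=
    add_nonneg (indic_nonneg _) (indic_nonneg _)
  by_cases h : ∃ i, E i ∨ F i
  · obtain ⟨i, hi⟩ := id h
    calc indic (∃ i, E i ∨ F i) ≤ indic (E i) + indic (F i) := by
          rcases hi with hi | hi
          · simpa [indic, h, hi] using indic_nonneg (F i)
          · simpa [indic, h, hi] using indic_nonneg (E i)
      _ ≤ _ := Finset.single_le_sum (f := fun i => indic (E i) + indic (F i))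
          (fun i _ => hnonneg i) (Finset.mem_univ i)
  · rw [indic, if_neg h]
    exact Finset.sum_nonneg fun i _ => hnonneg i

/-- The outputs of a channel used with feedback have total mass one. -/
lemma sum_prod_causal {Z : Type*} [Fintype Z] [Nonempty Z] {n : ℕ}
    (q : Fin n → (Fin n → Z) → Z → ℝ) (hq : ∀ k y, ∑ z, q k y z = 1)
    (hc : ∀ k y y', (∀ j < k, y j = y' j) → q k y = q k y') :
    ∑ y : Fin n → Z, ∏ k, q k y (y k) = 1 := by
  induction n with
  | zero => simp
  | succ n ih =>
    inhabit Z
    let snoc (y : Fin n → Z) (z : Z) : Fin (n + 1) → Z := Fin.snoc (α := fun _ => Z) y z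
    have hsnoc (k : Fin (n + 1)) (y y' : Fin n → Z) (z z' : Z)
        (h : ∀ j : Fin n, j.castSucc < k → y j = y' j) : q k (snoc y z) = q k (snoc y' z') :=
      hc k _ _ fun j hj => by
        obtain ⟨j, rfl⟩ := Fin.exists_castSucc_eq.2 (hj.trans_le (Fin.le_last k)).ne
        simpa [snoc] using h j hj
    have hprod (y : Fin n → Z) (z : Z) : ∏ k, q k (snoc y z) (snoc y z k) =
        (∏ k : Fin n, q k.castSucc (snoc y default) (y k)) *
          q (Fin.last n) (snoc y default) z := by
      rw [Fin.prod_univ_castSucc]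
      simp only [hsnoc _ y y z default fun _ _ => rfl]
      simp [snoc]
    calc ∑ y : Fin (n + 1) → Z, ∏ k, q k y (y k) =
          ∑ y, ∑ z, ∏ k, q k (snoc y z) (snoc y z k) := by
          rw [← (Fin.snocEquiv fun _ => Z).sum_comp, Fintype.sum_prod_type, Finset.sum_comm]
          rfl
      _ = ∑ y, ∏ k : Fin n, q k.castSucc (snoc y default) (y k) := by
          simp only [hprod, ← Finset.mul_sum, hq, mul_one]
      _ = 1 := ih (fun k y => q k.castSucc (snoc y default)) (fun k y => hq _ _)
          fun k y y' h => hsnoc _ _ _ _ _ fun j hj => h j (Fin.castSucc_lt_castSucc_iff.1 hj)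

/-- A source-channel code for the relay broadcast channel, with source letters indexed by `K` and
channel uses indexed by `T`. -/
structure RelayCode (K T S W W3 X1 X3 Y Y3 : Type*) where
  enc : (K → S) → T → X1
  relayEnc : (T → Y3) → (K → W3) → T → X3
  relayDec : (T → Y3) → (K → W3) → K → S
  dec : (T → Y) → (K → W) → K → S

namespace RelayCode

variable {K T S W W3 X1 X3 Y Y3 : Type*}

/-- The relay input at time `t` depends only on the relay outputs before `t`. -/
def Causal [LT T] (C : RelayCode K T S W W3 X1 X3 Y Y3) : Prop :=
  ∀ t y y' w, (∀ j < t, y j = y' j) → C.relayEnc y w t = C.relayEnc y' w t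

/-- The event of a decoding error, at the destination or at the relay. -/
def Fails (C : RelayCode K T S W W3 X1 X3 Y Y3) (θ : K → S × W × W3) (z : T → Y × Y3) : Prop :=
  C.dec (fun t => (z t).1) (fun k => (θ k).2.1) ≠ (fun k => (θ k).1) ∨
    C.relayDec (fun t => (z t).2) (fun k => (θ k).2.2) ≠ fun k => (θ k).1

/-- The channel input at time `t`. -/
def input (C : RelayCode K T S W W3 X1 X3 Y Y3) (θ : K → S × W × W3) (z : T → Y × Y3) (t : T) :
    X1 × X3 :=
  (C.enc (fun k => (θ k).1) t, C.relayEnc (fun t => (z t).2) (fun k => (θ k).2.2) t)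

variable [Fintype K] [DecidableEq K] [Fintype S] [Fintype W] [Fintype W3] [Fintype Y] [Fintype Y3]
  {P : S × W × W3 → ℝ} {Q : X1 × X3 → Y × Y3 → ℝ}

/-- The error probability for a memoryless source `P` and a memoryless channel `Q`. -/
noncomputable def errProb [Fintype T] [DecidableEq T] (P : S × W × W3 → ℝ)
    (Q : X1 × X3 → Y × Y3 → ℝ) (C : RelayCode K T S W W3 X1 X3 Y Y3) : ℝ :=
  ∑ θ : K → S × W × W3, (∏ k, P (θ k)) *
    ∑ z : T → Y × Y3, (∏ t, Q (C.input θ z t) (z t)) * indic (C.Fails θ z)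

/-- Comparison with a genie-aided relay that sends `x θ t` at time `t`. -/
lemma errProb_le_of_genie [Nonempty Y] [Nonempty Y3] {n : ℕ}
    {C : RelayCode K (Fin n) S W W3 X1 X3 Y Y3} (hC : C.Causal) (hP : ∀ θ, 0 ≤ P θ)
    (hQ : ∀ x, IsPmf (Q x)) (x : (K → S × W × W3) → Fin n → X1 × X3)
    {F : (K → S × W × W3) → (Fin n → Y × Y3) → Prop} (hfail : ∀ θ z, C.Fails θ z → F θ z)
    (hx : ∀ θ z, ¬F θ z → C.input θ z = x θ) :
    C.errProb P Q ≤ ∑ θ : K → S × W × W3, (∏ k, P (θ k)) *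
      ∑ z : Fin n → Y × Y3, (∏ t, Q (x θ t) (z t)) * indic (F θ z) := by
  refine Finset.sum_le_sum fun θ _ =>
    mul_le_mul_of_nonneg_left ?_ (Finset.prod_nonneg fun k _ => hP _)
  refine sum_mul_indic_le_of_eq ⟨fun z => Finset.prod_nonneg fun t _ => (hQ _).1 _, ?_⟩
    (isPmf_pi fun t => hQ (x θ t)).2 (hfail θ) fun z hz => by rw [hx θ z hz]
  refine sum_prod_causal (fun t z => Q (C.input θ z t)) (fun t z => (hQ _).2) fun t z z' h => ?_
  rw [input, hC t _ _ _ fun j hj => congrArg Prod.snd (h j hj), input]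

end RelayCode

end RelayCode

/-! ### Block-Markov coding -/

section BlockMarkov

variable {S W W3 X1 X3 Y Y3 : Type*} {B : ℕ}

/-- Successive decoding at the relay, starting from the known state `σ`; the estimate of the state
of the next block is computed from the channel output of the current one. -/
def relayEst (dec : S → Y3 → W3 → S) (σ : S) (y3 : Fin (B + 1) → Y3) (w3 : Fin B → W3) :
    Fin (B + 1) → S :=
  Fin.induction (motive := fun _ => S) σ fun b s => dec s (y3 b.castSucc) (w3 b)

/-- Backward decoding at the destination. The entry at `b` estimates the state of block `b + 1`;
the one following the last block is the known state `σ`. -/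
def destEst (dec : S → Y → W → S) (σ : S) (y : Fin (B + 1) → Y) (w : Fin B → W) :
    Fin (B + 1) → S :=
  Fin.reverseInduction (motive := fun _ => S) σ fun b s => dec s (y b.succ) (w b)

lemma relayEst_succ (dec : S → Y3 → W3 → S) (σ : S) (y3 : Fin (B + 1) → Y3) (w3 : Fin B → W3)
    (b : Fin B) : relayEst dec σ y3 w3 b.succ =
      dec (relayEst dec σ y3 w3 b.castSucc) (y3 b.castSucc) (w3 b) :=
  Fin.induction_succ _ _ _

lemma destEst_castSucc (dec : S → Y → W → S) (σ : S) (y : Fin (B + 1) → Y) (w : Fin B → W)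
    (b : Fin B) : destEst dec σ y w b.castSucc = dec (destEst dec σ y w b.succ) (y b.succ) (w b) :=
  Fin.reverseInduction_castSucc _

lemma relayEst_congr {dec : S → Y3 → W3 → S} {σ : S} {y y' : Fin (B + 1) → Y3} {w3 : Fin B → W3}
    {b : Fin (B + 1)} (h : ∀ j < b, y j = y' j) :
    relayEst dec σ y w3 b = relayEst dec σ y' w3 b := by
  induction b using Fin.induction with
  | zero => rfl
  | succ b ih =>
    rw [relayEst_succ, relayEst_succ, h _ Fin.castSucc_lt_succ,
      ih fun j hj => h j (hj.trans Fin.castSucc_lt_succ)]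

lemma relayEst_eq {dec : S → Y3 → W3 → S} {y3 : Fin (B + 1) → Y3} {w3 : Fin B → W3}
    {s : Fin (B + 1) → S} (h : ∀ b : Fin B, dec (s b.castSucc) (y3 b.castSucc) (w3 b) = s b.succ) :
    relayEst dec (s 0) y3 w3 = s := by
  ext b
  induction b using Fin.induction with
  | zero => rfl
  | succ b ih => rw [relayEst_succ, ih, h]

lemma destEst_eq {dec : S → Y → W → S} {y : Fin (B + 1) → Y} {w : Fin B → W}
    {s : Fin (B + 1) → S} (h : ∀ b : Fin B, dec (s (b.succ + 1)) (y b.succ) (w b) = s b.succ) :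
    destEst dec (s 0) y w = fun b => s (b + 1) := by
  ext b
  induction b using Fin.reverseInduction with
  | last => simp [destEst]
  | cast b ih => rw [destEst_castSucc, ih, h, Fin.coeSucc_eq_succ]

/-- Block-Markov coding. The states of the `B + 1` blocks are `σ` and the `B` source letters. In
block `b` the channel carries the codeword of the states of the blocks `b` and `b + 1`, where the
last block is followed by the first one. -/
def blockMarkov (c : Codebook S X1 X3) (decR : S → Y3 → W3 → S) (decD : S → Y → W → S) (σ : S) :
    RelayCode (Fin B) (Fin (B + 1)) S W W3 X1 X3 Y Y3 where
  enc s b := let state := Fin.cons (α := fun _ => S) σ s; (c.input (state b) (state (b + 1))).1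
  relayEnc y3 w3 b := (c (relayEst decR σ y3 w3 b)).2
  relayDec y3 w3 b := relayEst decR σ y3 w3 b.succ
  dec y w b := destEst decD σ y w b.castSucc

lemma blockMarkov_causal (c : Codebook S X1 X3) (decR : S → Y3 → W3 → S) (decD : S → Y → W → S)
    (σ : S) : (blockMarkov (B := B) c decR decD σ).Causal := fun _ _ _ _ h =>
  congrArg (fun s => (c s).2) (relayEst_congr h)

lemma blockMarkov_of_correct {c : Codebook S X1 X3} {decR : S → Y3 → W3 → S} {decD : S → Y → W → S}
    {θ₀ : S × W × W3} {τ : Fin B → S × W × W3} {ω : Fin (B + 1) → S × W × W3}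
    (hω : ω = Fin.cons θ₀ τ) {z : Fin (B + 1) → Y × Y3}
    (hR : ∀ b, decR (ω b).1 (z b).2 (ω (b + 1)).2.2 = (ω (b + 1)).1)
    (hD : ∀ b, decD (ω (b + 1)).1 (z b).1 (ω b).2.1 = (ω b).1) :
    ¬(blockMarkov c decR decD θ₀.1).Fails τ z ∧
      (blockMarkov c decR decD θ₀.1).input τ z = fun b => c.input (ω b).1 (ω (b + 1)).1 := by
  have hzero : ω 0 = θ₀ := by simp [hω]
  have hsucc (b : Fin B) : ω b.succ = τ b := by simp [hω]
  have hrelay : relayEst decR θ₀.1 (fun b => (z b).2) (fun b => (τ b).2.2) = fun b => (ω b).1 := by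
    rw [← hzero]
    exact relayEst_eq (s := fun b => (ω b).1) fun b => by
      simpa only [← hsucc, Fin.coeSucc_eq_succ] using hR b.castSucc
  have hdest : destEst decD θ₀.1 (fun b => (z b).1) (fun b => (τ b).2.1) =
      fun b => (ω (b + 1)).1 := by
    rw [← hzero]
    exact destEst_eq (s := fun b => (ω b).1) fun b => by simpa only [← hsucc] using hD b.succ
  have hstate : Fin.cons (α := fun _ => S) θ₀.1 (fun b => (τ b).1) = fun b => (ω b).1 := by
    ext b
    cases b using Fin.cases <;> simp [hzero, hsucc]
  constructor
  · simp [RelayCode.Fails, blockMarkov, hrelay, hdest, hsucc, Fin.coeSucc_eq_succ]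
  · ext1 b
    simp only [RelayCode.input, blockMarkov, hrelay, hstate, Codebook.input]

variable [Fintype S] [Nonempty S] [Fintype W] [Fintype W3] [Fintype Y] [Fintype Y3]
  {P : S × W × W3 → ℝ} {Q : X1 × X3 → Y × Y3 → ℝ}

/-- The sum of the error probabilities of `relayDec` and `destDec` in a block with source symbol
`θ` that is followed by a block with source symbol `θ'`. -/
noncomputable def stepErr (P : S × W × W3 → ℝ) (Q : X1 × X3 → Y × Y3 → ℝ) (c : Codebook S X1 X3)
    (θ θ' : S × W × W3) : ℝ :=
  ∑ z, Q (c.input θ.1 θ'.1) z * (indic (relayDec P Q c θ.1 z.2 θ'.2.2 ≠ θ'.1) +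
    indic (destDec P Q c θ'.1 z.1 θ.2.1 ≠ θ.1))

lemma sum_mul_stepErr (c : Codebook S X1 X3) :
    ∑ θ, P θ * ∑ θ', P θ' * stepErr P Q c θ θ' = relayErr P Q c + destErr P Q c := by
  simp only [stepErr, relayErr, destErr, mul_add, Finset.sum_add_distrib]

lemma blockMarkov_errProb_le [Nonempty Y] [Nonempty Y3] (hP : IsPmf P) (hQ : ∀ x, IsPmf (Q x))
    (c : Codebook S X1 X3) (θ₀ : S × W × W3) :
    (blockMarkov (B := B) c (relayDec P Q c) (destDec P Q c) θ₀.1).errProb P Q ≤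
      ∑ τ : Fin B → S × W × W3, (∏ b, P (τ b)) * ∑ b : Fin (B + 1),
        stepErr P Q c (Fin.cons (α := fun _ => S × W × W3) θ₀ τ b)
          (Fin.cons (α := fun _ => S × W × W3) θ₀ τ (b + 1)) := by
  let ω (τ : Fin B → S × W × W3) : Fin (B + 1) → S × W × W3 := Fin.cons θ₀ τ
  let badR (τ : Fin B → S × W × W3) (b : Fin (B + 1)) (o : Y × Y3) : Prop :=
    relayDec P Q c (ω τ b).1 o.2 (ω τ (b + 1)).2.2 ≠ (ω τ (b + 1)).1
  let badD (τ : Fin B → S × W × W3) (b : Fin (B + 1)) (o : Y × Y3) : Prop :=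
    destDec P Q c (ω τ (b + 1)).1 o.1 (ω τ b).2.1 ≠ (ω τ b).1
  have hcorrect (τ) (z : Fin (B + 1) → Y × Y3) (h : ¬∃ b, badR τ b (z b) ∨ badD τ b (z b)) := by
    simp only [badR, badD, not_exists, not_or, not_not] at h
    exact blockMarkov_of_correct (c := c) (rfl : ω τ = _) (fun b => (h b).1) fun b => (h b).2
  refine (RelayCode.errProb_le_of_genie (blockMarkov_causal _ _ _ _) hP.1 hQ
    (fun τ b => c.input (ω τ b).1 (ω τ (b + 1)).1)
    (fun τ z => not_imp_not.1 fun h => (hcorrect τ z h).1) fun τ z h => (hcorrect τ z h).2).trans ?_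
  gcongr with τ
  · exact Finset.prod_nonneg fun b _ => hP.1 _
  have hin (b : Fin (B + 1)) : IsPmf (Q (c.input (ω τ b).1 (ω τ (b + 1)).1)) := hQ _
  calc _ ≤ ∑ z : Fin (B + 1) → Y × Y3, (∏ b, Q (c.input (ω τ b).1 (ω τ (b + 1)).1) (z b)) *
        ∑ b, (indic (badR τ b (z b)) + indic (badD τ b (z b))) := by
        gcongr with z
        · exact Finset.prod_nonneg fun b _ => (hin b).1 _
        · exact indic_exists_or_le_sum _ _
    _ = _ := by
        simp only [Finset.mul_sum]
        rw [Finset.sum_comm]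
        exact Finset.sum_congr rfl fun b _ => sum_pi_prod_mul hin b fun o =>
          indic (badR τ b o) + indic (badD τ b o)

lemma sum_cyclic_pairs {Θ : Type*} [Fintype Θ] {p : Θ → ℝ} (hp : IsPmf p) (hB : 0 < B)
    (f : Θ → Θ → ℝ) :
    ∑ θ₀, p θ₀ * ∑ τ : Fin B → Θ, (∏ b, p (τ b)) * ∑ b : Fin (B + 1),
        f (Fin.cons (α := fun _ => Θ) θ₀ τ b) (Fin.cons (α := fun _ => Θ) θ₀ τ (b + 1)) =
      (B + 1) * ∑ θ, p θ * ∑ θ', p θ' * f θ θ' := by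
  have hne (b : Fin (B + 1)) : b ≠ b + 1 := by
    have : NeZero B := ⟨hB.ne'⟩
    simp
  calc _ = ∑ ω : Fin (B + 1) → Θ, (∏ b, p (ω b)) * ∑ b, f (ω b) (ω (b + 1)) := by
        rw [← (Fin.consEquiv fun _ : Fin (B + 1) => Θ).sum_comp, Fintype.sum_prod_type]
        simp [Fin.consEquiv, Fin.prod_univ_succ, Finset.mul_sum, mul_assoc]
    _ = ∑ b : Fin (B + 1), ∑ ω : Fin (B + 1) → Θ, (∏ b, p (ω b)) * f (ω b) (ω (b + 1)) := by
        simp only [Finset.mul_sum]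
        exact Finset.sum_comm
    _ = _ := by
        simp only [sum_pi_prod_mul₂ (fun _ : Fin (B + 1) => hp) (hne _)]
        simp

/-- Random coding over the codebook and over the state that the terminals know beforehand. -/
theorem exists_relayCode [Nonempty Y] [Nonempty Y3] [Fintype X1] [Fintype X3]
    (hP : IsPmf P) (hQ : ∀ x, IsPmf (Q x)) {k1 : S → X1 → ℝ} {k3 : S → X3 → ℝ}
    (hk1 : ∀ s, IsPmf (k1 s)) (hk3 : ∀ s, IsPmf (k3 s)) (hB : 0 < B) {ρ ρ' : ℝ}
    (hρ₀ : 0 ≤ ρ) (hρ₁ : ρ ≤ 1) (hρ₀' : 0 ≤ ρ') (hρ₁' : ρ' ≤ 1) :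
    ∃ C : RelayCode (Fin B) (Fin (B + 1)) S W W3 X1 X3 Y Y3, C.Causal ∧ C.errProb P Q ≤
      (B + 1) * (sourceGallager (margSW3 P) ρ * relayGallager P k1 k3 (chanY3 Q) ρ +
        destGallager (margSW P) k1 k3 (chanY Q) ρ') := by
  classical
  have havg := add_le_add (sum_codebook_mul_relayErr_le hP hQ hk1 hk3 hρ₀ hρ₁)
    (sum_codebook_mul_destErr_le hP hQ hk1 hk3 hρ₀' hρ₁')
  simp only [← Finset.sum_add_distrib, ← mul_add] at havg
  obtain ⟨c, hc⟩ := (isPmf_pi (isPmf_codebookKernel hk1 hk3)).exists_le_of_sum_mul_le havg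
  have hc' := mul_le_mul_of_nonneg_left hc (by positivity : (0 : ℝ) ≤ B + 1)
  rw [← sum_mul_stepErr, ← sum_cyclic_pairs hP hB (stepErr P Q c)] at hc'
  obtain ⟨θ₀, hθ₀⟩ := hP.exists_le_of_sum_mul_le hc'
  exact ⟨_, blockMarkov_causal _ _ _ _, (blockMarkov_errProb_le hP hQ c θ₀).trans hθ₀⟩

end BlockMarkov

/-! ### Blocks of a memoryless source and a memoryless channel -/

section Blocks

variable {K T M I N N' S W W3 X1 X3 Y Y3 : Type*}

/-- Memoryless extension of the source. -/
noncomputable def blockPmf (M : Type*) [Fintype M] (P : S × W × W3 → ℝ)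
    (θ : (M → S) × (M → W) × (M → W3)) : ℝ :=
  ∏ m, P (θ.1 m, θ.2.1 m, θ.2.2 m)

/-- Memoryless extension of the channel. -/
noncomputable def blockChan (I : Type*) [Fintype I] (Q : X1 × X3 → Y × Y3 → ℝ)
    (x : (I → X1) × (I → X3)) (z : (I → Y) × (I → Y3)) : ℝ :=
  ∏ i, Q (x.1 i, x.2 i) (z.1 i, z.2 i)

/-- Splitting of sequences over the source alphabet into blocks. -/
def srcBlocks (e : N ≃ K × M) :
    (K → (M → S) × (M → W) × (M → W3)) ≃ (N → S × W × W3) where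
  toFun τ k := ((τ (e k).1).1 (e k).2, (τ (e k).1).2.1 (e k).2, (τ (e k).1).2.2 (e k).2)
  invFun θ b := (fun m => (θ (e.symm (b, m))).1, fun m => (θ (e.symm (b, m))).2.1,
    fun m => (θ (e.symm (b, m))).2.2)
  left_inv τ := by simp
  right_inv θ := by simp

/-- Splitting of sequences of channel outputs into blocks. -/
def outBlocks (e : N ≃ T × I) : (T → (I → Y) × (I → Y3)) ≃ (N → Y × Y3) where
  toFun z k := ((z (e k).1).1 (e k).2, (z (e k).1).2 (e k).2)
  invFun z b := (fun i => (z (e.symm (b, i))).1, fun i => (z (e.symm (b, i))).2)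
  left_inv z := by simp
  right_inv z := by simp

variable {P : S × W × W3 → ℝ} {Q : X1 × X3 → Y × Y3 → ℝ}

lemma isPmf_blockPmf [Fintype M] [Fintype S] [Fintype W] [Fintype W3] [DecidableEq M]
    (hP : IsPmf P) : IsPmf (blockPmf M P) := by
  refine ⟨fun θ => Finset.prod_nonneg fun m _ => hP.1 _, ?_⟩
  rw [← (isPmf_pi fun _ : M => hP).2,
    ← ((Equiv.arrowProdEquivProdArrow M (fun _ => S) (fun _ => W × W3)).trans
      ((Equiv.refl _).prodCongr
        (Equiv.arrowProdEquivProdArrow M (fun _ => W) (fun _ => W3)))).sum_comp]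
  rfl

lemma isPmf_blockChan [Fintype I] [Fintype Y] [Fintype Y3] [DecidableEq I] (hQ : ∀ x, IsPmf (Q x))
    (x : (I → X1) × (I → X3)) : IsPmf (blockChan I Q x) := by
  refine ⟨fun z => Finset.prod_nonneg fun i _ => (hQ _).1 _, ?_⟩
  rw [← (isPmf_pi fun i : I => hQ (x.1 i, x.2 i)).2,
    ← (Equiv.arrowProdEquivProdArrow I (fun _ => Y) (fun _ => Y3)).sum_comp]
  rfl

namespace RelayCode

/-- A code for blocks of letters, as a code for letters. -/
def flatten (C : RelayCode K T (M → S) (M → W) (M → W3) (I → X1) (I → X3) (I → Y) (I → Y3))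
    (eS : N ≃ K × M) (eT : N' ≃ T × I) : RelayCode N N' S W W3 X1 X3 Y Y3 where
  enc s k := C.enc (fun b m => s (eS.symm (b, m))) (eT k).1 (eT k).2
  relayEnc y3 w3 k := C.relayEnc (fun b i => y3 (eT.symm (b, i)))
    (fun b m => w3 (eS.symm (b, m))) (eT k).1 (eT k).2
  relayDec y3 w3 k := C.relayDec (fun b i => y3 (eT.symm (b, i)))
    (fun b m => w3 (eS.symm (b, m))) (eS k).1 (eS k).2
  dec y w k := C.dec (fun b i => y (eT.symm (b, i))) (fun b m => w (eS.symm (b, m)))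
    (eS k).1 (eS k).2

variable {C : RelayCode K T (M → S) (M → W) (M → W3) (I → X1) (I → X3) (I → Y) (I → Y3)}

lemma Causal.flatten [LT T] [LT N'] (hC : C.Causal) (eS : N ≃ K × M) {eT : N' ≃ T × I}
    (heT : ∀ j k, (eT j).1 < (eT k).1 → j < k) : (C.flatten eS eT).Causal := fun k y y' w h =>
  congrFun (hC (eT k).1 _ _ _ fun b hb => funext fun i => h _ (heT _ _ (by simpa using hb))) _

lemma flatten_fails_iff (eS : N ≃ K × M) (eT : N' ≃ T × I)
    (τ : K → (M → S) × (M → W) × (M → W3)) (z : T → (I → Y) × (I → Y3)) :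
    (C.flatten eS eT).Fails (srcBlocks eS τ) (outBlocks eT z) ↔ C.Fails τ z := by
  have hne (f g : K → M → S) :
      (fun k => f (eS k).1 (eS k).2) ≠ (fun k => g (eS k).1 (eS k).2) ↔ f ≠ g := by
    refine not_congr ⟨fun h => ?_, fun h => by rw [h]⟩
    ext b m
    simpa using congrFun h (eS.symm (b, m))
  simp only [Fails, flatten, srcBlocks, outBlocks, Equiv.coe_fn_mk, Equiv.apply_symm_apply]
  exact or_congr (hne _ fun b => (τ b).1) (hne _ fun b => (τ b).1)

lemma errProb_flatten [Fintype K] [DecidableEq K] [Fintype T] [DecidableEq T] [Fintype N]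
    [DecidableEq N] [Fintype N'] [DecidableEq N'] [Fintype M] [DecidableEq M] [Fintype I]
    [DecidableEq I] [Fintype S] [Fintype W] [Fintype W3] [Fintype Y] [Fintype Y3]
    (eS : N ≃ K × M) (eT : N' ≃ T × I) :
    (C.flatten eS eT).errProb P Q = C.errProb (blockPmf M P) (blockChan I Q) := by
  have hsrc (τ : K → (M → S) × (M → W) × (M → W3)) :
      ∏ k, P (srcBlocks eS τ k) = ∏ b, blockPmf M P (τ b) := by
    simp only [blockPmf, ← Fintype.prod_prod_type', srcBlocks, Equiv.coe_fn_mk]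
    exact eS.prod_comp fun q => P ((τ q.1).1 q.2, (τ q.1).2.1 q.2, (τ q.1).2.2 q.2)
  have hchan (τ : K → (M → S) × (M → W) × (M → W3)) (z : T → (I → Y) × (I → Y3)) :
      ∏ k, Q ((C.flatten eS eT).input (srcBlocks eS τ) (outBlocks eT z) k) (outBlocks eT z k) =
        ∏ t, blockChan I Q (C.input τ z t) (z t) := by
    simp only [blockChan, ← Fintype.prod_prod_type', input, flatten, srcBlocks, outBlocks,
      Equiv.coe_fn_mk, Equiv.apply_symm_apply]
    exact eT.prod_comp fun q => Q ((C.input τ z q.1).1 q.2, (C.input τ z q.1).2 q.2)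
      ((z q.1).1 q.2, (z q.1).2 q.2)
  unfold errProb
  rw [← (srcBlocks eS).sum_comp]
  simp only [hsrc]
  refine Finset.sum_congr rfl fun τ _ => congrArg ((∏ b, blockPmf M P (τ b)) * ·) ?_
  rw [← (outBlocks eT).sum_comp]
  simp only [hchan, flatten_fails_iff]

lemma crbcErrProb_eq_errProb [Fintype S] [Fintype W] [Fintype W3] [Fintype Y] [Fintype Y3]
    [DecidableEq S] {n : ℕ} (C : RelayCode (Fin n) (Fin n) S W W3 X1 X3 Y Y3) :
    crbcErrProb P Q n C.enc (fun k y3 w3 => C.relayEnc y3 w3 k) C.relayDec C.dec =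
      C.errProb P Q := by
  classical
  let e : (Fin n → S × W × W3) ≃ (Fin n → S) × (Fin n → W) × (Fin n → W3) :=
    (Equiv.arrowProdEquivProdArrow _ _ _).trans
      ((Equiv.refl _).prodCongr (Equiv.arrowProdEquivProdArrow _ _ _))
  rw [errProb, ← e.symm.sum_comp]
  simp only [← (Equiv.arrowProdEquivProdArrow (Fin n) (fun _ => Y) fun _ => Y3).symm.sum_comp,
    Fintype.sum_prod_type, crbcErrProb, Finset.mul_sum]
  refine Finset.sum_congr rfl fun s _ => Finset.sum_congr rfl fun w _ =>
    Finset.sum_congr rfl fun w3 _ => Finset.sum_congr rfl fun y _ =>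
      Finset.sum_congr rfl fun y3 _ => ?_
  have hfail : C.Fails (e.symm (s, w, w3)) (fun k => (y k, y3 k)) ↔
      C.dec y w ≠ s ∨ C.relayDec y3 w3 ≠ s := Iff.rfl
  rw [← mul_assoc, indic, mul_ite, mul_one, mul_zero]
  exact if_congr hfail.symm rfl rfl

end RelayCode

lemma crbcReliablyTransmitted_of_relayCode [Fintype S] [Fintype W] [Fintype W3] [Fintype Y]
    [Fintype Y3] [DecidableEq S] (h : ∀ ε : ℝ, 0 < ε → ∃ n : ℕ, 0 < n ∧
      ∃ C : RelayCode (Fin n) (Fin n) S W W3 X1 X3 Y Y3, C.Causal ∧ C.errProb P Q ≤ ε) :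
    CrbcReliablyTransmitted P Q := fun ε hε => by
  obtain ⟨n, hn, C, hC, hle⟩ := h ε hε
  exact ⟨n, hn, C.enc, fun k y3 w3 => C.relayEnc y3 w3 k, C.relayDec, C.dec,
    fun k y y' w hy => hC k y y' w hy, C.crbcErrProb_eq_errProb.trans_le hle⟩

end Blocks

/-! ### Tensorization of Gallager's functions -/

section Tensorization

variable {S W W3 X1 X3 Y Y3 I J M : Type*} [Fintype M] [DecidableEq M] [Fintype I] [DecidableEq I]
  {P : S × W × W3 → ℝ} {ρ : ℝ}

lemma margSW_blockPmf [Fintype W3] (s : M → S) (w : M → W) :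
    margSW (blockPmf M P) s w = ∏ m, margSW P (s m) (w m) :=
  sum_pi_prod fun m w3 => P (s m, w m, w3)

lemma margSW3_blockPmf [Fintype W] (s : M → S) (w3 : M → W3) :
    margSW3 (blockPmf M P) s w3 = ∏ m, margSW3 P (s m) (w3 m) :=
  sum_pi_prod fun m w => P (s m, w, w3 m)

lemma chanY_blockChan [Fintype Y3] (Q : X1 × X3 → Y × Y3 → ℝ) (x : (I → X1) × (I → X3))
    (y : I → Y) : chanY (blockChan I Q) x y = ∏ i, chanY Q (x.1 i, x.2 i) (y i) :=
  sum_pi_prod fun i y3 => Q (x.1 i, x.2 i) (y i, y3)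

lemma chanY3_blockChan [Fintype Y] (Q : X1 × X3 → Y × Y3 → ℝ) (x : (I → X1) × (I → X3))
    (y3 : I → Y3) : chanY3 (blockChan I Q) x y3 = ∏ i, chanY3 Q (x.1 i, x.2 i) (y3 i) :=
  sum_pi_prod fun i y => Q (x.1 i, x.2 i) (y, y3 i)

/-- Memoryless kernel that uses only the coordinates of the source block in `I`; this is how the
source block can be longer than the channel block. -/
noncomputable def blockKernel {X : Type*} (I J : Type*) [Fintype I] (k : S → X → ℝ)
    (s : I ⊕ J → S) (x : I → X) : ℝ :=
  ∏ i, k (s (Sum.inl i)) (x i)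

lemma isPmf_blockKernel [Fintype X1] {k : S → X1 → ℝ} (hk : ∀ s, IsPmf (k s)) (s : I ⊕ J → S) :
    IsPmf (blockKernel I J k s) :=
  isPmf_pi fun i => hk (s (Sum.inl i))

lemma sourceGallager_pi [Fintype S] [Fintype W] {q : S → W → ℝ} (hq : ∀ s w, 0 ≤ q s w) :
    sourceGallager (fun (s : M → S) (w : M → W) => ∏ m, q (s m) (w m)) ρ =
      sourceGallager q ρ ^ Fintype.card M := by
  simpa [sourceGallager] using
    gallager_pi (κ := fun (_ : M) _ => 1) (fun _ _ => zero_le_one) (fun _ => hq) ρ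

lemma sum_blockPmf_mul [Fintype S] [Fintype W] [Fintype W3] [Fintype J] [DecidableEq J]
    (hP : IsPmf P) (f : S → ℝ) :
    ∑ θ, blockPmf (I ⊕ J) P θ * ∏ i, f (θ.1 (Sum.inl i)) =
      (∑ θ, P θ * f θ.1) ^ Fintype.card I := by
  let e := (Equiv.arrowProdEquivProdArrow (I ⊕ J) (fun _ => S) (fun _ => W × W3)).trans
    ((Equiv.refl _).prodCongr (Equiv.arrowProdEquivProdArrow (I ⊕ J) (fun _ => W) fun _ => W3))
  calc _ = ∑ τ : I ⊕ J → S × W × W3, ∏ m, P (τ m) * Sum.elim (fun _ => f (τ m).1) 1 m := by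
        rw [← e.sum_comp]
        simp only [Finset.prod_mul_distrib, Fintype.prod_sum_type (fun m => Sum.elim _ _ m)]
        simp [e, blockPmf, Equiv.arrowProdEquivProdArrow]
    _ = ∏ m : I ⊕ J, ∑ θ, P θ * Sum.elim (fun _ => f θ.1) 1 m :=
        sum_pi_prod fun (m : I ⊕ J) θ => P θ * Sum.elim (fun _ => f θ.1) 1 m
    _ = _ := by simp [Fintype.prod_sum_type, hP.2]

lemma relayGallager_block [Fintype S] [Fintype W] [Fintype W3] [Fintype X1] [Fintype X3]
    [Fintype Y3] [Fintype J] [DecidableEq J] (hP : IsPmf P) {k1 : S → X1 → ℝ} (k3 : S → X3 → ℝ)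
    (hk1 : ∀ s x, 0 ≤ k1 s x) {L : X1 × X3 → Y3 → ℝ} (hL : ∀ x y, 0 ≤ L x y) :
    relayGallager (blockPmf (I ⊕ J) P) (blockKernel I J k1) (blockKernel I J k3)
        (fun (x : (I → X1) × (I → X3)) (y : I → Y3) => ∏ i, L (x.1 i, x.2 i) (y i)) ρ =
      relayGallager P k1 k3 L ρ ^ Fintype.card I := by
  rw [relayGallager, relayGallager, ← sum_blockPmf_mul (J := J) hP fun s =>
    ∑ x3, k3 s x3 * gallager (k1 s) (fun x1 y3 => L (x1, x3) y3) ρ]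
  refine Finset.sum_congr rfl fun θ _ => congrArg (blockPmf (I ⊕ J) P θ * ·) ?_
  rw [← sum_pi_prod fun i x3 => k3 (θ.1 (Sum.inl i)) x3 *
    gallager (k1 (θ.1 (Sum.inl i))) (fun x1 y3 => L (x1, x3) y3) ρ]
  refine Finset.sum_congr rfl fun x3 _ => ?_
  rw [Finset.prod_mul_distrib, ← gallager_pi (fun i => hk1 (θ.1 (Sum.inl i)))
    (m := fun i x1 y3 => L (x1, x3 i) y3) fun i x1 y3 => hL (x1, x3 i) y3]
  rfl

lemma gallager_pi_mul_source {T O : Type*} [Fintype T] [Fintype O] [Fintype S] [Fintype W]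
    [Fintype J] [DecidableEq J] {κ : T → ℝ} {m : T → O → ℝ} {q : S → W → ℝ} (hκ : ∀ t, 0 ≤ κ t)
    (hm : ∀ t o, 0 ≤ m t o) (hq : ∀ s w, 0 ≤ q s w) :
    gallager (fun u : (I → T) × (J → S) => ∏ i, κ (u.1 i))
        (fun u (v : (I → O) × (J → W)) => (∏ i, m (u.1 i) (v.1 i)) * ∏ j, q (u.2 j) (v.2 j)) ρ =
      gallager κ m ρ ^ Fintype.card I * sourceGallager q ρ ^ Fintype.card J := by
  have h := gallager_mul (κ := fun t : I → T => ∏ i, κ (t i)) (κ' := fun _ : J → S => 1)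
    (m := fun t (o : I → O) => ∏ i, m (t i) (o i)) (m' := fun s (w : J → W) => ∏ j, q (s j) (w j))
    (fun t => Finset.prod_nonneg fun i _ => hκ _)
    (fun t o => Finset.prod_nonneg fun i _ => hm _ _) (fun _ => zero_le_one)
    (fun s w => Finset.prod_nonneg fun j _ => hq _ _) ρ
  simp only [mul_one] at h
  rw [h, gallager_pi (fun _ => hκ) (fun _ => hm), ← sourceGallager_pi hq, Finset.prod_const,
    Finset.card_univ, sourceGallager]

/-- Pairs the coordinates in `I` of two blocks, the longer of which has extra coordinates `J`. -/
@[simps]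
def blockPairEquiv (I J A B : Type*) : (I ⊕ J → A) × (I → B) ≃ (I → A × B) × (J → A) where
  toFun x := (fun i => (x.1 (.inl i), x.2 i), fun j => x.1 (.inr j))
  invFun x := (Sum.elim (fun i => (x.1 i).1) x.2, fun i => (x.1 i).2)
  left_inv x := by ext m <;> [cases m; skip] <;> rfl
  right_inv _ := rfl

lemma gallager_block {X : Type*} [Fintype S] [Fintype W] [Fintype X] [Fintype Y] [Fintype J]
    [DecidableEq J] {q : S → W → ℝ} (hq : ∀ s w, 0 ≤ q s w) {k : S → X → ℝ}
    (hk : ∀ s x, 0 ≤ k s x) {L : X → Y → ℝ} (hL : ∀ x y, 0 ≤ L x y) :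
    gallager (fun t : (I ⊕ J → S) × (I → X) => ∏ i, k (t.1 (.inl i)) (t.2 i))
        (fun t (o : (I ⊕ J → W) × (I → Y)) =>
          (∏ m, q (t.1 m) (o.1 m)) * ∏ i, L (t.2 i) (o.2 i)) ρ =
      gallager (fun t : S × X => k t.1 t.2) (fun t (o : W × Y) => q t.1 o.1 * L t.2 o.2) ρ ^
        Fintype.card I * sourceGallager q ρ ^ Fintype.card J := by
  have h := gallager_pi_mul_source (I := I) (J := J) (ρ := ρ) (fun t : S × X => hk t.1 t.2)
    (fun t (o : W × Y) => mul_nonneg (hq t.1 o.1) (hL t.2 o.2)) hq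
  rw [← h]
  let κ (u : (I → S × X) × (J → S)) : ℝ := ∏ i, k (u.1 i).1 (u.1 i).2
  have heT : IsLaw (fun t => κ (blockPairEquiv I J S X t)) (blockPairEquiv I J S X) κ :=
    fun f => (blockPairEquiv I J S X).sum_comp fun u => κ u * f u
  rw [← heT.gallager_comp, ← gallager_comp_equiv (blockPairEquiv I J W Y)]
  congr 1
  ext t o
  simp only [blockPairEquiv_apply, Fintype.prod_sum_type, Finset.prod_mul_distrib]
  ring

lemma destGallager_block [Fintype S] [Fintype W] [Fintype X1] [Fintype X3] [Fintype Y]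
    [Fintype J] [DecidableEq J] {q : S → W → ℝ} (hq : ∀ s w, 0 ≤ q s w) {k1 : S → X1 → ℝ}
    {k3 : S → X3 → ℝ} (hk1 : ∀ s x, 0 ≤ k1 s x) (hk3 : ∀ s x, 0 ≤ k3 s x)
    {L : X1 × X3 → Y → ℝ} (hL : ∀ x y, 0 ≤ L x y) :
    destGallager (fun (s : I ⊕ J → S) (w : I ⊕ J → W) => ∏ m, q (s m) (w m))
        (blockKernel I J k1) (blockKernel I J k3)
        (fun (x : (I → X1) × (I → X3)) (y : I → Y) => ∏ i, L (x.1 i, x.2 i) (y i)) ρ =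
      destGallager q k1 k3 L ρ ^ Fintype.card I * sourceGallager q ρ ^ Fintype.card J := by
  have h := gallager_block (I := I) (J := J) (ρ := ρ) hq
    (k := fun s (x : X1 × X3) => k1 s x.1 * k3 s x.2)
    (fun s x => mul_nonneg (hk1 s x.1) (hk3 s x.2)) hL
  rw [destGallager, destGallager, ← h]
  let e := (Equiv.refl (I ⊕ J → S)).prodCongr
    (Equiv.arrowProdEquivProdArrow I (fun _ => X1) fun _ => X3)
  let κ (t : (I ⊕ J → S) × (I → X1) × (I → X3)) : ℝ :=
    blockKernel I J k1 t.1 t.2.1 * blockKernel I J k3 t.1 t.2.2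
  have he : IsLaw (fun t => κ (e t)) e κ := fun f => e.sum_comp fun t => κ t * f t
  rw [← he.gallager_comp]
  simp only [Finset.prod_mul_distrib]
  rfl

lemma finProdFinEquiv_symm_fst_lt {a b : ℕ} (j k : Fin (a * b))
    (h : (finProdFinEquiv.symm j).1 < (finProdFinEquiv.symm k).1) : j < k := by
  by_contra! hjk
  exact absurd h (not_lt.mpr (Nat.div_le_div_right (Fin.le_def.mp hjk)))

/-- The code has `B` blocks of `B * t + t` source letters and `B + 1` blocks of `B * t` channel
uses, so that it needs exactly as many channel uses as source letters. -/
theorem exists_relayCode_iid [Fintype S] [Fintype W] [Fintype W3] [Fintype X1] [Fintype X3]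
    [Fintype Y] [Fintype Y3] {Q : X1 × X3 → Y × Y3 → ℝ} {k1 : S → X1 → ℝ} {k3 : S → X3 → ℝ}
    (hP : IsPmf P) (hQ : ∀ x, IsPmf (Q x)) (hk1 : ∀ s, IsPmf (k1 s)) (hk3 : ∀ s, IsPmf (k3 s))
    {B : ℕ} (hB : 0 < B) (t : ℕ) {ρ' : ℝ} (hρ₀ : 0 ≤ ρ) (hρ₁ : ρ ≤ 1) (hρ₀' : 0 ≤ ρ')
    (hρ₁' : ρ' ≤ 1) :
    ∃ C : RelayCode (Fin ((B + 1) * (B * t))) (Fin ((B + 1) * (B * t))) S W W3 X1 X3 Y Y3,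
      C.Causal ∧ C.errProb P Q ≤ (B + 1) *
        ((sourceGallager (margSW3 P) ρ ^ (B + 1) *
            relayGallager P k1 k3 (chanY3 Q) ρ ^ B) ^ t +
          (destGallager (margSW P) k1 k3 (chanY Q) ρ' ^ B *
            sourceGallager (margSW P) ρ' ^ 1) ^ t) := by
  classical
  obtain ⟨s₀, -, -⟩ := hP.nonempty_s5
  obtain ⟨x₁⟩ := (hk1 s₀).nonempty_s5
  obtain ⟨x₃⟩ := (hk3 s₀).nonempty_s5
  obtain ⟨y₀, y₃⟩ := (hQ (x₁, x₃)).nonempty_s5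
  have : Nonempty S := ⟨s₀⟩
  have : Nonempty Y := ⟨y₀⟩
  have : Nonempty Y3 := ⟨y₃⟩
  let eS : Fin ((B + 1) * (B * t)) ≃ Fin B × (Fin (B * t) ⊕ Fin t) := Fintype.equivOfCardEq (by
    simp only [Fintype.card_fin, Fintype.card_prod, Fintype.card_sum]
    ring)
  obtain ⟨C, hC, hle⟩ := exists_relayCode (isPmf_blockPmf (M := Fin (B * t) ⊕ Fin t) hP)
    (isPmf_blockChan (I := Fin (B * t)) hQ) (isPmf_blockKernel hk1) (isPmf_blockKernel hk3)
    hB hρ₀ hρ₁ hρ₀' hρ₁'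
  refine ⟨C.flatten eS finProdFinEquiv.symm, hC.flatten eS finProdFinEquiv_symm_fst_lt, ?_⟩
  rw [RelayCode.errProb_flatten]
  refine hle.trans_eq ?_
  rw [funext₂ margSW3_blockPmf, funext₂ margSW_blockPmf, funext₂ (chanY_blockChan Q),
    funext₂ (chanY3_blockChan Q), sourceGallager_pi (margSW3_nonneg hP),
    relayGallager_block hP k3 (fun s => (hk1 s).1) (fun x => (isPmf_chanY3 hQ x).1),
    destGallager_block (margSW_nonneg hP) (fun s => (hk1 s).1) (fun s => (hk3 s).1)
      (fun x => (isPmf_chanY hQ x).1)]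
  simp only [Fintype.card_fin, Fintype.card_sum]
  ring

end Tensorization

/-! ### Error exponents -/

section Exponents

lemma exists_lt_one_of_hasDerivAt_neg {f : ℝ → ℝ} {f' : ℝ} (hf : HasDerivAt f f' 0)
    (h0 : f 0 = 1) (hneg : f' < 0) : ∃ ρ, 0 ≤ ρ ∧ ρ ≤ 1 ∧ f ρ < 1 := by
  have hslope := hf.hasDerivWithinAt (s := Set.Ioi 0)
  rw [hasDerivWithinAt_iff_tendsto_slope' (by simp)] at hslope
  obtain ⟨ρ, hρ, hρ₀, hρ₁⟩ := ((hslope.eventually (eventually_lt_nhds hneg)).and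
    (Ioc_mem_nhdsGT one_pos)).exists
  refine ⟨ρ, hρ₀.le, hρ₁, ?_⟩
  rw [slope_def_field, h0, sub_zero, div_neg_iff] at hρ
  rcases hρ with hρ | hρ <;> linarith

lemma exists_pow_mul_pow_lt_one {f g : ℝ → ℝ} {f' g' : ℝ} (hf : HasDerivAt f f' 0)
    (hg : HasDerivAt g g' 0) (hf0 : f 0 = 1) (hg0 : g 0 = 1) (a b : ℕ)
    (h : a * f' + b * g' < 0) : ∃ ρ, 0 ≤ ρ ∧ ρ ≤ 1 ∧ f ρ ^ a * g ρ ^ b < 1 := by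
  refine exists_lt_one_of_hasDerivAt_neg ((hf.fun_pow a).fun_mul (hg.fun_pow b)) ?_ ?_
  · simp [hf0, hg0]
  · simpa [hf0, hg0] using h

lemma exists_nat_mul_add_neg {a b c d : ℝ} (ha : a < 0) (hb : b < 0) :
    ∃ n : ℕ, 0 < n ∧ n * a + c < 0 ∧ n * b + d < 0 := by
  have h {a c : ℝ} (ha : a < 0) : ∀ᶠ n : ℕ in Filter.atTop, n * a + c < 0 :=
    (Filter.tendsto_atBot_add_const_right _ c
      (tendsto_natCast_atTop_atTop.atTop_mul_const_of_neg ha)).eventually_lt_atBot 0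
  exact ((Filter.eventually_gt_atTop 0).and ((h ha).and (h hb))).exists

variable {S V W X1 X3 Y : Type*} [Fintype S] [Fintype V] [Fintype W] [Fintype X1] [Fintype X3]
  [Fintype Y] {P : S × V → ℝ} {q : S → W → ℝ} {k1 : S → X1 → ℝ} {k3 : S → X3 → ℝ}
  {L : X1 × X3 → Y → ℝ}

lemma sourceGallager_zero (hq : ∑ s, ∑ w, q s w = 1) : sourceGallager q 0 = 1 := by
  simp [sourceGallager, gallager_zero, hq]

lemma relayGallager_zero (hP : IsPmf P) (hk1 : ∀ s, IsPmf (k1 s)) (hk3 : ∀ s, IsPmf (k3 s))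
    (hL : ∀ x, IsPmf (L x)) : relayGallager P k1 k3 L 0 = 1 := by
  simp only [relayGallager, gallager_zero, ← Finset.mul_sum, (hL _).2, mul_one, (hk1 _).2,
    (hk3 _).2, hP.2]

lemma destGallager_zero (hq : ∑ s, ∑ w, q s w = 1) (hk1 : ∀ s, IsPmf (k1 s))
    (hk3 : ∀ s, IsPmf (k3 s)) (hL : ∀ x, IsPmf (L x)) : destGallager q k1 k3 L 0 = 1 := by
  simp only [destGallager, gallager_zero, Fintype.sum_prod_type, ← Finset.mul_sum, (hL _).2,
    mul_one, ← Finset.sum_mul, (hk1 _).2, (hk3 _).2, one_mul, hq]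

lemma relayGallager_nonneg (hP : ∀ θ, 0 ≤ P θ) (hk1 : ∀ s x, 0 ≤ k1 s x)
    (hk3 : ∀ s x, 0 ≤ k3 s x) (hL : ∀ x y, 0 ≤ L x y) (ρ : ℝ) :
    0 ≤ relayGallager P k1 k3 L ρ :=
  Finset.sum_nonneg fun θ _ => mul_nonneg (hP θ) <| Finset.sum_nonneg fun _ _ =>
    mul_nonneg (hk3 _ _) (gallager_nonneg (hk1 _) (fun _ => hL _) ρ)

lemma sourceGallager_nonneg (hq : ∀ s w, 0 ≤ q s w) (ρ : ℝ) : 0 ≤ sourceGallager q ρ :=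
  gallager_nonneg (fun _ => zero_le_one) hq ρ

lemma destGallager_nonneg (hq : ∀ s w, 0 ≤ q s w) (hk1 : ∀ s x, 0 ≤ k1 s x)
    (hk3 : ∀ s x, 0 ≤ k3 s x) (hL : ∀ x y, 0 ≤ L x y) (ρ : ℝ) :
    0 ≤ destGallager q k1 k3 L ρ :=
  gallager_nonneg (fun _ => mul_nonneg (hk1 _ _) (hk3 _ _))
    (fun _ _ => mul_nonneg (hq _ _) (hL _ _)) ρ

lemma hasDerivAt_relayGallager (P : S × V → ℝ) (k3 : S → X3 → ℝ) (hk1 : ∀ s x, 0 ≤ k1 s x)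
    (hL : ∀ x y, 0 ≤ L x y) :
    HasDerivAt (relayGallager P k1 k3 L) (∑ θ, P θ * ∑ x3, k3 θ.1 x3 *
      gallagerSlope (k1 θ.1) fun x1 y3 => L (x1, x3) y3) 0 :=
  HasDerivAt.fun_sum fun θ _ => (HasDerivAt.fun_sum fun x3 _ =>
    (hasDerivAt_gallager (hk1 θ.1) fun _ => hL _).const_mul (k3 θ.1 x3)).const_mul (P θ)

end Exponents

/-! ### Slopes of Gallager's functions as entropies -/

section Slopes

variable {Ω σ α β γ : Type*} [Fintype Ω] [Fintype σ] [Fintype α] [Fintype β] [Fintype γ]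
  [DecidableEq σ] [DecidableEq α] [DecidableEq β] [DecidableEq γ] {μ : Ω → ℝ}

lemma condEntropyOf_eq_gallagerSlope {S : Ω → σ} {W : Ω → γ} {q : σ → γ → ℝ}
    (h : IsLaw μ (fun ω => (S ω, W ω)) fun x => q x.1 x.2) (hμ : ∀ ω, 0 ≤ μ ω) :
    condEntropyOf μ S W = gallagerSlope (fun _ => 1) q := by
  rw [h.condEntropyOf_eq hμ, h fun x => Real.log ((∑ s, q s x.2) / q x.1 x.2),
    Fintype.sum_prod_type]
  simp [gallagerSlope]

lemma condMutualInfoOf_eq_neg_gallagerSlope {X : Ω → α} {Y : Ω → β} {Z : Ω → γ} {p : γ → ℝ}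
    {k : γ → α → ℝ} {L : α → γ → β → ℝ}
    (h : IsLaw μ (fun ω => (X ω, Y ω, Z ω)) fun x =>
      p x.2.2 * k x.2.2 x.1 * L x.1 x.2.2 x.2.1)
    (hμ : ∀ ω, 0 ≤ μ ω) (hk : ∀ c, ∑ a, k c a = 1) (hL : ∀ a c, ∑ b, L a c b = 1) :
    condMutualInfoOf μ X Y Z = -∑ c, p c * gallagerSlope (k c) fun a b => L a c b := by
  rw [IsLaw.condMutualInfoOf_eq (r := fun a c => p c * k c a) h hμ hL]
  simp only [mul_assoc, ← Finset.mul_sum, hk, mul_one]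
  rw [h fun x => Real.log (p x.2.2 * L x.1 x.2.2 x.2.1 /
    (p x.2.2 * ∑ a, k x.2.2 a * L a x.2.2 x.2.1))]
  simp only [Fintype.sum_prod_type, gallagerSlope, Finset.mul_sum, ← Finset.sum_neg_distrib]
  rw [Finset.sum_comm_cycle]
  refine Finset.sum_congr rfl fun c _ => Finset.sum_congr rfl fun a _ =>
    Finset.sum_congr rfl fun b _ => ?_
  rcases eq_or_ne (p c) 0 with hc | hc
  · simp [hc]
  · rw [← Finset.mul_sum, mul_div_mul_left _ _ hc, ← inv_div, Real.log_inv]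
    ring

/-- The total mass of `(W, Y)` occurs in both terms with opposite signs and cancels. -/
lemma condEntropyOf_sub_condMutualInfoOf_eq_gallagerSlope {S : Ω → σ} {X : Ω → α} {Y : Ω → β}
    {W : Ω → γ} {k : σ → α → ℝ} {q : σ → γ → ℝ} {L : α → β → ℝ}
    (h : IsLaw μ (fun ω => ((S ω, X ω), (W ω, Y ω))) fun x =>
      k x.1.1 x.1.2 * (q x.1.1 x.2.1 * L x.1.2 x.2.2))
    (hμ : ∀ ω, 0 ≤ μ ω) (hk : ∀ s, ∑ a, k s a = 1) (hL : ∀ a, ∑ b, L a b = 1) :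
    condEntropyOf μ S W - condMutualInfoOf μ X Y W =
      gallagerSlope (fun t : σ × α => k t.1 t.2)
        fun t (o : γ × β) => q t.1 o.1 * L t.2 o.2 := by
  have hSW : IsLaw μ (fun ω => (S ω, W ω)) fun x => q x.1 x.2 := fun f => by
    rw [h fun x => f (x.1.1, x.2.1)]
    simp only [Fintype.sum_prod_type, mul_left_comm (k _ _) (q _ _), ← mul_assoc (q _ _)]
    simp only [mul_right_comm _ (L _ _), ← Finset.mul_sum, hL, mul_one]
    refine Finset.sum_congr rfl fun s _ => ?_
    rw [Finset.sum_comm]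
    simp only [mul_right_comm _ (k _ _), ← Finset.mul_sum, hk, mul_one]
  have hXYW : IsLaw μ (fun ω => (X ω, Y ω, W ω)) fun x =>
      (∑ s, k s x.1 * q s x.2.2) * L x.1 x.2.1 := fun f => by
    rw [h fun x => f (x.1.2, x.2.2, x.2.1)]
    simp only [Fintype.sum_prod_type, Finset.sum_mul]
    rw [Finset.sum_comm]
    refine Finset.sum_congr rfl fun a _ => ?_
    rw [← Finset.sum_comm_cycle, Finset.sum_comm]
    simp only [mul_assoc]
  have hmass (c : γ) : ∑ a, ∑ s, k s a * q s c = ∑ s, q s c := by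
    rw [Finset.sum_comm]
    simp only [← Finset.sum_mul, hk, one_mul]
  have hmix (c : γ) (b : β) : ∑ a, (∑ s, k s a * q s c) * L a b =
      ∑ t : σ × α, k t.1 t.2 * (q t.1 c * L t.2 b) := by
    simp only [Fintype.sum_prod_type_right, Finset.sum_mul, mul_assoc]
  have hslope := h fun x => Real.log ((∑ t : σ × α, k t.1 t.2 * (q t.1 x.2.1 * L t.2 x.2.2)) /
    (q x.1.1 x.2.1 * L x.1.2 x.2.2))
  rw [hSW.condEntropyOf_eq hμ, IsLaw.condMutualInfoOf_eq (r := fun a c => ∑ s, k s a * q s c)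
    (L := fun a _ => L a) hXYW hμ fun a _ => hL a, ← Finset.sum_sub_distrib, gallagerSlope,
    ← Fintype.sum_prod_type', ← hslope]
  refine Finset.sum_congr rfl fun ω _ => ?_
  simp only [hmass, hmix]
  rcases eq_or_ne (μ ω) 0 with hω | hω
  · simp [hω]
  have hq := (hSW.pos hμ hω).ne'
  have hLω := right_ne_zero_of_mul (hXYW.pos hμ hω).ne'
  rw [Real.log_div (hSW.snd.pos hμ hω).ne' hq, Real.log_div (mul_ne_zero
    (hSW.snd.pos hμ hω).ne' hLω) (h.snd.pos hμ hω).ne', Real.log_mul (hSW.snd.pos hμ hω).ne' hLω,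
    Real.log_div (h.snd.pos hμ hω).ne' (mul_ne_zero hq hLω), Real.log_mul hq hLω]
  ring

end Slopes

/-! ### The single-letter law -/

section SingleLetter

variable {S W W3 X1 X3 Y Y3 : Type*} {P : S × W × W3 → ℝ} {Q : X1 × X3 → Y × Y3 → ℝ}
  {k1 : S → X1 → ℝ} {k3 : S → X3 → ℝ}

lemma crbcCpmJoint_nonneg (hP : ∀ θ, 0 ≤ P θ) (hQ : ∀ x z, 0 ≤ Q x z) (hk1 : ∀ s x, 0 ≤ k1 s x)
    (hk3 : ∀ s x, 0 ≤ k3 s x) (ω : S × W3 × W × X1 × X3 × Y3 × Y) :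
    0 ≤ crbcCpmJoint P Q k1 k3 ω :=
  mul_nonneg (mul_nonneg (mul_nonneg (hP _) (hk1 _ _)) (hk3 _ _)) (hQ _ _)

variable [Fintype S] [Fintype W] [Fintype W3] [Fintype X1] [Fintype X3] [Fintype Y] [Fintype Y3]

lemma sum_crbcCpmJoint_mul (f : S × W3 × W × X1 × X3 × Y3 × Y → ℝ) :
    ∑ ω, crbcCpmJoint P Q k1 k3 ω * f ω =
      ∑ θ, P θ * ∑ x1, k1 θ.1 x1 * ∑ x3, k3 θ.1 x3 *
        ∑ z, Q (x1, x3) z * f (θ.1, θ.2.2, θ.2.1, x1, x3, z.2, z.1) := by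
  simp only [Fintype.sum_prod_type, crbcCpmJoint, Finset.mul_sum, mul_assoc]
  refine Finset.sum_congr rfl fun s _ => ?_
  rw [Finset.sum_comm]
  refine Finset.sum_congr rfl fun w _ => Finset.sum_congr rfl fun w3 _ =>
    Finset.sum_congr rfl fun x1 _ => Finset.sum_congr rfl fun x3 _ => Finset.sum_comm

lemma isLaw_crbcCpmJoint_source_relay (hQ : ∀ x, IsPmf (Q x)) (hk1 : ∀ s, IsPmf (k1 s))
    (hk3 : ∀ s, IsPmf (k3 s)) :
    IsLaw (crbcCpmJoint P Q k1 k3) (fun ω => (ω.1, ω.2.1)) fun x => margSW3 P x.1 x.2 :=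
  fun f => by
  rw [sum_crbcCpmJoint_mul, ← isLaw_margSW3]
  simp only [← Finset.sum_mul, (hQ _).2, (hk1 _).2, (hk3 _).2, one_mul]

lemma isLaw_crbcCpmJoint_relay :
    IsLaw (crbcCpmJoint P Q k1 k3)
      (fun ω => (ω.2.2.2.1, ω.2.2.2.2.2.1, ω.2.2.2.2.1, ω.1)) fun x =>
      ((∑ v, P (x.2.2.2, v)) * k3 x.2.2.2 x.2.2.1) * k1 x.2.2.2 x.1 *
        chanY3 Q (x.1, x.2.2.1) x.2.1 := fun f => by
  have hz (x1 : X1) (x3 : X3) (s : S) := isLaw_chanY3 (Q := Q) (x1, x3) fun y3 => f (x1, y3, x3, s)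
  rw [sum_crbcCpmJoint_mul]
  simp only [hz, Fintype.sum_prod_type (α₁ := S), ← Finset.sum_mul]
  simp only [Fintype.sum_prod_type (α₁ := X1), Fintype.sum_prod_type (α₁ := Y3),
    Fintype.sum_prod_type (α₁ := X3), Finset.mul_sum (ι := X1), Finset.mul_sum (ι := X3),
    Finset.mul_sum (ι := Y3)]
  rw [Finset.sum_comm]
  refine Finset.sum_congr rfl fun x1 _ => ?_
  rw [Finset.sum_comm_cycle]
  refine Finset.sum_congr rfl fun y3 _ => ?_
  rw [Finset.sum_comm]
  exact Finset.sum_congr rfl fun x3 _ => Finset.sum_congr rfl fun s _ => by ring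

lemma isLaw_crbcCpmJoint_dest :
    IsLaw (crbcCpmJoint P Q k1 k3)
      (fun ω => ((ω.1, ω.2.2.2.1, ω.2.2.2.2.1), (ω.2.2.1, ω.2.2.2.2.2.2))) fun x =>
      (k1 x.1.1 x.1.2.1 * k3 x.1.1 x.1.2.2) *
        (margSW P x.1.1 x.2.1 * chanY Q x.1.2 x.2.2) := fun f => by
  have hz (x1 : X1) (x3 : X3) (s : S) (w : W) :=
    isLaw_chanY (Q := Q) (x1, x3) fun y => f ((s, x1, x3), w, y)
  rw [sum_crbcCpmJoint_mul]
  simp only [hz]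
  rw [isLaw_margSW (P := P) fun x => ∑ x1, k1 x.1 x1 * ∑ x3, k3 x.1 x3 *
    ∑ y, chanY Q (x1, x3) y * f ((x.1, x1, x3), x.2, y)]
  simp only [Fintype.sum_prod_type, Finset.mul_sum]
  refine Finset.sum_congr rfl fun s _ => ?_
  rw [Finset.sum_comm]
  refine Finset.sum_congr rfl fun x1 _ => ?_
  rw [Finset.sum_comm]
  exact Finset.sum_congr rfl fun x3 _ => Finset.sum_congr rfl fun w _ =>
    Finset.sum_congr rfl fun y _ => by ring

lemma condEntropyOf_source_relay_eq [DecidableEq S] [DecidableEq W3] (hP : IsPmf P)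
    (hQ : ∀ x, IsPmf (Q x)) (hk1 : ∀ s, IsPmf (k1 s)) (hk3 : ∀ s, IsPmf (k3 s)) :
    condEntropyOf (crbcCpmJoint P Q k1 k3) (fun ω => ω.1) (fun ω => ω.2.1) =
      gallagerSlope (fun _ => 1) (margSW3 P) :=
  condEntropyOf_eq_gallagerSlope (isLaw_crbcCpmJoint_source_relay hQ hk1 hk3)
    (crbcCpmJoint_nonneg hP.1 (fun x => (hQ x).1) (fun s => (hk1 s).1) fun s => (hk3 s).1)

lemma condMutualInfoOf_relay_eq [DecidableEq S] [DecidableEq X1] [DecidableEq X3]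
    [DecidableEq Y3] (hP : IsPmf P) (hQ : ∀ x, IsPmf (Q x)) (hk1 : ∀ s, IsPmf (k1 s))
    (hk3 : ∀ s, IsPmf (k3 s)) :
    condMutualInfoOf (crbcCpmJoint P Q k1 k3) (fun ω => ω.2.2.2.1)
        (fun ω => ω.2.2.2.2.2.1) (fun ω => (ω.2.2.2.2.1, ω.1)) =
      -∑ θ, P θ * ∑ x3, k3 θ.1 x3 *
        gallagerSlope (k1 θ.1) fun x1 y3 => chanY3 Q (x1, x3) y3 := by
  have hlaw := isLaw_crbcCpmJoint_relay (P := P) (Q := Q) (k1 := k1) (k3 := k3)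
  have hslope := condMutualInfoOf_eq_neg_gallagerSlope
    (p := fun c : X3 × S => (∑ v, P (c.2, v)) * k3 c.2 c.1) (k := fun c => k1 c.2)
    (L := fun x1 c => chanY3 Q (x1, c.1)) hlaw
    (crbcCpmJoint_nonneg hP.1 (fun x => (hQ x).1) (fun s => (hk1 s).1) fun s => (hk3 s).1)
    (fun c => (hk1 c.2).2) fun x1 c => (isPmf_chanY3 hQ _).2
  refine hslope.trans (congrArg Neg.neg ?_)
  rw [Fintype.sum_prod_type_right, Fintype.sum_prod_type (α₁ := S)]
  simp only [mul_assoc, ← Finset.mul_sum, ← Finset.sum_mul]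

lemma condEntropyOf_sub_condMutualInfoOf_dest_eq [DecidableEq S] [DecidableEq W]
    [DecidableEq X1] [DecidableEq X3] [DecidableEq Y] (hP : IsPmf P) (hQ : ∀ x, IsPmf (Q x))
    (hk1 : ∀ s, IsPmf (k1 s)) (hk3 : ∀ s, IsPmf (k3 s)) :
    condEntropyOf (crbcCpmJoint P Q k1 k3) (fun ω => ω.1) (fun ω => ω.2.2.1) -
        condMutualInfoOf (crbcCpmJoint P Q k1 k3) (fun ω => (ω.2.2.2.1, ω.2.2.2.2.1))
          (fun ω => ω.2.2.2.2.2.2) (fun ω => ω.2.2.1) =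
      gallagerSlope (fun t : S × X1 × X3 => k1 t.1 t.2.1 * k3 t.1 t.2.2)
        fun t (o : W × Y) => margSW P t.1 o.1 * chanY Q t.2 o.2 :=
  condEntropyOf_sub_condMutualInfoOf_eq_gallagerSlope
    (k := fun s (x : X1 × X3) => k1 s x.1 * k3 s x.2) isLaw_crbcCpmJoint_dest
    (crbcCpmJoint_nonneg hP.1 (fun x => (hQ x).1) (fun s => (hk1 s).1) fun s => (hk3 s).1)
    (fun s => ((hk1 s).mul_kernel fun _ => hk3 s).2) fun x => (isPmf_chanY hQ x).2

end SingleLetter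

/-! ### Achievability -/

section Achievability

variable {S W W3 X1 X3 Y Y3 : Type*} [Fintype S] [Fintype W] [Fintype W3] [Fintype X1]
  [Fintype X3] [Fintype Y] [Fintype Y3] [DecidableEq S] {P : S × W × W3 → ℝ}
  {Q : X1 × X3 → Y × Y3 → ℝ} {k1 : S → X1 → ℝ} {k3 : S → X3 → ℝ}

/-- The number `B` of blocks is fixed first, large enough to absorb the cost of the first and of
the last block; only then does the length of the blocks tend to infinity. -/
lemma crbcReliablyTransmitted_of_slopes (hP : IsPmf P) (hQ : ∀ x, IsPmf (Q x))
    (hk1 : ∀ s, IsPmf (k1 s)) (hk3 : ∀ s, IsPmf (k3 s)) {dS dR dT dD : ℝ}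
    (hS : HasDerivAt (sourceGallager (margSW3 P)) dS 0)
    (hR : HasDerivAt (relayGallager P k1 k3 (chanY3 Q)) dR 0)
    (hT : HasDerivAt (sourceGallager (margSW P)) dT 0)
    (hD : HasDerivAt (destGallager (margSW P) k1 k3 (chanY Q)) dD 0)
    (hrelay : dS + dR < 0) (hdest : dD < 0) : CrbcReliablyTransmitted P Q := by
  have hSW : ∑ s, ∑ w, margSW P s w = 1 := by
    simpa [hP.2, Fintype.sum_prod_type] using (isLaw_margSW (P := P) fun _ => 1).symm
  have hSW3 : ∑ s, ∑ w3, margSW3 P s w3 = 1 := by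
    simpa [hP.2, Fintype.sum_prod_type] using (isLaw_margSW3 (P := P) fun _ => 1).symm
  obtain ⟨B, hB, hB1, hB2⟩ := exists_nat_mul_add_neg (c := dS) (d := dT) hrelay hdest
  obtain ⟨ρ, hρ₀, hρ₁, hρ⟩ := exists_pow_mul_pow_lt_one hS hR (sourceGallager_zero hSW3)
    (relayGallager_zero hP hk1 hk3 (isPmf_chanY3 hQ)) (B + 1) B (by push_cast; linarith)
  obtain ⟨ρ', hρ₀', hρ₁', hρ'⟩ := exists_pow_mul_pow_lt_one hD hT
    (destGallager_zero hSW hk1 hk3 (isPmf_chanY hQ)) (sourceGallager_zero hSW) B 1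
    (by push_cast; linarith)
  have hrelay₀ : 0 ≤ sourceGallager (margSW3 P) ρ ^ (B + 1) *
      relayGallager P k1 k3 (chanY3 Q) ρ ^ B :=
    mul_nonneg (pow_nonneg (sourceGallager_nonneg (margSW3_nonneg hP) ρ) _)
      (pow_nonneg (relayGallager_nonneg hP.1 (fun s => (hk1 s).1) (fun s => (hk3 s).1)
        (fun x => (isPmf_chanY3 hQ x).1) ρ) _)
  have hdest₀ : 0 ≤ destGallager (margSW P) k1 k3 (chanY Q) ρ' ^ B *
      sourceGallager (margSW P) ρ' ^ 1 :=
    mul_nonneg (pow_nonneg (destGallager_nonneg (margSW_nonneg hP) (fun s => (hk1 s).1)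
        (fun s => (hk3 s).1) (fun x => (isPmf_chanY hQ x).1) ρ') _)
      (pow_nonneg (sourceGallager_nonneg (margSW_nonneg hP) ρ') _)
  have hlim := ((tendsto_pow_atTop_nhds_zero_of_lt_one hrelay₀ hρ).add
    (tendsto_pow_atTop_nhds_zero_of_lt_one hdest₀ hρ')).const_mul ((B : ℝ) + 1)
  rw [add_zero, mul_zero] at hlim
  refine crbcReliablyTransmitted_of_relayCode fun ε hε => ?_
  obtain ⟨t, htε, ht⟩ :=
    ((hlim.eventually (eventually_le_nhds hε)).and (Filter.eventually_gt_atTop 0)).exists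
  obtain ⟨C, hC, hCP⟩ := exists_relayCode_iid hP hQ hk1 hk3 hB t hρ₀ hρ₁ hρ₀' hρ₁'
  exact ⟨(B + 1) * (B * t), by positivity, C, hC, hCP.trans htε⟩

end Achievability

/-- **Specialization of Theorem 2 to the single-source case** (Remark on the CRBC):
if there are conditional input pmfs `p(x1|s1)`, `p(x3|s1)` with
`H(S1|W3) < I(X1;Y3|X3,S1)` and `H(S1|W) < I(X1,X3;Y|W)`, then the source can be
reliably transmitted over the DM CRBC. -/
theorem crbc_cpm_specialization
    {S1 W W3 X1 X3 Y Y3 : Type*}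
    [Fintype S1] [Fintype W] [Fintype W3] [Fintype X1] [Fintype X3] [Fintype Y] [Fintype Y3]
    [DecidableEq S1] [DecidableEq W] [DecidableEq W3]
    [DecidableEq X1] [DecidableEq X3] [DecidableEq Y] [DecidableEq Y3]
    (pSrc : S1 × W × W3 → ℝ) (hSrc : IsPmf pSrc)
    (Q : X1 × X3 → Y × Y3 → ℝ) (hQ : ∀ x, IsPmf (Q x))
    (h : ∃ (pX1 : S1 → X1 → ℝ) (pX3 : S1 → X3 → ℝ),
        (∀ s1, IsPmf (pX1 s1)) ∧ (∀ s1, IsPmf (pX3 s1)) ∧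
        (let μ := crbcCpmJoint pSrc Q pX1 pX3
        -- H(S1|W3) < I(X1;Y3|X3,S1)
        (condEntropyOf μ (fun (s1,_,_,_,_,_,_) => s1) (fun (_,w3,_,_,_,_,_) => w3) <
          condMutualInfoOf μ (fun (_,_,_,x1,_,_,_) => x1)
            (fun (_,_,_,_,_,y3,_) => y3) (fun (s1,_,_,_,x3,_,_) => (x3, s1))) ∧
        -- H(S1|W) < I(X1,X3;Y|W)
        (condEntropyOf μ (fun (s1,_,_,_,_,_,_) => s1) (fun (_,_,w,_,_,_,_) => w) <
          condMutualInfoOf μ (fun (_,_,_,x1,x3,_,_) => (x1, x3))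
            (fun (_,_,_,_,_,_,y) => y) (fun (_,_,w,_,_,_,_) => w)))) :
    CrbcReliablyTransmitted pSrc Q := by
  obtain ⟨k1, k3, hk1, hk3, hR, hD⟩ := h
  have hk1₀ (s : S1) : ∀ x, 0 ≤ k1 s x := (hk1 s).1
  have hk3₀ (s : S1) : ∀ x, 0 ≤ k3 s x := (hk3 s).1
  refine crbcReliablyTransmitted_of_slopes hSrc hQ hk1 hk3
    (hasDerivAt_gallager (fun _ => zero_le_one) (margSW3_nonneg hSrc))
    (hasDerivAt_relayGallager _ _ hk1₀ fun x => (isPmf_chanY3 hQ x).1)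
    (hasDerivAt_gallager (fun _ => zero_le_one) (margSW_nonneg hSrc))
    (hasDerivAt_gallager (fun _ => mul_nonneg (hk1₀ _ _) (hk3₀ _ _)) fun _ _ =>
      mul_nonneg (margSW_nonneg hSrc _ _) ((isPmf_chanY hQ _).1 _)) ?_ ?_
  · have hentropy := condEntropyOf_source_relay_eq hSrc hQ hk1 hk3
    have hinfo := condMutualInfoOf_relay_eq hSrc hQ hk1 hk3
    linarith
  · rw [← condEntropyOf_sub_condMutualInfoOf_dest_eq hSrc hQ hk1 hk3]
    exact sub_neg.mpr hD
end
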